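/- Let μ be a finite Borel measure on ℝⁿ, m ∈ {0,…,n−1}, 0 < α ≤ 1, and let t = t(α/2), q = q(n−m, α/(2t)), K = K(n,m,α) and c > 0 be constants as in the Erdős–Füredi lemma, the cone-separation lemma, and the Grassmannian discretization. Suppose that for μ-almost every x there are arbitrarily small r > 0 and a collection ℬ of sub-balls of B(x,r) such that: (1) the balls {2tB : B ∈ ℬ} are pairwise disjoint; (2) μ(B) > c·μ(B(x,3r)) for all B ∈ ℬ; (3) for every ℬ' ⊂ ℬ with #ℬ' ≥ #ℬ/K and every V ∈ G(n,n−m), some translate of V intersects at least q balls of ℬ'. Then limsup_{r↓0} inf_{θ ∈ S^{n-1}, V ∈ G(n,n−m)} μ(X(x,r,V,α) \ H(x,θ,α)) / μ(B(x,r)) > c for μ-almost every x. -/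

import Mathlib

open MeasureTheory Metric Filter Set
open scoped RealInnerProductSpace ENNReal Classical

/-- The almost half-space `H(x,θ,α) = {y : (y-x)·θ > α|y-x|}`. -/
def almostHalfSpace {n : ℕ} (x θ : EuclideanSpace ℝ (Fin n)) (α : ℝ) :
    Set (EuclideanSpace ℝ (Fin n)) :=
  {y | α * ‖y - x‖ < ⟪y - x, θ⟫}

/-- The one-sided open cone `X⁺(x,θ,α) = {y : (y-x)·θ > (1-α²)^{1/2}|y-x|}`. -/
def oneSidedCone {n : ℕ} (x θ : EuclideanSpace ℝ (Fin n)) (α : ℝ) :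
    Set (EuclideanSpace ℝ (Fin n)) :=
  {y | Real.sqrt (1 - α ^ 2) * ‖y - x‖ < ⟪y - x, θ⟫}

/-- The two-sided cone `X(x,V,α) = {y : dist(y-x,V) < α|y-x|}`. -/
def coneX {n : ℕ} (x : EuclideanSpace ℝ (Fin n))
    (V : Submodule ℝ (EuclideanSpace ℝ (Fin n))) (α : ℝ) :
    Set (EuclideanSpace ℝ (Fin n)) :=
  {y | infDist (y - x) (V : Set (EuclideanSpace ℝ (Fin n))) < α * ‖y - x‖}

section GeomA
variable {E : Type*} [NormedAddCommGroup E] [InnerProductSpace ℝ E]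

lemma gm_angle_le {x y : E} (hx : x ≠ 0) (hy : y ≠ 0) {φ : ℝ} (h0 : 0 ≤ φ)
    (h : Real.cos φ * (‖x‖ * ‖y‖) ≤ ⟪x, y⟫) : InnerProductGeometry.angle x y ≤ φ := by
  by_contra hc
  push Not at hc
  have h1 := Real.cos_lt_cos_of_nonneg_of_le_pi h0 (InnerProductGeometry.angle_le_pi x y) hc
  have h2 := InnerProductGeometry.cos_angle_mul_norm_mul_norm x y
  have h3 : 0 < ‖x‖ * ‖y‖ := mul_pos (norm_pos_iff.2 hx) (norm_pos_iff.2 hy)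
  nlinarith

lemma gm_angle_lt {x y : E} (hx : x ≠ 0) (hy : y ≠ 0) {φ : ℝ} (h0 : 0 ≤ φ)
    (h : Real.cos φ * (‖x‖ * ‖y‖) < ⟪x, y⟫) : InnerProductGeometry.angle x y < φ := by
  by_contra hc
  push Not at hc
  have h1 := Real.cos_le_cos_of_nonneg_of_le_pi h0 (InnerProductGeometry.angle_le_pi x y) hc
  have h2 := InnerProductGeometry.cos_angle_mul_norm_mul_norm x y
  have h3 : 0 < ‖x‖ * ‖y‖ := mul_pos (norm_pos_iff.2 hx) (norm_pos_iff.2 hy)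
  nlinarith

lemma gm_inner_ge {x y : E} {φ : ℝ} (h1 : φ ≤ Real.pi)
    (h : InnerProductGeometry.angle x y ≤ φ) : Real.cos φ * (‖x‖ * ‖y‖) ≤ ⟪x, y⟫ := by
  have h1 := Real.cos_le_cos_of_nonneg_of_le_pi (InnerProductGeometry.angle_nonneg x y) h1 h
  have h2 := InnerProductGeometry.cos_angle_mul_norm_mul_norm x y
  have h3 : 0 ≤ ‖x‖ * ‖y‖ := by positivity
  nlinarith

lemma gm_inner_gt {x y : E} (hx : x ≠ 0) (hy : y ≠ 0) {φ : ℝ} (h1 : φ ≤ Real.pi)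
    (h : InnerProductGeometry.angle x y < φ) : Real.cos φ * (‖x‖ * ‖y‖) < ⟪x, y⟫ := by
  have h1 := Real.cos_lt_cos_of_nonneg_of_le_pi (InnerProductGeometry.angle_nonneg x y) h1 h
  have h2 := InnerProductGeometry.cos_angle_mul_norm_mul_norm x y
  have h3 : 0 < ‖x‖ * ‖y‖ := mul_pos (norm_pos_iff.2 hx) (norm_pos_iff.2 hy)
  nlinarith

lemma gm_angle_arcsin {u w : E} {s : ℝ} (hs0 : 0 ≤ s) (hs1 : s < 1) (hw : w ≠ 0)
    (h : ‖u - w‖ ≤ s * ‖w‖) : u ≠ 0 ∧ InnerProductGeometry.angle u w ≤ Real.arcsin s := by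
  have hw' : 0 < ‖w‖ := norm_pos_iff.2 hw
  have hu : u ≠ 0 := by
    rintro rfl
    simp at h
    nlinarith
  refine ⟨hu, gm_angle_le hu hw (Real.arcsin_nonneg.2 hs0) ?_⟩
  rw [Real.cos_arcsin]
  have h1 := norm_sub_sq_real u w
  have h2 : ‖u - w‖ ^ 2 ≤ s ^ 2 * ‖w‖ ^ 2 := by
    rw [← mul_pow]; exact pow_le_pow_left₀ (norm_nonneg _) h 2
  have h3 : Real.sqrt (1 - s ^ 2) ^ 2 = 1 - s ^ 2 := Real.sq_sqrt (by nlinarith)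
  nlinarith [sq_nonneg (‖u‖ - Real.sqrt (1 - s ^ 2) * ‖w‖)]

/-- balls whose `2 t`-dilations are disjoint -/
lemma gm_sep {t : ℝ} (ht : 1 ≤ t) {c c' : E} {r r' : ℝ} (hr : 0 < r) (hr' : 0 < r')
    (h : Disjoint (closedBall c (2 * t * r)) (closedBall c' (2 * t * r'))) :
    2 * t * (r + r') < ‖c' - c‖ := by
  rw [disjoint_closedBall_closedBall_iff (by positivity) (by positivity), dist_comm, dist_eq_norm] at h
  linarith

lemma gm_hit1 {t : ℝ} (ht : 1 ≤ t) {c c' : E} {r r' : ℝ} (hr : 0 < r) (hr' : 0 < r')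
    (h : 2 * t * (r + r') < ‖c' - c‖) {p p' : E} (hp : p ∈ closedBall c r)
    (hp' : p' ∈ closedBall c' r') :
    p' - p ≠ 0 ∧ InnerProductGeometry.angle (p' - p) (c' - c) ≤ Real.arcsin (1 / (2 * t)) := by
  have hne : c' - c ≠ 0 := by
    rw [← norm_pos_iff]; refine lt_of_le_of_lt ?_ h; positivity
  refine gm_angle_arcsin (by positivity) ?_ hne ?_
  · rw [div_lt_one (by positivity)]; linarith
  · rw [mem_closedBall, dist_eq_norm] at hp hp'
    have h1 : ‖p' - p - (c' - c)‖ ≤ r + r' := by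
      have : p' - p - (c' - c) = (p' - c') - (p - c) := by abel
      rw [this]
      linarith [norm_sub_le (p' - c') (p - c)]
    refine h1.trans ?_
    rw [div_mul_eq_mul_div, one_mul, le_div_iff₀ (by positivity)]
    linarith

lemma gm_hit2 {t : ℝ} (ht : 1 ≤ t) {c c' : E} {r r' : ℝ} (hr : 0 < r) (hr' : 0 < r')
    (h : 2 * t * (r + r') < ‖c' - c‖) {p p' y z : E} (hp : p ∈ closedBall c r)
    (hp' : p' ∈ closedBall c' r') (hy : y ∈ closedBall c r) (hz : z ∈ closedBall c' r') :
    InnerProductGeometry.angle (z - y) (p' - p) ≤ 2 * Real.arcsin (1 / (2 * t)) := by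
  have h1 := (gm_hit1 ht hr hr' h hp hp').2
  have h2 := (gm_hit1 ht hr hr' h hy hz).2
  have h3 := InnerProductGeometry.angle_le_angle_add_angle (z - y) (c' - c) (p' - p)
  rw [InnerProductGeometry.angle_comm (c' - c)] at h3
  linarith

lemma gm_infDist {V : Submodule ℝ E} {u w : E} (hu : u ≠ 0) (hw : w ∈ V) {φ : ℝ}
    (hφ : φ ≤ Real.pi / 2) (hw0 : w ≠ 0)
    (h : InnerProductGeometry.angle u w < φ) : infDist u (V : Set E) < Real.sin φ * ‖u‖ := by
  have hw' : 0 < ‖w‖ := norm_pos_iff.2 hw0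
  have hu' : 0 < ‖u‖ := norm_pos_iff.2 hu
  set ψ := InnerProductGeometry.angle u w
  have hψ0 : 0 ≤ ψ := InnerProductGeometry.angle_nonneg _ _
  have h1 : infDist u (V : Set E) ≤ dist u ((⟪u, w⟫ / ‖w‖ ^ 2) • w) :=
    infDist_le_dist_of_mem (V.smul_mem _ hw)
  have h2 : dist u ((⟪u, w⟫ / ‖w‖ ^ 2) • w) = Real.sin ψ * ‖u‖ := by
    have hs : 0 ≤ Real.sin ψ := Real.sin_nonneg_of_nonneg_of_le_pi hψ0 (InnerProductGeometry.angle_le_pi _ _)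
    rw [dist_eq_norm, ← sq_eq_sq₀ (norm_nonneg _) (by positivity), norm_sub_sq_real, norm_smul,
      inner_smul_right, mul_pow, mul_pow, Real.sin_sq, Real.norm_eq_abs, sq_abs,
      ← InnerProductGeometry.cos_angle_mul_norm_mul_norm u w]
    field_simp
    ring
  have h3 : Real.sin ψ < Real.sin φ :=
    Real.sin_lt_sin_of_lt_of_le_pi_div_two (by linarith [Real.pi_pos]) hφ h
  nlinarith

end GeomA

/-- Euclidean space. -/
abbrev Eu (n : ℕ) := EuclideanSpace ℝ (Fin n)

section GeomB
variable {n : ℕ}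

lemma gm_mem_H {y z θ : Eu n} (hθ : ‖θ‖ = 1) {α : ℝ} (hα0 : 0 < α) (hα1 : α ≤ 1)
    (h : z ∈ almostHalfSpace y θ α) :
    InnerProductGeometry.angle (z - y) θ < Real.pi / 2 - Real.arcsin α := by
  simp only [almostHalfSpace, mem_ofPred_eq] at h
  have hz : z - y ≠ 0 := by
    rintro hz; rw [hz] at h; simp at h
  have hθ0 : θ ≠ 0 := by rintro rfl; simp at hθ
  refine gm_angle_lt hz hθ0 (by linarith [Real.arcsin_le_pi_div_two α]) ?_
  rw [Real.cos_pi_div_two_sub, Real.sin_arcsin (by linarith) hα1, hθ]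
  linarith

lemma gm_mem_X {y z v : Eu n} {V : Submodule ℝ (Eu n)} (hv : v ∈ V) (hv0 : v ≠ 0) (hzy : z - y ≠ 0)
    {α : ℝ} (hα0 : 0 < α) (hα1 : α ≤ 1)
    (h : InnerProductGeometry.angle (z - y) v < Real.arcsin α) : z ∈ coneX y V α := by
  have := gm_infDist hzy hv (Real.arcsin_le_pi_div_two α) hv0 h
  rwa [Real.sin_arcsin (by linarith) hα1] at this

lemma gm_mem_cone {y z θ : Eu n} (hθ : ‖θ‖ = 1) {s : ℝ} (hs0 : 0 < s)
    (h : z ∈ oneSidedCone y θ s) :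
    z - y ≠ 0 ∧ InnerProductGeometry.angle (z - y) θ < Real.arcsin s := by
  simp only [oneSidedCone, mem_ofPred_eq] at h
  have hz : z - y ≠ 0 := by
    rintro hz; rw [hz] at h; simp at h
  have hθ0 : θ ≠ 0 := by rintro rfl; simp at hθ
  refine ⟨hz, gm_angle_lt hz hθ0 (Real.arcsin_nonneg.2 hs0.le) ?_⟩
  rw [Real.cos_arcsin, hθ]
  linarith
end GeomB

/-- the key inequality on `t` -/
lemma tl_main {α t : ℝ} (hα0 : 0 < α) (ht1 : 1 ≤ t)
    (ht : ∀ (N : ℕ) (x₀ y₀ : EuclideanSpace ℝ (Fin N)) (r_x r_y : ℝ), 0 < r_x → 0 < r_y →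
      Disjoint (closedBall x₀ (t * r_x)) (closedBall y₀ (t * r_y)) →
      ∀ θ : EuclideanSpace ℝ (Fin N), ‖θ‖ = 1 →
        y₀ ∈ oneSidedCone x₀ θ ((α / 2) / t) →
        ∀ x ∈ closedBall x₀ r_x, closedBall y₀ r_y ⊆ oneSidedCone x θ (α / 2)) :
    Real.arcsin (α / (2 * t)) + Real.arcsin (1 / t) ≤ Real.arcsin (α / 2) := by
  have key : ∀ φ T : ℝ, 0 ≤ φ → φ < Real.arcsin (α / (2 * t)) → t < T →
      φ + Real.arcsin (1 / T) ≤ Real.arcsin (α / 2) := by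
    intro φ T hφ0 hφ hT
    have hT0 : 0 < T := by linarith
    have hT1 : 1 < T := by linarith
    set η := Real.arcsin (1 / T) with hη
    have h1T : 1 / T < 1 := by rw [div_lt_one hT0]; exact hT1
    have h1T0 : 0 < 1 / T := by positivity
    have hsη : Real.sin η = 1 / T := Real.sin_arcsin (by linarith) h1T.le
    have hη0 : 0 < η := Real.arcsin_pos.2 h1T0
    have hη1 : η < Real.pi / 2 := Real.arcsin_lt_pi_div_two.2 h1T
    have hcη : 0 < Real.cos η := Real.cos_pos_of_mem_Ioo ⟨by linarith, hη1⟩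
    set θ : EuclideanSpace ℝ (Fin 2) := !₂[1, 0] with hθ
    set y₀ : EuclideanSpace ℝ (Fin 2) := !₂[T * Real.cos φ, T * Real.sin φ] with hy
    set z : EuclideanSpace ℝ (Fin 2) := !₂[T * Real.cos η * Real.cos (φ + η), T * Real.cos η * Real.sin (φ + η)] with hz
    have ny : ‖y₀‖ = T := by
      rw [EuclideanSpace.norm_eq, Real.sqrt_eq_iff_eq_sq (by positivity) hT0.le]
      simp [hy, Fin.sum_univ_two]
      nlinarith [Real.sin_sq_add_cos_sq φ]
    have nz : ‖z‖ = T * Real.cos η := by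
      rw [EuclideanSpace.norm_eq, Real.sqrt_eq_iff_eq_sq (by positivity) (by positivity)]
      simp [hz, Fin.sum_univ_two]
      nlinarith [Real.sin_sq_add_cos_sq (φ + η)]
    have nd : dist z y₀ = 1 := by
      rw [EuclideanSpace.dist_eq, Real.sqrt_eq_iff_eq_sq (by positivity) (by norm_num)]
      simp only [hz, hy, Fin.sum_univ_two, Real.dist_eq, sq_abs]
      simp only [Matrix.cons_val_zero, Matrix.cons_val_one]
      have e1 := Real.sin_sq_add_cos_sq φ
      have e2 := Real.sin_sq_add_cos_sq (φ + η)
      have e3 := Real.cos_sub (φ + η) φ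
      have e4 := Real.sin_sq_add_cos_sq η
      have e5 : T * Real.sin η = 1 := by rw [hsη]; field_simp
      rw [add_sub_cancel_left] at e3
      linear_combination T^2*e1 + T^2*Real.cos η^2*e2 - T^2 * e4 + 2*T^2*Real.cos η*e3 + (T * Real.sin η + 1) * e5
    have nθ : ‖θ‖ = 1 := by
      rw [EuclideanSpace.norm_eq]; simp [hθ, Fin.sum_univ_two]
    have iy : ⟪y₀, θ⟫ = T * Real.cos φ := by
      simp [hy, hθ, PiLp.inner_apply, Fin.sum_univ_two]
    have iz : ⟪z, θ⟫ = T * Real.cos η * Real.cos (φ + η) := by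
      simp [hz, hθ, PiLp.inner_apply, Fin.sum_univ_two]
    have hφ2 : φ < Real.pi / 2 := hφ.trans_le (Real.arcsin_le_pi_div_two _)
    have hmem := ht 2 0 y₀ ((T - t) / (2 * t)) 1 (by apply div_pos <;> linarith) one_pos ?_ θ nθ ?_ 0 ?_
      (show z ∈ closedBall y₀ 1 by rw [mem_closedBall, nd])
    · simp only [oneSidedCone, mem_ofPred_eq, sub_zero, nz, iz] at hmem
      rw [← Real.cos_arcsin] at hmem
      have h3 : Real.cos (Real.arcsin (α / 2)) < Real.cos (φ + η) := by
        have : 0 < T * Real.cos η := by positivity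
        nlinarith
      by_contra hcon
      push Not at hcon
      have := Real.cos_le_cos_of_nonneg_of_le_pi (Real.arcsin_nonneg.2 (by positivity : 0 ≤ α / 2))
        (by linarith) hcon.le
      linarith
    · rw [disjoint_closedBall_closedBall_iff (by apply mul_nonneg; linarith; apply div_nonneg <;> linarith) (by linarith), dist_eq_norm, zero_sub, norm_neg, ny]
      have : t * ((T - t) / (2 * t)) = (T - t) / 2 := by field_simp
      rw [this]; linarith
    · simp only [oneSidedCone, mem_ofPred_eq, sub_zero, ny, iy]
      rw [← Real.cos_arcsin, mul_comm]
      refine mul_lt_mul_of_pos_left ?_ hT0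
      have : α / 2 / t = α / (2 * t) := by field_simp
      rw [this]
      exact Real.cos_lt_cos_of_nonneg_of_le_pi hφ0 (by linarith [Real.arcsin_le_pi_div_two (α / (2 * t)), Real.pi_pos]) hφ
    · simp; apply div_nonneg <;> linarith
  have hσ : 0 < Real.arcsin (α / (2 * t)) := Real.arcsin_pos.2 (by positivity)
  have key2 : ∀ φ : ℝ, 0 ≤ φ → φ < Real.arcsin (α / (2 * t)) →
      φ + Real.arcsin (1 / t) ≤ Real.arcsin (α / 2) := by
    intro φ h0 h1
    have hcont : Tendsto (fun T : ℝ => φ + Real.arcsin (1 / T)) (nhdsWithin t (Ioi t))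
        (nhds (φ + Real.arcsin (1 / t))) := by
      have : ContinuousAt (fun T : ℝ => φ + Real.arcsin (1 / T)) t := by
        refine continuousAt_const.add (Real.continuous_arcsin.continuousAt.comp ?_)
        exact continuousAt_const.div continuousAt_id (by simp; linarith)
      exact this.tendsto.mono_left nhdsWithin_le_nhds
    exact le_of_tendsto hcont (by filter_upwards [self_mem_nhdsWithin] with T hT using key φ T h0 h1 hT)
  by_contra hcon
  push Not at hcon
  set σ := Real.arcsin (α / (2 * t))
  have := key2 (max 0 ((Real.arcsin (α / 2) - Real.arcsin (1 / t) + σ) / 2)) (le_max_left _ _)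
    (max_lt hσ (by linarith))
  have h2 := le_max_right 0 ((Real.arcsin (α / 2) - Real.arcsin (1 / t) + σ) / 2)
  linarith

/-- elementary consequences -/
lemma tl_facts {α t : ℝ} (hα0 : 0 < α) (hα1 : α ≤ 1) (ht1 : 1 ≤ t)
    (h : Real.arcsin (α / (2 * t)) + Real.arcsin (1 / t) ≤ Real.arcsin (α / 2)) :
    2 < t ∧ 0 < Real.arcsin (α / (2 * t)) ∧ 
    Real.arcsin (α / (2 * t)) ≤ Real.arcsin (1 / (2 * t)) ∧
    Real.arcsin (α / (2 * t)) + 2 * Real.arcsin (1 / (2 * t)) ≤ Real.arcsin (α / 2) ∧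
    2 * Real.arcsin (α / 2) ≤ Real.arcsin α ∧ Real.arcsin α ≤ 3 * Real.arcsin (α / 2) ∧
    Real.arcsin (α / 2) ≤ Real.pi / 6 * α ∧ α / (2 * t) ≤ Real.arcsin (α / (2 * t)) ∧
    Real.arcsin (1 / (2 * t)) ≤ 1.1 / (2 * t) := by
  have ht0 : 0 < t := by linarith
  have hσ : 0 < Real.arcsin (α / (2 * t)) := Real.arcsin_pos.2 (by positivity)
  have hα2 : α / 2 ≤ 1 := by linarith
  have pos := Real.pi_pos
  set a := Real.arcsin (α / 2) with ha
  have sa : Real.sin a = α / 2 := Real.sin_arcsin (by linarith) hα2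
  have ha0 : 0 < a := Real.arcsin_pos.2 (by positivity)
  have ha6 : a ≤ Real.pi / 6 := by
    rw [ha, Real.arcsin_le_iff_le_sin (by constructor <;> linarith) (by constructor <;> linarith),
      Real.sin_pi_div_six]; linarith
  have h2t : 2 < t := by
    have : Real.arcsin (1 / t) < Real.arcsin (α / 2) := by linarith
    have this := (Real.strictMonoOn_arcsin.lt_iff_lt
      ⟨by linarith [(by positivity : 0 < 1 / t)], by rw [div_le_one ht0]; exact ht1⟩ ⟨by linarith, hα2⟩).1 this
    have h1 : 1 < α / 2 * t := by rwa [div_lt_iff₀ ht0] at this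
    nlinarith
  set x := 1 / (2 * t) with hx
  have hx0 : 0 < x := by positivity
  have hx4 : x ≤ 1 / 4 := by
    rw [hx, div_le_div_iff₀ (by positivity) (by norm_num)]; linarith
  have hαx : α / (2 * t) = α * x := by rw [hx]; ring
  have h1t : 1 / t = 2 * x := by rw [hx]; field_simp
  have h11 : 1.1 / (2 * t) = 1.1 * x := by rw [hx]; ring
  rw [h1t] at h
  rw [hαx] at h hσ ⊢
  rw [h11]
  set β := Real.arcsin x with hβ
  have sβ : Real.sin β = x := Real.sin_arcsin (by linarith) (by linarith)
  have hβ0 : 0 < β := Real.arcsin_pos.2 hx0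
  have hβ6 : β ≤ Real.pi / 6 := by
    rw [hβ, Real.arcsin_le_iff_le_sin (by constructor <;> linarith) (by constructor <;> linarith),
      Real.sin_pi_div_six]; linarith
  have hσβ : Real.arcsin (α * x) ≤ β := Real.arcsin_le_arcsin (by nlinarith)
  have h2β : 2 * β ≤ Real.arcsin (2 * x) := by
    rw [Real.le_arcsin_iff_sin_le (by constructor <;> linarith) (by constructor <;> linarith),
      Real.sin_two_mul, sβ]
    nlinarith [Real.cos_le_one β]
  refine ⟨h2t, hσ, hσβ, by linarith, ?_, ?_, ?_, ?_, ?_⟩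
  · rw [Real.le_arcsin_iff_sin_le (by constructor <;> linarith) (by constructor <;> linarith),
      Real.sin_two_mul, sa]
    nlinarith [Real.cos_le_one a]
  · rw [Real.arcsin_le_iff_le_sin (by constructor <;> linarith) (by constructor <;> linarith),
      Real.sin_three_mul, sa]
    nlinarith [mul_nonneg hα0.le (mul_nonneg (by linarith : 0 ≤ 1 - α) (by linarith : 0 ≤ 1 + α))]
  · have hb : Real.pi / 6 * α ≤ Real.pi / 6 := by nlinarith
    have hb0 : 0 ≤ Real.pi / 6 * α := by positivity
    rw [ha, Real.arcsin_le_iff_le_sin (by constructor <;> linarith) (by constructor <;> linarith)]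
    have := strictConcaveOn_sin_Icc.concaveOn.2 (x := Real.pi / 6) (y := 0) (by constructor <;> linarith)
      (by constructor <;> linarith) hα0.le (by linarith : 0 ≤ 1 - α) (by ring)
    simp only [smul_eq_mul, Real.sin_pi_div_six, Real.sin_zero, mul_zero, add_zero] at this
    rw [mul_comm (Real.pi / 6)]
    linarith
  · have := Real.sin_le hσ.le
    rwa [Real.sin_arcsin (by nlinarith) (by nlinarith)] at this
  · rw [hβ, Real.arcsin_le_iff_le_sin (by constructor <;> linarith) (by constructor <;> linarith [Real.pi_gt_three])]
    have := Real.sin_gt_sub_cube (x := 1.1 * x) (by positivity)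
    refine le_trans ?_ this.le
    have : x * x ≤ 1 / 16 := by nlinarith
    nlinarith

section CaroWei
variable {ι : Type*} [DecidableEq ι]

/-- number of neighbours of `v` in `S` -/
noncomputable def cwDeg (R : ι → ι → Prop) (S : Finset ι) (v : ι) : ℕ :=
  (S.filter (fun u => u ≠ v ∧ R v u)).card

lemma cwDeg_mono {R : ι → ι → Prop} {S T : Finset ι} (h : S ⊆ T) (v : ι) :
    cwDeg R S v ≤ cwDeg R T v :=
  Finset.card_le_card (Finset.filter_subset_filter _ h)

lemma cwDeg_erase {R : ι → ι → Prop} {S : Finset ι} {v w : ι} (hv : v ∈ S) (h : v ≠ w ∧ R w v) :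
    cwDeg R S w = cwDeg R (S.erase v) w + 1 := by
  unfold cwDeg
  rw [Finset.filter_erase, Finset.card_erase_add_one]
  simp [hv, h]

lemma cwDeg_pos {R : ι → ι → Prop} {S : Finset ι} {v x : ι} (hx : x ∈ S) (hxv : x ≠ v)
    (h : R v x) : 1 ≤ cwDeg R S v := by
  unfold cwDeg
  exact Finset.card_pos.2 ⟨x, Finset.mem_filter.2 ⟨hx, hxv, h⟩⟩

lemma cw_main (R : ι → ι → Prop) (hR : ∀ u v, R u v → R v u) (k : ℕ) (hk : 1 ≤ k) (S : Finset ι) :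
    ∃ I ⊆ S, (∀ T ⊆ I, T.Nonempty → ∃ v ∈ T, cwDeg R T v < k) ∧
      ∑ v ∈ S, min 1 ((k : ℝ) / (cwDeg R S v + 1)) ≤ I.card := by
  induction S using Finset.strongInduction with
  | H S ih =>
  rcases S.eq_empty_or_nonempty with rfl | hne
  · exact ⟨∅, by simp, by simp, by simp⟩
  by_cases hlow : ∃ v ∈ S, cwDeg R S v < k
  · obtain ⟨v, hv, hd⟩ := hlow
    obtain ⟨I, hIS, hI, hsum⟩ := ih (S.erase v) (Finset.erase_ssubset hv)
    have hvI : v ∉ I := fun h => by simpa using hIS h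
    refine ⟨insert v I, Finset.insert_subset hv (hIS.trans (Finset.erase_subset _ _)), ?_, ?_⟩
    · intro T hT hTne
      by_cases hvT : v ∈ T
      · refine ⟨v, hvT, lt_of_le_of_lt (cwDeg_mono ?_ v) hd⟩
        exact hT.trans (Finset.insert_subset hv (hIS.trans (Finset.erase_subset _ _)))
      · exact hI T ((Finset.subset_insert_iff_of_notMem hvT).1 hT) hTne
    · rw [Finset.card_insert_of_notMem hvI, ← Finset.add_sum_erase _ _ hv]
      push_cast
      have h1 : ∑ u ∈ S.erase v, min 1 ((k : ℝ) / (cwDeg R S u + 1)) ≤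
          ∑ u ∈ S.erase v, min 1 ((k : ℝ) / (cwDeg R (S.erase v) u + 1)) := by
        refine Finset.sum_le_sum fun u _ => min_le_min le_rfl ?_
        refine div_le_div_of_nonneg_left (by positivity) (by positivity) ?_
        have : (cwDeg R (S.erase v) u : ℝ) ≤ cwDeg R S u := by
          exact_mod_cast cwDeg_mono (Finset.erase_subset _ _) u
        linarith
      linarith [min_le_left 1 ((k : ℝ) / (cwDeg R S v + 1))]
  · push Not at hlow
    obtain ⟨v, hv, hmax⟩ := S.exists_max_image (cwDeg R S) hne
    obtain ⟨I, hIS, hI, hsum⟩ := ih (S.erase v) (Finset.erase_ssubset hv)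
    refine ⟨I, hIS.trans (Finset.erase_subset _ _), hI, le_trans ?_ hsum⟩
    rw [← Finset.add_sum_erase _ _ hv]
    set D : ℝ := ((cwDeg R S v : ℕ) : ℝ) with hD
    have hk1 : (1 : ℝ) ≤ k := by exact_mod_cast hk
    have hDk : (k : ℝ) ≤ D := by rw [hD]; exact_mod_cast hlow v hv
    have hterm : ∀ u ∈ S.erase v, min 1 ((k : ℝ) / (cwDeg R S u + 1)) +
        (if R v u then (k : ℝ) / (D * (D + 1)) else 0) ≤ min 1 ((k : ℝ) / (cwDeg R (S.erase v) u + 1)) := by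
      intro u hu
      obtain ⟨huv, huS⟩ := Finset.mem_erase.1 hu
      split_ifs with h
      · have e := cwDeg_erase (R := R) (w := u) hv ⟨huv.symm, hR _ _ h⟩
        have h1 : (k : ℝ) ≤ cwDeg R S u := by exact_mod_cast hlow u huS
        have h2 : (cwDeg R S u : ℝ) ≤ D := by rw [hD]; exact_mod_cast hmax u huS
        have e' : ((cwDeg R (S.erase v) u : ℝ) + 1) = cwDeg R S u := by rw [e]; push_cast; ring
        rw [e']
        set d : ℝ := ((cwDeg R S u : ℕ) : ℝ)
        have hd0 : 0 < d := by linarith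
        have h3 : (k : ℝ) / d ≤ 1 := by rw [div_le_one hd0]; exact h1
        rw [min_eq_right h3]
        have h4 : (k : ℝ) / (D * (D + 1)) ≤ k / (d * (d + 1)) := by
          refine div_le_div_of_nonneg_left (by positivity) (by positivity) ?_
          nlinarith
        have h5 : (k : ℝ) / (d + 1) + k / (d * (d + 1)) = k / d := by field_simp
        linarith [min_le_right 1 ((k : ℝ) / (d + 1))]
      · rw [add_zero]
        refine min_le_min le_rfl (div_le_div_of_nonneg_left (by positivity) (by positivity) ?_)
        have : (cwDeg R (S.erase v) u : ℝ) ≤ cwDeg R S u := by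
          exact_mod_cast cwDeg_mono (Finset.erase_subset _ _) u
        linarith
    have hs := Finset.sum_le_sum hterm
    rw [Finset.sum_add_distrib] at hs
    have hcount : ∑ u ∈ S.erase v, (if R v u then (k : ℝ) / (D * (D + 1)) else 0) = k / (D + 1) := by
      rw [← Finset.sum_filter, Finset.sum_const, nsmul_eq_mul]
      have : ((S.erase v).filter (fun u => R v u)).card = cwDeg R S v := by
        unfold cwDeg
        congr 1
        ext u; simp [Finset.mem_erase]; tauto
      rw [this, ← hD]
      have : D ≠ 0 := by linarith
      field_simp
    rw [hcount] at hs
    linarith [min_le_right 1 ((k : ℝ) / (D + 1))]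

/-- independent set in the graph of a partial function -/
lemma cw_indep (S : Finset ι) (R : ι → ι → Prop) 
    (hR : ∀ b, ∀ x ∈ S, ∀ y ∈ S, R b x → R b y → x = y) :
    ∃ P ⊆ S, S.card ≤ 3 * P.card ∧ ∀ b ∈ P, ∀ b' ∈ P, b ≠ b' → ¬ R b b' := by
  obtain ⟨I, hIS, hI, hsum⟩ := cw_main (fun u v => R u v ∨ R v u) (fun u v h => h.symm) 1 le_rfl S
  refine ⟨I, hIS, ?_, ?_⟩
  · have hdeg : ∑ v ∈ S, cwDeg (fun u v => R u v ∨ R v u) S v ≤ 2 * S.card := by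
      have h1 : ∀ v ∈ S, cwDeg (fun u v => R u v ∨ R v u) S v ≤
          (S.filter (fun u => R v u)).card + (S.filter (fun u => R u v)).card := by
        intro v _
        unfold cwDeg
        refine le_trans (Finset.card_le_card ?_) (Finset.card_union_le _ _)
        intro u; simp; tauto
      have h2 : ∀ v ∈ S, (S.filter (fun u => R v u)).card ≤ 1 := by
        intro v _
        rw [Finset.card_le_one]
        intro a ha b hb
        simp only [Finset.mem_filter] at ha hb
        exact hR v a ha.1 b hb.1 ha.2 hb.2
      have h3 : ∑ v ∈ S, (S.filter (fun u => R u v)).card = ∑ v ∈ S, (S.filter (fun u => R v u)).card := by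
        simp only [Finset.card_filter]
        exact Finset.sum_comm
      calc _ ≤ ∑ v ∈ S, ((S.filter (fun u => R v u)).card + (S.filter (fun u => R u v)).card) := Finset.sum_le_sum h1
        _ = 2 * ∑ v ∈ S, (S.filter (fun u => R v u)).card := by rw [Finset.sum_add_distrib, h3]; ring
        _ ≤ 2 * ∑ v ∈ S, 1 := by gcongr with v hv; exact h2 v hv
        _ = _ := by simp
    have h1 : ∀ v ∈ S, (5 - (cwDeg (fun u v => R u v ∨ R v u) S v : ℝ)) / 9 ≤
        min 1 (((1 : ℕ) : ℝ) / (cwDeg (fun u v => R u v ∨ R v u) S v + 1)) := by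
      intro v _
      set d : ℝ := ((cwDeg (fun u v => R u v ∨ R v u) S v : ℕ) : ℝ) with hd
      have hd0 : 0 ≤ d := by positivity
      refine le_min (by linarith) ?_
      rw [div_le_div_iff₀ (by norm_num) (by positivity)]
      push_cast
      nlinarith [sq_nonneg (d - 2)]
    have h2 := (Finset.sum_le_sum h1).trans hsum
    rw [← Finset.sum_div, Finset.sum_sub_distrib, Finset.sum_const, nsmul_eq_mul] at h2
    have h3 : (∑ v ∈ S, (cwDeg (fun u v => R u v ∨ R v u) S v : ℝ)) ≤ 2 * S.card := by exact_mod_cast hdeg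
    have : (S.card : ℝ) ≤ 3 * I.card := by linarith
    exact_mod_cast this
  · intro b hb b' hb' hne hRb
    obtain ⟨v, hv, hdv⟩ := hI {b, b'} (by intro x; simp; rintro (rfl | rfl) <;> assumption) (by simp)
    simp only [Finset.mem_insert, Finset.mem_singleton] at hv
    have h1 : ∀ x ∈ ({b, b'} : Finset ι), ¬ (x ≠ v ∧ (R v x ∨ R x v)) := by
      intro x hx hx2
      have : 1 ≤ cwDeg (fun u v => R u v ∨ R v u) {b, b'} v := by
        exact cwDeg_pos hx hx2.1 hx2.2
      omega
    rcases hv with rfl | rfl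
    · exact h1 b' (by simp) ⟨hne.symm, Or.inl hRb⟩
    · exact h1 b (by simp) ⟨hne, Or.inr hRb⟩

/-- triangle-free set -/
lemma cw_trifree (S : Finset ι) (R : ι → ι → Prop) (hR : ∀ u v, R u v → R v u) (K : ℕ) (hK : 2 ≤ K)
    (hdeg : (∑ v ∈ S, (cwDeg R S v : ℝ)) ≤ S.card * (2 * K - 1)) :
    ∃ I ⊆ S, S.card ≤ K * I.card ∧ ∀ a ∈ I, ∀ b ∈ I, ∀ c ∈ I, a ≠ b → a ≠ c → b ≠ c →
      R a b → R a c → R b c → False := by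
  obtain ⟨I, hIS, hI, hsum⟩ := cw_main R hR 2 (by norm_num) S
  refine ⟨I, hIS, ?_, ?_⟩
  · have hK' : (2 : ℝ) ≤ K := by exact_mod_cast hK
    have h1 : ∀ v ∈ S, (4 * K - 1 - (cwDeg R S v : ℝ)) / (2 * K ^ 2) ≤
        min 1 (((2 : ℕ) : ℝ) / (cwDeg R S v + 1)) := by
      intro v _
      set d : ℝ := ((cwDeg R S v : ℕ) : ℝ) with hd
      have hd0 : 0 ≤ d := by positivity
      refine le_min ?_ ?_
      · rw [div_le_one (by positivity)]; nlinarith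
      · rw [div_le_div_iff₀ (by positivity) (by positivity)]
        push_cast
        nlinarith [sq_nonneg (d + 1 - 2 * K)]
    have h2 := (Finset.sum_le_sum h1).trans hsum
    rw [← Finset.sum_div, Finset.sum_sub_distrib, Finset.sum_const, nsmul_eq_mul,
      div_le_iff₀ (by positivity)] at h2
    have h3 : (S.card : ℝ) * (2 * K) ≤ I.card * (2 * K ^ 2) := by linarith
    have : (S.card : ℝ) ≤ K * I.card := by
      have h4 : 0 ≤ ((K : ℝ) * I.card - S.card) * (2 * K) := by nlinarith
      have := nonneg_of_mul_nonneg_left h4 (by positivity)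
      linarith
    exact_mod_cast this
  · intro a ha b hb c hc hab hac hbc h1 h2 h3
    obtain ⟨v, hv, hdv⟩ := hI {a, b, c} (by intro x; simp; rintro (rfl | rfl | rfl) <;> assumption) (by simp)
    have h4 : ∀ x y, x ∈ ({a, b, c} : Finset ι) → y ∈ ({a, b, c} : Finset ι) → x ≠ y → x ≠ v → y ≠ v → R v x → R v y → False := by
      intro x y hx hy hxy hxv hyv hrx hry
      have : 2 ≤ cwDeg R {a, b, c} v := by
        unfold cwDeg
        rw [← Finset.card_pair hxy]
        refine Finset.card_le_card ?_
        intro z; simp only [Finset.mem_insert, Finset.mem_singleton, Finset.mem_filter]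
        simp only [Finset.mem_insert, Finset.mem_singleton] at hx hy
        rintro (rfl | rfl)
        · exact ⟨hx, hxv, hrx⟩
        · exact ⟨hy, hyv, hry⟩
      omega
    simp only [Finset.mem_insert, Finset.mem_singleton] at hv
    rcases hv with rfl | rfl | rfl
    · exact h4 b c (by simp) (by simp) hbc hab.symm hac.symm h1 h2
    · exact h4 a c (by simp) (by simp) hac hab hbc.symm (hR _ _ h1) h3
    · exact h4 a b (by simp) (by simp) hab hac hbc (hR _ _ h2) (hR _ _ h3)
end CaroWei

/-- the translate `V + z` meets the ball `B` -/
def HitsB {n : ℕ} (V : Submodule ℝ (Eu n)) (z : Eu n) (B : Eu n × ℝ) : Prop :=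
  (((fun w => w + z) '' (V : Set (EuclideanSpace ℝ (Fin n)))) ∩ closedBall B.1 B.2).Nonempty

/-- the combinatorial part of the hypothesis -/
structure BallColl (n d K q : ℕ) (t : ℝ) (x : Eu n) (r : ℝ) (ℬ : Finset (Eu n × ℝ)) : Prop where
  sub : ∀ B ∈ ℬ, 0 < B.2 ∧ closedBall B.1 B.2 ⊆ closedBall x r
  disj : ∀ B ∈ ℬ, ∀ B' ∈ ℬ, B ≠ B' →
          Disjoint (closedBall B.1 (2 * t * B.2)) (closedBall B'.1 (2 * t * B'.2))
  hits : ∀ ℬ' ⊆ ℬ, ℬ.card ≤ K * ℬ'.card → ∀ V : Submodule ℝ (Eu n), Module.finrank ℝ V = d →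
            ∃ z : Eu n, q ≤ (ℬ'.filter (fun B => HitsB V z B)).card

/-- the upper bound coming from a small cone density -/
def ConeBound {n : ℕ} (d : ℕ) (μ : Measure (Eu n)) (α c' : ℝ) (y : Eu n) (s : ℝ) : Prop :=
  ∃ (θ : Eu n) (V : Submodule ℝ (Eu n)), ‖θ‖ = 1 ∧ Module.finrank ℝ V = d ∧
    μ.real ((closedBall y s ∩ coneX y V α) \ almostHalfSpace y θ α) ≤ c' * μ.real (closedBall y s)

lemma red_main {n d K q : ℕ} {α t c c' κ : ℝ} (hc : 0 < c) (hc' : 0 < c') (hκ : 0 < κ) (hκ1 : κ < 1)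
    (μ : Measure (Eu n)) [IsFiniteMeasure μ]
    (hμ : ∀ᵐ x ∂μ, ∀ R > (0 : ℝ), ∃ r : ℝ, 0 < r ∧ r < R ∧
      ∃ ℬ : Finset (Eu n × ℝ), BallColl n d K q t x r ℬ ∧
        (∀ B ∈ ℬ, ENNReal.ofReal c * μ (closedBall x (3 * r)) < μ (closedBall B.1 B.2)))
    (hcon : ¬ ∀ᵐ x ∂μ, ENNReal.ofReal c' ≤
      limsup (fun r : ℝ =>
        ⨅ (θ : sphere (0 : EuclideanSpace ℝ (Fin n)) 1)
          (V : Submodule ℝ (EuclideanSpace ℝ (Fin n)))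
          (_ : Module.finrank ℝ V = d),
          μ ((closedBall x r ∩ coneX x V α) \ almostHalfSpace x θ α) / μ (closedBall x r))
        (nhdsWithin 0 (Set.Ioi 0))) :
    ∃ (x : Eu n) (r : ℝ) (ℬ : Finset (Eu n × ℝ)) (A : Set (Eu n)), 0 < r ∧ BallColl n d K q t x r ℬ ∧
      0 < μ.real (closedBall x (3 * r)) ∧
      (∀ B ∈ ℬ, c * μ.real (closedBall x (3 * r)) < μ.real (closedBall B.1 B.2)) ∧
      (∀ E, MeasurableSet E → E ⊆ closedBall x (3 * r) →
        κ * μ.real (closedBall x (3 * r)) < μ.real E → (E ∩ A).Nonempty) ∧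
      (∀ y ∈ A, ∀ s, 0 < s → s ≤ 2 * r → ConeBound d μ α c' y s) := by
  set h : Eu n → ℝ → ℝ≥0∞ := fun x r => ⨅ (θ : sphere (0 : EuclideanSpace ℝ (Fin n)) 1)
          (V : Submodule ℝ (EuclideanSpace ℝ (Fin n)))
          (_ : Module.finrank ℝ V = d),
          μ ((closedBall x r ∩ coneX x V α) \ almostHalfSpace x θ α) / μ (closedBall x r) with hh
  let A : ℕ → Set (Eu n) := fun k => {x | ∀ r, 0 < r → r < 1 / ((k : ℝ) + 1) → h x r < ENNReal.ofReal c'}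
  obtain ⟨k, hk⟩ : ∃ k, μ (A k) ≠ 0 := by
    by_contra hall
    push Not at hall
    apply hcon
    have h0 := measure_iUnion_null hall
    rw [ae_iff]
    refine measure_mono_null ?_ h0
    intro x hx
    simp only [mem_ofPred_eq, not_le] at hx
    have h1 := eventually_lt_of_limsup_lt hx
    rw [eventually_nhdsWithin_iff, Metric.eventually_nhds_iff] at h1
    obtain ⟨ε, hε, h1⟩ := h1
    obtain ⟨k, hk⟩ := exists_nat_one_div_lt hε
    refine mem_iUnion.2 ⟨k, ?_⟩
    intro r hr hrk
    refine h1 ?_ hr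
    rw [Real.dist_eq, sub_zero, abs_of_pos hr]
    linarith
  have hne : μ.restrict (A k) ≠ 0 := by rwa [Ne, Measure.restrict_eq_zero]
  have hdens := Besicovitch.ae_tendsto_measure_inter_div μ (A k)
  have : (ae (μ.restrict (A k))).NeBot := ae_neBot.2 hne
  obtain ⟨x, hx1, hx2⟩ := (hdens.and (ae_restrict_of_ae hμ)).exists
  have hlt : ENNReal.ofReal (1 - κ) < 1 := by
    rw [ENNReal.ofReal_lt_one]; linarith
  have hev := hx1.eventually_const_lt hlt
  rw [eventually_nhdsWithin_iff, Metric.eventually_nhds_iff] at hev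
  obtain ⟨ε, hε, hev⟩ := hev
  obtain ⟨r, hr0, hrR, ℬ, hB, hB2⟩ := hx2 (min (ε / 3) (1 / (2 * ((k : ℝ) + 1)))) (by positivity)
  have hr1 : 3 * r < ε := by have := hrR.trans_le (min_le_left _ _); linarith
  have hr2 : 2 * r < 1 / ((k : ℝ) + 1) := by
    have := hrR.trans_le (min_le_right _ _)
    rw [lt_div_iff₀ (by positivity)] at this ⊢
    linarith
  have hd := hev (y := 3 * r) (by rw [Real.dist_eq, sub_zero, abs_of_pos (by linarith)]; exact hr1) (by simp; exact hr0)
  have hM0 : μ (closedBall x (3 * r)) ≠ 0 := by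
    intro h0
    rw [measure_mono_null inter_subset_right h0] at hd
    simp at hd
  have hM : 0 < μ.real (closedBall x (3 * r)) := by
    rw [measureReal_def]; exact ENNReal.toReal_pos hM0 (measure_ne_top _ _)
  refine ⟨x, r, ℬ, A k, hr0, hB, hM, ?_, ?_, ?_⟩
  · intro B hBm
    have := ENNReal.toReal_strict_mono (measure_ne_top _ _) (hB2 B hBm)
    rwa [ENNReal.toReal_mul, ENNReal.toReal_ofReal hc.le] at this
  · intro E hE hEs hEm
    by_contra hemp
    rw [not_nonempty_iff_eq_empty] at hemp
    rw [ENNReal.lt_div_iff_mul_lt (Or.inl hM0) (Or.inl (measure_ne_top _ _))] at hd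
    have hd' := ENNReal.toReal_strict_mono (measure_ne_top _ _) hd
    rw [ENNReal.toReal_mul, ENNReal.toReal_ofReal (by linarith)] at hd'
    change (1 - κ) * μ.real _ < μ.real _ at hd'
    have h1 : μ.real (A k ∩ closedBall x (3 * r)) ≤ μ.real (closedBall x (3 * r) \ E) := by
      refine measureReal_mono ?_
      rintro z ⟨hz1, hz2⟩
      refine ⟨hz2, fun hzE => ?_⟩
      have : z ∈ E ∩ A k := ⟨hzE, hz1⟩
      rw [hemp] at this; exact this
    rw [measureReal_sdiff hEs hE] at h1
    linarith
  · intro y hy s hs0 hs1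
    have h1 := hy s hs0 (by linarith)
    rw [hh] at h1
    simp only [iInf_lt_iff] at h1
    obtain ⟨θ, V, hV, h1⟩ := h1
    refine ⟨θ, V, by simp, hV, ?_⟩
    by_cases hz : μ (closedBall y s) = 0
    · have : μ.real ((closedBall y s ∩ coneX y V α) \ almostHalfSpace y θ α) = 0 := by
        rw [measureReal_def, measure_mono_null _ hz]; simp
        exact sdiff_subset.trans inter_subset_left
      rw [this]; positivity
    · rw [ENNReal.div_lt_iff (Or.inl hz) (Or.inl (measure_ne_top _ _))] at h1
      have h2 := ENNReal.toReal_mono (ENNReal.mul_ne_top ENNReal.ofReal_ne_top (measure_ne_top _ _)) h1.le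
      rwa [ENNReal.toReal_mul, ENNReal.toReal_ofReal hc'.le] at h2

section Cluster
variable {F : Type*} [NormedAddCommGroup F] [InnerProductSpace ℝ F]

/-- abstract perturbation argument -/
lemma cl_perturb {ι : Type*} [DecidableEq ι] (P : Finset ι) (x : ι → F) (e : ι → Fin 3 → F) (φ : ℝ)
    (hD0 : ∀ b ∈ P, ∀ b' ∈ P, b ≠ b' → x b' - x b ≠ 0)
    (hE0 : ∀ b ∈ P, ∀ k l, k ≠ l → e b l - e b k ≠ 0)
    (h1 : ∀ b ∈ P, ∀ b' ∈ P, ∀ b'' ∈ P, b' ≠ b → b'' ≠ b →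
      InnerProductGeometry.angle (x b' - x b) (x b'' - x b) < φ)
    (h2 : ∀ b ∈ P, ∀ b' ∈ P, b' ≠ b → ∀ k l, k ≠ l →
      InnerProductGeometry.angle (e b l - e b k) (x b' - x b) < φ)
    (h3 : ∀ b ∈ P, ∀ k l l', l ≠ k → l' ≠ k →
      InnerProductGeometry.angle (e b l - e b k) (e b l' - e b k) < φ) :
    ∃ S : Finset F, S.card = 3 * P.card ∧ ∀ x₀ ∈ S, ∀ x₁ ∈ S, ∀ x₂ ∈ S, x₁ ≠ x₀ → x₂ ≠ x₀ →
      InnerProductGeometry.angle (x₁ - x₀) (x₂ - x₀) < φ := by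
  let X : ℝ → ι × Fin 3 → F := fun ε i => x i.1 + ε • e i.1 i.2
  let U : ι × Fin 3 → ι × Fin 3 → ℝ → F := fun i j ε =>
    if i.1 = j.1 then e i.1 j.2 - e i.1 i.2 else X ε j - X ε i
  let I : Finset (ι × Fin 3) := P ×ˢ Finset.univ
  have hU0 : ∀ i ∈ I, ∀ j ∈ I, j ≠ i → U i j 0 ≠ 0 := by
    intro i hi j hj hij
    simp only [I, Finset.mem_product, Finset.mem_univ, and_true] at hi hj
    simp only [U, X]
    split_ifs with h
    · refine hE0 _ hi _ _ fun hk => hij ?_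
      exact Prod.ext h.symm hk.symm
    · simpa using hD0 _ hi _ hj h
  have hUc : ∀ i j, Continuous (U i j) := by
    intro i j
    simp only [U, X]
    split_ifs with h
    · exact continuous_const
    · fun_prop
  have hXU : ∀ i j ε, 0 < ε → ∃ s : ℝ, 0 < s ∧ X ε j - X ε i = s • U i j ε := by
    intro i j ε hε
    simp only [U]
    split_ifs with h
    · refine ⟨ε, hε, ?_⟩
      simp only [X, h, smul_sub]; abel
    · exact ⟨1, one_pos, by simp⟩
  have hang0 : ∀ i ∈ I, ∀ j ∈ I, ∀ k ∈ I, j ≠ i → k ≠ i →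
      InnerProductGeometry.angle (U i j 0) (U i k 0) < φ := by
    intro i hi j hj k hk hij hik
    simp only [I, Finset.mem_product, Finset.mem_univ, and_true] at hi hj hk
    simp only [U, X]
    split_ifs with h h' h'
    · refine h3 _ hi _ _ _ (fun hk => hij (Prod.ext h.symm hk)) (fun hk => hik (Prod.ext h'.symm hk))
    · simpa using h2 _ hi _ hk (Ne.symm h') _ _ (fun hk => hij (Prod.ext h.symm hk.symm))
    · rw [InnerProductGeometry.angle_comm]
      simpa using h2 _ hi _ hj (Ne.symm h) _ _ (fun hk => hik (Prod.ext h'.symm hk.symm))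
    · simpa using h1 _ hi _ hj _ hk (Ne.symm h) (Ne.symm h')
  have hev : ∀ᶠ ε in nhds (0 : ℝ), ∀ i ∈ I, ∀ j ∈ I, j ≠ i → (U i j ε ≠ 0 ∧ ∀ k ∈ I, k ≠ i →
      InnerProductGeometry.angle (U i j ε) (U i k ε) < φ) := by
    rw [Filter.eventually_all_finset]
    intro i hi
    rw [Filter.eventually_all_finset]
    intro j hj
    by_cases hij : j = i
    · simp [hij]
    refine Filter.Eventually.mono (p := fun ε => U i j ε ≠ 0 ∧ ∀ k ∈ I, k ≠ i →
      InnerProductGeometry.angle (U i j ε) (U i k ε) < φ) ?_ (fun ε h _ => h)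
    refine Filter.Eventually.and ?_ ?_
    · exact (hUc i j).continuousAt.eventually_ne (hU0 i hi j hj hij)
    rw [Filter.eventually_all_finset]
    intro k hk
    by_cases hik : k = i
    · simp [hik]
    refine Filter.Eventually.mono ?_ (fun ε h _ => h)
    have hc : ContinuousAt (fun ε => InnerProductGeometry.angle (U i j ε) (U i k ε)) 0 := by
      have := InnerProductGeometry.continuousAt_angle (x := (U i j 0, U i k 0)) (hU0 i hi j hj hij) (hU0 i hi k hk hik)
      exact ContinuousAt.comp (f := fun ε => (U i j ε, U i k ε)) this
        ((hUc i j).continuousAt.prodMk (hUc i k).continuousAt)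
    exact hc.eventually_lt_const (hang0 i hi j hj k hk hij hik)
  rw [Metric.eventually_nhds_iff] at hev
  obtain ⟨δ, hδ, hev⟩ := hev
  have hev := hev (y := δ / 2) (by rw [Real.dist_eq, sub_zero, abs_of_pos (by linarith)]; linarith)
  have hδ2 : 0 < δ / 2 := by linarith
  refine ⟨I.image (X (δ / 2)), ?_, ?_⟩
  · rw [Finset.card_image_of_injOn]
    · simp [I, mul_comm]
    · intro i hi j hj hij
      by_contra hne
      obtain ⟨s, hs, h⟩ := hXU i j _ hδ2
      rw [hij, sub_self] at h
      rcases smul_eq_zero.1 h.symm with h | h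
      · exact hs.ne' h
      · exact (hev i hi j hj (Ne.symm hne)).1 h
  · intro x₀ h₀ x₁ h₁ x₂ h₂ h10 h20
    obtain ⟨i, hi, rfl⟩ := Finset.mem_image.1 h₀
    obtain ⟨j, hj, rfl⟩ := Finset.mem_image.1 h₁
    obtain ⟨k, hk, rfl⟩ := Finset.mem_image.1 h₂
    obtain ⟨s, hs, hs'⟩ := hXU i j _ hδ2
    obtain ⟨s2, hs2, hs2'⟩ := hXU i k _ hδ2
    rw [hs', hs2', InnerProductGeometry.angle_smul_left_of_pos _ _ hs,
      InnerProductGeometry.angle_smul_right_of_pos _ _ hs2]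
    exact (hev i hi j hj (by rintro rfl; exact h10 rfl)).2 k hk (by rintro rfl; exact h20 rfl)

lemma cl_pq {ω ϑ : F} (hω : ‖ω‖ = 1) (hϑ : ‖ϑ‖ = 1) (ho : ⟪ω, ϑ⟫ = 0) {p q L p' q' L' φ : ℝ}
    (hL : 0 < L) (hL2 : L ^ 2 = p ^ 2 + q ^ 2) (hL' : 0 < L') (hL2' : L' ^ 2 = p' ^ 2 + q' ^ 2)
    (hφ : 0 ≤ φ) (h : Real.cos φ * (L * L') ≤ p * p' + q * q') :
    p • ω + q • ϑ ≠ 0 ∧ InnerProductGeometry.angle (p • ω + q • ϑ) (p' • ω + q' • ϑ) ≤ φ := by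
  have ho' : ⟪ϑ, ω⟫ = 0 := by rw [real_inner_comm]; exact ho
  have hn : ∀ p q L : ℝ, 0 < L → L ^ 2 = p ^ 2 + q ^ 2 → ‖p • ω + q • ϑ‖ = L := by
    intro p q L hL hL2
    rw [← sq_eq_sq₀ (norm_nonneg _) hL.le, norm_add_sq_real, norm_smul, norm_smul, hω, hϑ,
      inner_smul_left, inner_smul_right, ho, hL2]
    simp
  have hne : ∀ p q L : ℝ, 0 < L → L ^ 2 = p ^ 2 + q ^ 2 → p • ω + q • ϑ ≠ 0 := by
    intro p q L hL hL2 h0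
    have := hn p q L hL hL2
    rw [h0, norm_zero] at this
    linarith
  refine ⟨hne p q L hL hL2, gm_angle_le (hne p q L hL hL2) (hne p' q' L' hL' hL2') hφ ?_⟩
  rw [hn p q L hL hL2, hn p' q' L' hL' hL2']
  simp only [inner_add_left, inner_add_right, inner_smul_left, inner_smul_right, ho, ho',
    real_inner_self_eq_norm_sq, hω, hϑ]
  have hfin : Real.cos φ * (L * L') ≤ p' * p + q' * q := by linarith
  simpa using hfin

/-- the three-point cluster -/
lemma cl_tri {ω ϑ : F} (hω : ‖ω‖ = 1) (hϑ : ‖ϑ‖ = 1) (ho : ⟪ω, ϑ⟫ = 0) {ψ : ℝ} (hψ0 : 0 < ψ)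
    (hψ1 : ψ ≤ Real.pi / 3) : ∃ e : Fin 3 → F, (∀ k l, k ≠ l → e l - e k ≠ 0 ∧
      InnerProductGeometry.angle (e l - e k) ϑ ≤ Real.pi / 2 + ψ) ∧
      ∀ k l l', l ≠ k → l' ≠ k → 
        InnerProductGeometry.angle (e l - e k) (e l' - e k) ≤ Real.pi - 2 * ψ := by
  have hpi := Real.pi_pos
  set c := Real.cos ψ with hc
  set s := Real.sin ψ with hs
  have hc0 : 0 < c := Real.cos_pos_of_mem_Ioo ⟨by linarith, by linarith⟩
  have hs0 : 0 < s := Real.sin_pos_of_pos_of_lt_pi hψ0 (by linarith)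
  have hcs : s ^ 2 + c ^ 2 = 1 := Real.sin_sq_add_cos_sq ψ
  have hc12 : 1 / 2 ≤ c := by
    rw [← Real.cos_pi_div_three]
    exact Real.cos_le_cos_of_nonneg_of_le_pi hψ0.le (by linarith) hψ1
  have hcos1 : Real.cos (Real.pi / 2 + ψ) = - s := by rw [add_comm, Real.cos_add_pi_div_two]
  have hcos2 : Real.cos (Real.pi - 2 * ψ) = 1 - 2 * c ^ 2 := by
    rw [Real.cos_pi_sub, Real.cos_two_mul]; ring
  let P : Fin 3 → ℝ := ![0, 2 * c, c]
  let Q : Fin 3 → ℝ := ![0, 0, s]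
  let Lm : Fin 3 → Fin 3 → ℝ := ![![0, 2 * c, 1], ![2 * c, 0, 1], ![1, 1, 0]]
  have hL : ∀ k l, k ≠ l → 0 < Lm k l ∧ Lm k l ^ 2 = (P l - P k) ^ 2 + (Q l - Q k) ^ 2 := by
    intro k l hkl
    fin_cases k <;> fin_cases l <;> simp [P, Q, Lm, hc0] at hkl ⊢ <;> nlinarith
  have hsub : ∀ k l, (P l • ω + Q l • ϑ) - (P k • ω + Q k • ϑ) = (P l - P k) • ω + (Q l - Q k) • ϑ := by
    intro k l; simp only [sub_smul]; abel
  refine ⟨fun k => P k • ω + Q k • ϑ, ?_, ?_⟩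
  · intro k l hkl
    simp only [hsub]
    have := cl_pq hω hϑ ho (hL k l hkl).1 (hL k l hkl).2 (p' := 0) (q' := 1) (L' := 1) one_pos (by norm_num)
      (φ := Real.pi / 2 + ψ) (by linarith) ?_
    · simpa using this
    · rw [hcos1]
      fin_cases k <;> fin_cases l <;> simp [P, Q, Lm] at hkl ⊢ <;> nlinarith
  · intro k l l' hl hl'
    simp only [hsub]
    refine (cl_pq hω hϑ ho (hL k l hl.symm).1 (hL k l hl.symm).2 (hL k l' hl'.symm).1 (hL k l' hl'.symm).2
      (by linarith) ?_).2
    rw [hcos2]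
    fin_cases k <;> fin_cases l <;> fin_cases l' <;> simp [P, Q, Lm] at hl hl' ⊢ <;> nlinarith

end Cluster

lemma cl_main {d : ℕ} (hd : 2 ≤ d) {ι : Type*} [DecidableEq ι] (P : Finset ι) (x ϑ : ι → Eu d)
    {ρ σ ψ : ℝ} (hϑ : ∀ b ∈ P, ‖ϑ b‖ = 1)
    (hne : ∀ b ∈ P, ∀ b' ∈ P, b ≠ b' → x b' - x b ≠ 0)
    (hang : ∀ b ∈ P, ∀ b' ∈ P, b ≠ b' → InnerProductGeometry.angle (x b' - x b) (ϑ b) < ρ)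
    (hψ0 : 0 < ψ) (hψ1 : ψ ≤ Real.pi / 3) (hσψ : σ < ψ) (h1 : ρ + ψ + 2 * σ ≤ Real.pi / 2)
    (h2 : ρ + σ ≤ Real.pi / 2) :
    ∃ S : Finset (Eu d), S.card = 3 * P.card ∧ ∀ x₀ ∈ S, ∀ x₁ ∈ S, ∀ x₂ ∈ S, x₁ ≠ x₀ → x₂ ≠ x₀ →
      InnerProductGeometry.angle (x₁ - x₀) (x₂ - x₀) < Real.pi - 2 * σ := by
  have hex : ∀ b ∈ P, ∃ e : Fin 3 → Eu d, (∀ k l, k ≠ l → e l - e k ≠ 0 ∧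
      InnerProductGeometry.angle (e l - e k) (ϑ b) ≤ Real.pi / 2 + ψ) ∧
      ∀ k l l', l ≠ k → l' ≠ k → 
        InnerProductGeometry.angle (e l - e k) (e l' - e k) ≤ Real.pi - 2 * ψ := by
    intro b hb
    obtain ⟨ω, hω, ho⟩ : ∃ ω : Eu d, ‖ω‖ = 1 ∧ ⟪ω, ϑ b⟫ = 0 := by
      have hfr : 0 < Module.finrank ℝ (Submodule.span ℝ {ϑ b})ᗮ := by
        have := Submodule.finrank_add_finrank_orthogonal (Submodule.span ℝ {ϑ b})
        have h1 := finrank_span_singleton (K := ℝ) (v := ϑ b) (by have := hϑ b hb; rintro h; rw [h] at this; simp at this)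
        rw [finrank_euclideanSpace_fin] at this
        omega
      have := Module.finrank_pos_iff.1 hfr
      obtain ⟨w, hw⟩ := exists_ne (0 : (Submodule.span ℝ {ϑ b})ᗮ)
      have hw0 : (w : Eu d) ≠ 0 := by simpa using hw
      refine ⟨(‖(w : Eu d)‖⁻¹ : ℝ) • (w : Eu d), by rw [norm_smul]; simp [hw0], ?_⟩
      rw [inner_smul_left, Submodule.mem_orthogonal_singleton_iff_inner_left.1 w.2]; simp
    exact cl_tri hω (hϑ b hb) ho hψ0 hψ1
  choose! e he1 he2 using hex
  refine cl_perturb P x e _ hne (fun b hb k l hkl => (he1 b hb k l hkl).1) ?_ ?_ ?_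
  · intro b hb b' hb' b'' hb'' hb1 hb2
    have := InnerProductGeometry.angle_le_angle_add_angle (x b' - x b) (ϑ b) (x b'' - x b)
    rw [InnerProductGeometry.angle_comm (ϑ b)] at this
    linarith [hang b hb b' hb' hb1.symm, hang b hb b'' hb'' hb2.symm]
  · intro b hb b' hb' hb1 k l hkl
    have := InnerProductGeometry.angle_le_angle_add_angle (e b l - e b k) (ϑ b) (x b' - x b)
    rw [InnerProductGeometry.angle_comm (ϑ b)] at this
    linarith [hang b hb b' hb' hb1.symm, (he1 b hb k l hkl).2]
  · intro b hb k l l' hl hl'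
    linarith [he2 b hb k l l' hl hl']

lemma qf_contra {d q : ℕ} {σ' : ℝ} (hσ : 0 < σ')
    (hq : ∀ S : Finset (EuclideanSpace ℝ (Fin d)), S.card = q →
      ∃ x₀ ∈ S, ∃ x₁ ∈ S, ∃ x₂ ∈ S, ∃ θ : EuclideanSpace ℝ (Fin d), ‖θ‖ = 1 ∧
        x₁ ∈ oneSidedCone x₀ θ σ' ∧ x₂ ∈ oneSidedCone x₀ (-θ) σ')
    (S : Finset (Eu d)) (hS : q ≤ S.card)
    (h : ∀ x₀ ∈ S, ∀ x₁ ∈ S, ∀ x₂ ∈ S, x₁ ≠ x₀ → x₂ ≠ x₀ →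
      InnerProductGeometry.angle (x₁ - x₀) (x₂ - x₀) < Real.pi - 2 * Real.arcsin σ') : False := by
  obtain ⟨S', hS', hc⟩ := Finset.exists_subset_card_eq hS
  obtain ⟨x₀, h0, x₁, h1, x₂, h2, θ, hθ, hx1, hx2⟩ := hq S' hc
  obtain ⟨hn1, ha1⟩ := gm_mem_cone hθ hσ hx1
  obtain ⟨hn2, ha2⟩ := gm_mem_cone (by simpa using hθ) hσ hx2
  have h3 := h x₀ (hS' h0) x₁ (hS' h1) x₂ (hS' h2) (sub_ne_zero.1 hn1) (sub_ne_zero.1 hn2)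
  have hθ0 : θ ≠ 0 := by rintro rfl; simp at hθ
  have h4 := InnerProductGeometry.angle_self_neg_of_nonzero hθ0
  have h5 := InnerProductGeometry.angle_le_angle_add_angle θ (x₁ - x₀) (-θ)
  have h6 := InnerProductGeometry.angle_le_angle_add_angle (x₁ - x₀) (x₂ - x₀) (-θ)
  rw [InnerProductGeometry.angle_comm θ (x₁ - x₀)] at h5
  linarith

lemma proj_unit {n d : ℕ} (hd : 0 < d) {W : Submodule ℝ (Eu n)} (Φ : W ≃ₗᵢ[ℝ] Eu d) {θ : Eu n}
    (hθ : ‖θ‖ = 1) {ρ : ℝ} (h0 : 0 ≤ ρ) (hρ : ρ ≤ Real.pi / 2) :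
    ∃ ϑ : Eu d, ‖ϑ‖ = 1 ∧ ∀ u : W, u ≠ 0 → InnerProductGeometry.angle (u : Eu n) θ < ρ →
      InnerProductGeometry.angle (Φ u) ϑ < ρ := by
  have hpi := Real.pi_pos
  set w : W := W.orthogonalProjectionOnto θ with hw
  have hin : ∀ u : W, ⟪(u : Eu n), θ⟫ = ⟪u, w⟫ := by
    intro u
    rw [hw, Submodule.inner_orthogonalProjectionOnto_eq_of_mem_left]
  have hθ0 : θ ≠ 0 := by rintro rfl; simp at hθ
  by_cases hw0 : w = 0
  · have : Nonempty (Fin d) := ⟨⟨0, hd⟩⟩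
    obtain ⟨v, hv⟩ := exists_norm_eq (Eu d) zero_le_one
    refine ⟨v, hv, fun u hu hlt => ?_⟩
    exfalso
    have h1 := gm_inner_gt (by simpa using hu) hθ0 (by linarith) hlt
    rw [hin, hw0, inner_zero_right] at h1
    have : 0 ≤ Real.cos ρ := Real.cos_nonneg_of_mem_Icc ⟨by linarith, hρ⟩
    have : 0 ≤ Real.cos ρ * (‖(u : Eu n)‖ * ‖θ‖) := by positivity
    linarith
  · have hwn : 0 < ‖w‖ := norm_pos_iff.2 hw0
    have hw1 : ‖w‖ ≤ 1 := by
      rw [← hθ]; exact Submodule.norm_orthogonalProjectionOnto_apply_le W θ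
    refine ⟨(‖w‖⁻¹) • Φ w, ?_, fun u hu hlt => ?_⟩
    · rw [norm_smul, Φ.norm_map, norm_inv, norm_norm]; field_simp
    · rw [InnerProductGeometry.angle_smul_right_of_pos _ _ (by positivity)]
      refine gm_angle_lt (by simpa using hu) (by simpa using hw0) h0 ?_
      rw [Φ.inner_map_map, Φ.norm_map, Φ.norm_map, ← hin]
      have h1 := gm_inner_gt (by simpa using hu) hθ0 (by linarith) hlt
      have h2 : 0 ≤ Real.cos ρ := Real.cos_nonneg_of_mem_Icc ⟨by linarith, hρ⟩
      refine lt_of_le_of_lt ?_ h1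
      rw [hθ]
      gcongr
      rfl

lemma d2_core {n d K q : ℕ} {α t c : ℝ} (hd : 2 ≤ d) (hdn : d ≤ n) (hα0 : 0 < α) (hα1 : α ≤ 1) (hc : 0 < c)
    (ht1 : 1 ≤ t) (hT : Real.arcsin (α / (2 * t)) + Real.arcsin (1 / t) ≤ Real.arcsin (α / 2))
    (hq : ∀ S : Finset (EuclideanSpace ℝ (Fin d)), S.card = q →
      ∃ x₀ ∈ S, ∃ x₁ ∈ S, ∃ x₂ ∈ S, ∃ θ : EuclideanSpace ℝ (Fin d), ‖θ‖ = 1 ∧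
        x₁ ∈ oneSidedCone x₀ θ (α / (2 * t)) ∧ x₂ ∈ oneSidedCone x₀ (-θ) (α / (2 * t)))
    (hK : ∃ W : Fin K → Submodule ℝ (EuclideanSpace ℝ (Fin n)),
      (∀ j, Module.finrank ℝ (W j) = d) ∧
      ∀ V : Submodule ℝ (EuclideanSpace ℝ (Fin n)), Module.finrank ℝ V = d →
        ∃ j : Fin K, ∀ x, coneX x (W j) (α / 2) ⊆ coneX x V α)
    (μ : Measure (Eu n)) [IsFiniteMeasure μ] {x : Eu n} {r : ℝ} {ℬ : Finset (Eu n × ℝ)}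
    (hr : 0 < r) (hB : BallColl n d K q t x r ℬ)
    (hM : ∀ B ∈ ℬ, c * μ.real (closedBall x (3 * r)) < μ.real (closedBall B.1 B.2))
    (hA : ∀ B ∈ ℬ, ∃ y ∈ closedBall B.1 B.2, ConeBound d μ α (2 * c) y (2 * r)) : False := by
  obtain ⟨ht2, hσ0, hσβ, hσβa, haA, -, -, -, -⟩ := tl_facts hα0 hα1 ht1 hT
  have hApi := Real.arcsin_le_pi_div_two α
  have hpi := Real.pi_pos
  set σ := Real.arcsin (α / (2 * t)) with hσ
  set β := Real.arcsin (1 / (2 * t)) with hβ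
  set a := Real.arcsin (α / 2) with ha
  set A := Real.arcsin α with hAA
  have hσ' : 0 < α / (2 * t) := by positivity
  have hq0 : 0 < q := by
    rcases Nat.eq_zero_or_pos q with h | h
    · obtain ⟨x₀, h0, -⟩ := hq ∅ (by simp [h])
      simp at h0
    · exact h
  have hB0 : ℬ.Nonempty := by
    by_contra h
    rw [Finset.not_nonempty_iff_eq_empty] at h
    obtain ⟨V, hV⟩ : ∃ V : Submodule ℝ (Eu n), Module.finrank ℝ V = d := by
      obtain ⟨f, hf⟩ := exists_linearIndependent_of_le_finrank (R := ℝ) (M := Eu n) (n := d)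
        (by rw [finrank_euclideanSpace_fin]; exact hdn)
      refine ⟨Submodule.span ℝ (Set.range f), ?_⟩
      rw [finrank_span_eq_card hf, Fintype.card_fin]
    obtain ⟨z, hz⟩ := hB.hits ∅ (by simp) (by simp [h]) V hV
    simp at hz
    omega
  choose! y hy θ V hθ hV hcone using hA
  obtain ⟨W, hW, hWn⟩ := hK
  have hcol : ∀ B ∈ ℬ, ∃ j : Fin K, ∀ x, coneX x (W j) (α / 2) ⊆ coneX x (V B) α :=
    fun B hB => hWn _ (hV B hB)
  have hKne : Nonempty (Fin K) := by
    obtain ⟨B, hB⟩ := hB0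
    exact ⟨(hcol B hB).choose⟩
  choose! j hj using hcol
  obtain ⟨j₀, hj₀⟩ : ∃ j₀, ℬ.card ≤ K * (ℬ.filter (fun B => j B = j₀)).card := by
    by_contra hcon
    push Not at hcon
    have h1 := Finset.sum_lt_sum_of_nonempty (s := (Finset.univ : Finset (Fin K)))
      Finset.univ_nonempty (fun i _ => hcon i)
    rw [← Finset.mul_sum, ← Finset.card_eq_sum_card_fiberwise (by intro x _; simp)] at h1
    simp at h1
  obtain ⟨z, hz⟩ := hB.hits _ (Finset.filter_subset _ _) hj₀ (W j₀) (hW j₀)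
  set S := ((ℬ.filter (fun B => j B = j₀)).filter (fun B => HitsB (W j₀) z B)) with hS
  have hSB : ∀ B ∈ S, B ∈ ℬ ∧ j B = j₀ ∧ HitsB (W j₀) z B := by
    intro B hB
    simpa [hS, and_assoc] using hB
  have hp : ∀ B ∈ S, ∃ w : W j₀, (w : Eu n) + z ∈ closedBall B.1 B.2 := by
    intro B hB
    obtain ⟨p, ⟨w, hw, rfl⟩, hp⟩ := (hSB B hB).2.2
    exact ⟨⟨w, hw⟩, hp⟩
  choose! w hw using hp
  have hsep : ∀ B ∈ ℬ, ∀ B' ∈ ℬ, B ≠ B' → 2 * t * (B.2 + B'.2) < ‖B'.1 - B.1‖ := by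
    intro B hb B' hb' hne
    exact gm_sep ht1 (hB.sub B hb).1 (hB.sub B' hb').1 (hB.disj B hb B' hb' hne)
  have hwne : ∀ B ∈ S, ∀ B' ∈ S, B ≠ B' → w B' - w B ≠ 0 := by
    intro B hb B' hb' hne h
    have := (gm_hit1 ht1 (hB.sub B (hSB B hb).1).1 (hB.sub B' (hSB B' hb').1).1
      (hsep B (hSB B hb).1 B' (hSB B' hb').1 hne) (hw B hb) (hw B' hb')).1
    apply this
    rw [sub_eq_zero.1 h]; simp
  have hang : ∀ B ∈ S, ∀ B' ∈ S, B ≠ B' → ∀ z' ∈ closedBall B'.1 B'.2, z' - y B ≠ 0 ∧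
      InnerProductGeometry.angle (z' - y B) ((w B' - w B : W j₀) : Eu n) ≤ 2 * β := by
    intro B hb B' hb' hne z' hz'
    have h1 := hsep B (hSB B hb).1 B' (hSB B' hb').1 hne
    have h2 := gm_hit2 ht1 (hB.sub B (hSB B hb).1).1 (hB.sub B' (hSB B' hb').1).1 h1
      (hw B hb) (hw B' hb') (hy B (hSB B hb).1) hz'
    refine ⟨(gm_hit1 ht1 (hB.sub B (hSB B hb).1).1 (hB.sub B' (hSB B' hb').1).1 h1
      (hy B (hSB B hb).1) hz').1, ?_⟩
    rw [add_sub_add_right_eq_sub] at h2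
    exact h2
  have hcx : ∀ B ∈ S, ∀ B' ∈ S, B ≠ B' → closedBall B'.1 B'.2 ⊆ coneX (y B) (V B) α := by
    intro B hb B' hb' hne z' hz'
    obtain ⟨h1, h2⟩ := hang B hb B' hb' hne z' hz'
    refine hj B (hSB B hb).1 (y B) ?_
    rw [(hSB B hb).2.1]
    refine gm_mem_X (w B' - w B).2 (fun h => hwne B hb B' hb' hne (Subtype.ext h)) h1 (by linarith) (by linarith) ?_
    linarith
  have hxr : ∀ B ∈ ℬ, closedBall B.1 B.2 ⊆ closedBall x r := fun B hb => (hB.sub B hb).2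
  obtain ⟨P, hPS, hPc, hP⟩ := cw_indep S (fun b b' => b ∈ S ∧ b' ≠ b ∧
    Disjoint (closedBall b'.1 b'.2) (almostHalfSpace (y b) (θ b) α)) (by
      rintro b b₁ hb₁ b₂ hb₂ ⟨hb, h1, h1'⟩ ⟨-, h2, h2'⟩
      by_contra hne
      have hbB := (hSB b hb).1
      have hyx := hxr b hbB (hy b hbB)
      have hsub : closedBall b₁.1 b₁.2 ∪ closedBall b₂.1 b₂.2 ⊆
          (closedBall (y b) (2 * r) ∩ coneX (y b) (V b) α) \ almostHalfSpace (y b) (θ b) α := by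
        have hh : ∀ b' ∈ S, b' ≠ b → Disjoint (closedBall b'.1 b'.2) (almostHalfSpace (y b) (θ b) α) →
          closedBall b'.1 b'.2 ⊆ (closedBall (y b) (2 * r) ∩ coneX (y b) (V b) α) \ almostHalfSpace (y b) (θ b) α := by
          intro b' hb' hne' hd' z' hz'
          refine ⟨⟨?_, hcx b hb b' hb' hne'.symm hz'⟩, disjoint_left.1 hd' hz'⟩
          have h3 := hxr b' (hSB b' hb').1 hz'
          rw [mem_closedBall] at h3 hyx ⊢
          have := dist_triangle_right z' (y b) x
          linarith
        exact union_subset (hh _ hb₁ h1 h1') (hh _ hb₂ h2 h2')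
      have hdj : Disjoint (closedBall b₁.1 b₁.2) (closedBall b₂.1 b₂.2) := by
        have h4 := hB.disj _ (hSB _ hb₁).1 _ (hSB _ hb₂).1 hne
        have h5 := (hB.sub _ (hSB _ hb₁).1).1
        have h6 := (hB.sub _ (hSB _ hb₂).1).1
        exact h4.mono (closedBall_subset_closedBall (by nlinarith)) (closedBall_subset_closedBall (by nlinarith))
      have h7 := measureReal_mono (μ := μ) hsub
      rw [measureReal_union hdj measurableSet_closedBall] at h7
      have h8 := hcone b hbB
      have h9 : μ.real (closedBall (y b) (2 * r)) ≤ μ.real (closedBall x (3 * r)) := by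
        refine measureReal_mono (closedBall_subset_closedBall' ?_)
        rw [mem_closedBall] at hyx
        linarith
      have h10 := hM _ (hSB _ hb₁).1
      have h11 := hM _ (hSB _ hb₂).1
      nlinarith)
  set ρ := Real.pi / 2 - A + 2 * β with hρ
  let Φ : W j₀ ≃ₗᵢ[ℝ] Eu d := ((stdOrthonormalBasis ℝ (W j₀)).reindex (finCongr (hW j₀))).repr
  have hϑ : ∀ b ∈ P, ∃ ϑ : Eu d, ‖ϑ‖ = 1 ∧ ∀ u : W j₀, u ≠ 0 →
      InnerProductGeometry.angle (u : Eu n) (θ b) < ρ → InnerProductGeometry.angle (Φ u) ϑ < ρ := by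
    intro b hb
    exact proj_unit (by omega) Φ (hθ b (hSB b (hPS hb)).1) (by linarith) (by linarith)
  choose! ϑ hϑ1 hϑ2 using hϑ
  obtain ⟨T, hTc, hTa⟩ := cl_main hd P (fun b => Φ (w b)) ϑ (ρ := ρ) (σ := σ) (ψ := 3 / 2 * β) hϑ1 (by
      intro b hb b' hb' hne
      rw [← map_sub]
      exact fun h => hwne b (hPS hb) b' (hPS hb') hne (Φ.map_eq_zero_iff.1 h)) (by
      intro b hb b' hb' hne
      rw [← map_sub]
      refine hϑ2 b hb _ (hwne b (hPS hb) b' (hPS hb') hne) ?_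
      have h1 := hP b hb b' hb' hne
      simp only [hPS hb, true_and, not_and, Set.not_disjoint_iff] at h1
      obtain ⟨z', hz', hzH⟩ := h1 hne.symm
      have h2 := gm_mem_H (hθ b (hSB b (hPS hb)).1) hα0 hα1 hzH
      have h3 := (hang b (hPS hb) b' (hPS hb') hne z' hz').2
      have h4 := InnerProductGeometry.angle_le_angle_add_angle ((w b' - w b : W j₀) : Eu n) (z' - y b) (θ b)
      rw [InnerProductGeometry.angle_comm _ (z' - y b)] at h4
      linarith) (by linarith) (by linarith) (by linarith) (by linarith) (by linarith)
  exact qf_contra hσ' hq T (by omega) hTa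

lemma qf_three {d q : ℕ} (hd : 0 < d) {σ' : ℝ} (hσ : 0 < σ')
    (hq : ∀ S : Finset (EuclideanSpace ℝ (Fin d)), S.card = q →
      ∃ x₀ ∈ S, ∃ x₁ ∈ S, ∃ x₂ ∈ S, ∃ θ : EuclideanSpace ℝ (Fin d), ‖θ‖ = 1 ∧
        x₁ ∈ oneSidedCone x₀ θ σ' ∧ x₂ ∈ oneSidedCone x₀ (-θ) σ') : 3 ≤ q := by
  have : Nonempty (Fin d) := ⟨⟨0, hd⟩⟩
  have : Infinite (Eu d) := Module.Free.infinite ℝ (Eu d)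
  obtain ⟨S, hS⟩ := Infinite.exists_subset_card_eq (Eu d) q
  obtain ⟨x₀, h0, x₁, h1, x₂, h2, θ, hθ, hx1, hx2⟩ := hq S hS
  obtain ⟨hn1, ha1⟩ := gm_mem_cone hθ hσ hx1
  obtain ⟨hn2, ha2⟩ := gm_mem_cone (by simpa using hθ) hσ hx2
  have hθ0 : θ ≠ 0 := by rintro rfl; simp at hθ
  have hne : x₁ ≠ x₂ := by
    rintro rfl
    rw [InnerProductGeometry.angle_neg_right] at ha2
    have := Real.arcsin_le_pi_div_two σ'
    linarith
  rw [← hS]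
  have h3 : ({x₀, x₁, x₂} : Finset (Eu d)).card = 3 := by
    rw [Finset.card_eq_three]
    exact ⟨x₀, x₁, x₂, (sub_ne_zero.1 hn1).symm, (sub_ne_zero.1 hn2).symm, hne, rfl⟩
  rw [← h3]
  apply Finset.card_le_card
  intro y hy
  simp at hy
  rcases hy with rfl | rfl | rfl <;> assumption

/-- two points in the translate of a line -/
lemma hits_line {n : ℕ} {v z : Eu n} {B : Eu n × ℝ} (h : HitsB (Submodule.span ℝ {v}) z B) :
    ∃ a : ℝ, a • v + z ∈ closedBall B.1 B.2 := by
  obtain ⟨p, ⟨w, hw, rfl⟩, hp⟩ := h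
  obtain ⟨a, rfl⟩ := Submodule.mem_span_singleton.1 hw
  exact ⟨a, hp⟩

lemma sph_null {n K q : ℕ} {t c : ℝ} (hc : 0 < c) (ht : 2 < t) (hK : 1 ≤ K) (hq : 3 ≤ q)
    (μ : Measure (Eu n)) [IsFiniteMeasure μ]
    (hμ : ∀ᵐ x ∂μ, ∀ R > (0 : ℝ), ∃ r : ℝ, 0 < r ∧ r < R ∧
      ∃ ℬ : Finset (Eu n × ℝ), BallColl n 1 K q t x r ℬ ∧
        (∀ B ∈ ℬ, ENNReal.ofReal c * μ (closedBall x (3 * r)) < μ (closedBall B.1 B.2)))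
    (y₀ : Eu n) {R : ℝ} (hR : 0 < R) : μ (sphere y₀ R) = 0 := by
  by_contra hne0
  set S := sphere y₀ R with hS
  obtain ⟨κ, hκ0, hκ1, hκc⟩ : ∃ κ : ℝ, 0 < κ ∧ κ < 1 ∧ κ < c :=
    ⟨min c 1 / 2, by positivity, by have := min_le_right c 1; linarith, by have := min_le_left c 1; linarith⟩
  have hne : μ.restrict S ≠ 0 := by rwa [Ne, Measure.restrict_eq_zero]
  have hdens := Besicovitch.ae_tendsto_measure_inter_div μ S
  have : (ae (μ.restrict S)).NeBot := ae_neBot.2 hne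
  obtain ⟨x, ⟨hx1, hx2⟩, hxS⟩ := ((hdens.and (ae_restrict_of_ae hμ)).and
    (ae_restrict_mem (isClosed_sphere.measurableSet))).exists
  have hlt : ENNReal.ofReal (1 - κ) < 1 := by
    rw [ENNReal.ofReal_lt_one]; linarith
  have hev := hx1.eventually_const_lt hlt
  rw [eventually_nhdsWithin_iff, Metric.eventually_nhds_iff] at hev
  obtain ⟨ε, hε, hev⟩ := hev
  obtain ⟨r, hr0, hrR, ℬ, hB, hB2⟩ := hx2 (min (ε / 3) (R / 2)) (by positivity)
  have hr1 : 3 * r < ε := by have := hrR.trans_le (min_le_left _ _); linarith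
  have hr2 : r < R / 2 := hrR.trans_le (min_le_right _ _)
  have hd := hev (y := 3 * r) (by rw [Real.dist_eq, sub_zero, abs_of_pos (by linarith)]; exact hr1) (by simp; exact hr0)
  have hM0 : μ (closedBall x (3 * r)) ≠ 0 := by
    intro h0
    rw [measure_mono_null inter_subset_right h0] at hd
    simp at hd
  have hmeet : ∀ B ∈ ℬ, ∃ s ∈ closedBall B.1 B.2, s ∈ S := by
    intro B hBm
    by_contra hemp
    push Not at hemp
    have hB3 := ENNReal.toReal_strict_mono (measure_ne_top _ _) (hB2 B hBm)
    rw [ENNReal.toReal_mul, ENNReal.toReal_ofReal hc.le] at hB3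
    change c * μ.real _ < μ.real _ at hB3
    rw [ENNReal.lt_div_iff_mul_lt (Or.inl hM0) (Or.inl (measure_ne_top _ _))] at hd
    have hd' := ENNReal.toReal_strict_mono (measure_ne_top _ _) hd
    rw [ENNReal.toReal_mul, ENNReal.toReal_ofReal (by linarith)] at hd'
    change (1 - κ) * μ.real _ < μ.real _ at hd'
    have hEs : closedBall B.1 B.2 ⊆ closedBall x (3 * r) :=
      (hB.sub B hBm).2.trans (closedBall_subset_closedBall (by linarith))
    have h1 : μ.real (S ∩ closedBall x (3 * r)) ≤ μ.real (closedBall x (3 * r) \ closedBall B.1 B.2) := by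
      refine measureReal_mono ?_
      rintro z ⟨hz1, hz2⟩
      exact ⟨hz2, fun hzE => hemp z hzE hz1⟩
    rw [measureReal_sdiff hEs measurableSet_closedBall] at h1
    have : 0 ≤ μ.real (closedBall x (3 * r)) := measureReal_nonneg
    nlinarith
  have hv : ‖x - y₀‖ = R := by
    rw [← dist_eq_norm]; exact mem_sphere.1 hxS
  have hv0 : x - y₀ ≠ 0 := by rw [← norm_pos_iff, hv]; exact hR
  obtain ⟨z, hz⟩ := hB.hits ℬ subset_rfl (by nlinarith) (Submodule.span ℝ {x - y₀}) (finrank_span_singleton hv0)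
  obtain ⟨B, hBm, B', hBm', hBB⟩ := Finset.one_lt_card.1 (by omega : 1 < (ℬ.filter (fun B => HitsB (Submodule.span ℝ {x - y₀}) z B)).card)
  simp only [Finset.mem_filter] at hBm hBm'
  obtain ⟨k, hk⟩ := hits_line hBm.2
  obtain ⟨k', hk'⟩ := hits_line hBm'.2
  obtain ⟨s, hs, hsS⟩ := hmeet B hBm.1
  obtain ⟨s', hs', hsS'⟩ := hmeet B' hBm'.1
  have hr := (hB.sub B hBm.1).1
  have hr' := (hB.sub B' hBm'.1).1
  have hsep := gm_sep (by linarith : 1 ≤ t) hr hr' (hB.disj _ hBm.1 _ hBm'.1 hBB)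
  have h1 := gm_hit2 (by linarith) hr hr' hsep hk hk' hs hs'
  have h2 := (gm_hit1 (by linarith) hr hr' hsep hs hs').1
  have h2' := (gm_hit1 (by linarith) hr hr' hsep hk hk').1
  rw [add_sub_add_right_eq_sub, ← sub_smul] at h1 h2'
  have hpi := Real.pi_pos
  have hβ : Real.arcsin (1 / (2 * t)) ≤ Real.pi / 6 := by
    rw [← Real.arcsin_sin (x := Real.pi / 6) (by linarith) (by linarith), Real.sin_pi_div_six]
    apply Real.arcsin_le_arcsin
    rw [div_le_div_iff₀ (by linarith) (by norm_num)]; linarith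
  have h3 := gm_inner_ge (φ := Real.pi / 3) (by linarith) (h1.trans (by linarith))
  rw [Real.cos_pi_div_three, norm_smul, inner_smul_right, hv] at h3
  have hkk : 0 < |k' - k| := by
    rw [abs_pos]; intro h; rw [h, zero_smul] at h2'; exact h2' rfl
  have hss : 0 < ‖s' - s‖ := norm_pos_iff.2 h2
  have e1 : ‖s - y₀‖ ^ 2 = R ^ 2 := by rw [← dist_eq_norm, mem_sphere.1 hsS]
  have e2 : ‖s' - y₀‖ ^ 2 = R ^ 2 := by rw [← dist_eq_norm, mem_sphere.1 hsS']
  have e3 : 2 * ⟪s' - s, x - y₀⟫ = - ⟪s' - s, (s' - x) + (s - x)⟫ := by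
    have e4 : ‖s' - y₀‖ ^ 2 - ‖s - y₀‖ ^ 2 = ⟪s' - s, (s' - y₀) + (s - y₀)⟫ := by
      have : s' - s = (s' - y₀) - (s - y₀) := by abel
      rw [this, inner_sub_left, inner_add_right, inner_add_right, real_inner_self_eq_norm_sq,
        real_inner_self_eq_norm_sq, real_inner_comm (s - y₀)]
      ring
    have e5 : (s' - y₀) + (s - y₀) = (s' - x) + (s - x) + (x - y₀) + (x - y₀) := by abel
    rw [e1, e2, e5, inner_add_right, inner_add_right] at e4
    linarith
  have e6 : |⟪s' - s, (s' - x) + (s - x)⟫| ≤ ‖s' - s‖ * (2 * r) := by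
    refine (abs_real_inner_le_norm _ _).trans ?_
    gcongr
    refine (norm_add_le _ _).trans ?_
    have h4 := (hB.sub B hBm.1).2 hs
    have h5 := (hB.sub B' hBm'.1).2 hs'
    rw [mem_closedBall, dist_eq_norm] at h4 h5
    linarith
  have e7 : |⟪s' - s, x - y₀⟫| ≤ ‖s' - s‖ * r := by
    have : |2 * ⟪s' - s, x - y₀⟫| ≤ ‖s' - s‖ * (2 * r) := by rw [e3, abs_neg]; exact e6
    rw [abs_mul, abs_two] at this
    linarith
  have e8 : (k' - k) * ⟪s' - s, x - y₀⟫ ≤ |k' - k| * (‖s' - s‖ * r) := by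
    refine (le_abs_self _).trans ?_
    rw [abs_mul]
    gcongr
  rw [Real.norm_eq_abs] at h3
  have e9 : 1 / 2 * (‖s' - s‖ * (|k' - k| * R)) ≤ |k' - k| * (‖s' - s‖ * r) := h3.trans e8
  have e10 : 0 < |k' - k| * ‖s' - s‖ := by positivity
  nlinarith

lemma tri_sort {ι : Type*} (S : Finset ι) (h : 3 ≤ S.card) (g : ι → ℝ)
    (hg : ∀ a ∈ S, ∀ b ∈ S, a ≠ b → g a ≠ g b) :
    ∃ a ∈ S, ∃ b ∈ S, ∃ c ∈ S, g a < g b ∧ g b < g c := by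
  obtain ⟨a, ha, b, hb, c, hc, hab, hac, hbc⟩ := Finset.two_lt_card.1 h
  rcases lt_or_gt_of_ne (hg a ha b hb hab) with h1 | h1 <;>
  rcases lt_or_gt_of_ne (hg a ha c hc hac) with h2 | h2 <;>
  rcases lt_or_gt_of_ne (hg b hb c hc hbc) with h3 | h3
  · exact ⟨a, ha, b, hb, c, hc, h1, h3⟩
  · exact ⟨a, ha, c, hc, b, hb, h2, h3⟩
  · exact ⟨c, hc, a, ha, b, hb, h2, h1⟩
  · exact ⟨c, hc, a, ha, b, hb, h2, h1⟩
  · exact ⟨b, hb, a, ha, c, hc, h1, h2⟩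
  · exact ⟨b, hb, a, ha, c, hc, h1, h2⟩
  · exact ⟨b, hb, c, hc, a, ha, h3, h2⟩
  · exact ⟨c, hc, b, hb, a, ha, h3, h1⟩

lemma cdf_cont {X : Type*} [MeasurableSpace X] (μ : Measure X) [IsFiniteMeasure μ] {E : Set X}
    (hE : MeasurableSet E) {f : X → ℝ} (hf : Measurable f) {s₀ : ℝ} (h0 : μ (E ∩ f ⁻¹' {s₀}) = 0) :
    ContinuousAt (fun s => μ.real (E ∩ {x | f x ≤ s})) s₀ := by
  have hm : ∀ s, MeasurableSet (E ∩ {x | f x ≤ s}) := fun s =>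
    hE.inter (measurableSet_le hf measurable_const)
  have h1 : (fun s => μ.real (E ∩ {x | f x ≤ s})) =
      fun s => ∫ x, (E ∩ {x | f x ≤ s}).indicator (fun _ => (1 : ℝ)) x ∂μ := by
    funext s
    rw [integral_indicator (hm s)]
    simp
  rw [h1]
  refine continuousAt_of_dominated (bound := fun _ => 1) ?_ ?_ (integrable_const _) ?_
  · exact Eventually.of_forall fun s => ((measurable_const.indicator (hm s))).aestronglyMeasurable
  · refine Eventually.of_forall fun s => Eventually.of_forall fun x => ?_
    by_cases h : x ∈ E ∩ {x | f x ≤ s} <;> simp [Set.indicator, h]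
  · have : ∀ᵐ x ∂μ, x ∉ E ∩ f ⁻¹' {s₀} := by
      exact measure_eq_zero_iff_ae_notMem.1 h0
    filter_upwards [this] with x hx
    by_cases hxE : x ∈ E
    · have hne : f x ≠ s₀ := fun h => hx ⟨hxE, h⟩
      rcases lt_or_gt_of_ne hne with h | h
      · refine ContinuousAt.congr (f := fun _ => (1 : ℝ)) continuousAt_const ?_
        filter_upwards [lt_mem_nhds h] with s hs
        simp [Set.indicator, hxE, hs.le]
      · refine ContinuousAt.congr (f := fun _ => (0 : ℝ)) continuousAt_const ?_
        filter_upwards [gt_mem_nhds h] with s hs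
        simp [Set.indicator, hs]
    · refine ContinuousAt.congr (f := fun _ => (0 : ℝ)) continuousAt_const ?_
      filter_upwards with s
      simp [Set.indicator, hxE]

lemma eu1_dist (a b : Eu 1) : dist a b = |a 0 - b 0| := by
  rw [EuclideanSpace.dist_eq]
  simp [Real.sqrt_sq_eq_abs, Real.dist_eq]

lemma n1_core {K q : ℕ} {α t c κ : ℝ} (hα0 : 0 < α) (hc : 0 < c) (ht : 2 < t)
    (hK : 1 ≤ K) (hq : 3 ≤ q) (hκ : κ < c / 4)
    (μ : Measure (Eu 1)) [IsFiniteMeasure μ] (hnull : ∀ (y : Eu 1) (R : ℝ), 0 < R → μ (sphere y R) = 0)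
    {x : Eu 1} {r : ℝ} {ℬ : Finset (Eu 1 × ℝ)} {A : Set (Eu 1)}
    (hr : 0 < r) (hB : BallColl 1 1 K q t x r ℬ) (hM0 : 0 < μ.real (closedBall x (3 * r)))
    (hM : ∀ B ∈ ℬ, c * μ.real (closedBall x (3 * r)) < μ.real (closedBall B.1 B.2))
    (hE : ∀ E, MeasurableSet E → E ⊆ closedBall x (3 * r) →
        κ * μ.real (closedBall x (3 * r)) < μ.real E → (E ∩ A).Nonempty)
    (hA : ∀ y ∈ A, ∀ s, 0 < s → s ≤ 2 * r → ConeBound 1 μ α (c + c / 8) y s) : False := by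
  obtain ⟨z, hz⟩ := hB.hits ℬ subset_rfl (by nlinarith) ⊤ (by simp)
  have hcard : 3 ≤ ℬ.card := hq.trans (hz.trans (Finset.card_le_card (Finset.filter_subset _ _)))
  have hsep : ∀ B ∈ ℬ, ∀ B' ∈ ℬ, B ≠ B' → B.2 + B'.2 < |B'.1 0 - B.1 0| := by
    intro B hb B' hb' hne
    have h1 := (hB.sub B hb).1
    have h2 := (hB.sub B' hb').1
    have := gm_sep (by linarith : 1 ≤ t) h1 h2 (hB.disj B hb B' hb' hne)
    rw [← dist_eq_norm, eu1_dist] at this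
    nlinarith
  obtain ⟨L, hL, B, hBm, R, hR, hLB, hBR⟩ := tri_sort ℬ hcard (fun B => B.1 0) (by
    intro a ha b hb hne h
    have h1 := hsep a ha b hb hne
    have h2 := (hB.sub a ha).1
    have h3 := (hB.sub b hb).1
    simp only at h
    rw [h, sub_self, abs_zero] at h1
    linarith)
  have hmem : ∀ B : Eu 1 × ℝ, ∀ p ∈ closedBall B.1 B.2, |p 0 - B.1 0| ≤ B.2 := by
    intro B p hp
    rw [mem_closedBall, eu1_dist] at hp
    exact hp
  have hord : ∀ B ∈ ℬ, ∀ B' ∈ ℬ, B.1 0 < B'.1 0 → ∀ p ∈ closedBall B.1 B.2, ∀ p' ∈ closedBall B'.1 B'.2,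
      p 0 < p' 0 := by
    intro B hb B' hb' hlt p hp p' hp'
    have h1 := hsep B hb B' hb' (by rintro rfl; exact lt_irrefl _ hlt)
    have h2 := abs_le.1 (hmem B p hp)
    have h3 := abs_le.1 (hmem B' p' hp')
    rw [abs_of_pos (by linarith)] at h1
    linarith
  set M := μ.real (closedBall x (3 * r)) with hMM
  set b := closedBall B.1 B.2 with hb
  have hf : Measurable (fun p : Eu 1 => p 0) := by fun_prop
  have hcont : Continuous (fun s => μ.real (b ∩ {p : Eu 1 | p 0 ≤ s})) := by
    rw [continuous_iff_continuousAt]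
    intro s
    refine cdf_cont μ measurableSet_closedBall hf ?_
    refine measure_mono_null (t := sphere (EuclideanSpace.single 0 (s - 1)) 1) ?_ (hnull _ _ one_pos)
    rintro p ⟨-, hp⟩
    have hp : p 0 = s := hp
    rw [mem_sphere, eu1_dist, hp]
    simp
  have hlo : μ.real (b ∩ {p : Eu 1 | p 0 ≤ B.1 0 - B.2 - 1}) = 0 := by
    have : b ∩ {p : Eu 1 | p 0 ≤ B.1 0 - B.2 - 1} = ∅ := by
      rw [eq_empty_iff_forall_notMem]
      rintro p ⟨hp, hp2⟩
      have hp2 : p 0 ≤ B.1 0 - B.2 - 1 := hp2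
      have := abs_le.1 (hmem B p hp)
      linarith
    rw [this]; simp
  have hhi : μ.real (b ∩ {p : Eu 1 | p 0 ≤ B.1 0 + B.2}) = μ.real b := by
    congr 1
    rw [inter_eq_left]
    intro p hp
    have := abs_le.1 (hmem B p hp)
    change p 0 ≤ _
    linarith
  have hBr := (hB.sub B hBm).1
  have hBM := hM B hBm
  have hivt : ∀ v, 0 ≤ v → v ≤ μ.real b → ∃ s, μ.real (b ∩ {p : Eu 1 | p 0 ≤ s}) = v := by
    intro v h1 h2
    have := intermediate_value_Icc (by linarith : B.1 0 - B.2 - 1 ≤ B.1 0 + B.2) hcont.continuousOn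
    rw [hlo, hhi] at this
    obtain ⟨s, -, hs⟩ := this ⟨h1, h2⟩
    exact ⟨s, hs⟩
  obtain ⟨τ₁, hτ₁⟩ := hivt (c * M / 4) (by positivity) (by nlinarith)
  obtain ⟨τ₂, hτ₂⟩ := hivt (c * M / 2) (by positivity) (by nlinarith)
  have hms : ∀ s, MeasurableSet (b ∩ {p : Eu 1 | p 0 ≤ s}) := fun s =>
    measurableSet_closedBall.inter (measurableSet_le hf measurable_const)
  have hb3 : ∀ B ∈ ℬ, closedBall B.1 B.2 ⊆ closedBall x (3 * r) := fun B hb =>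
    (hB.sub B hb).2.trans (closedBall_subset_closedBall (by linarith))
  obtain ⟨y, hyE, hyA⟩ := hE ((b ∩ {p : Eu 1 | p 0 ≤ τ₂}) \ (b ∩ {p : Eu 1 | p 0 ≤ τ₁}))
    ((hms _).diff (hms _)) (sdiff_subset.trans (inter_subset_left.trans (hb3 B hBm))) (by
      have := le_measureReal_sdiff (μ := μ) (s₁ := b ∩ {p : Eu 1 | p 0 ≤ τ₂}) (s₂ := b ∩ {p : Eu 1 | p 0 ≤ τ₁})
      rw [hτ₁, hτ₂] at this
      nlinarith)
  have hyb : y ∈ b := hyE.1.1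
  have hy2 : y 0 ≤ τ₂ := hyE.1.2
  have hy1 : τ₁ < y 0 := by
    by_contra h
    exact hyE.2 ⟨hyb, not_lt.1 h⟩
  have hyx := (hB.sub B hBm).2 hyb
  rw [mem_closedBall] at hyx
  obtain ⟨θ, V, hθ, hV, hcone⟩ := hA y hyA (2 * r) (by linarith) le_rfl
  have hVtop : V = ⊤ := Submodule.eq_top_of_finrank_eq (by rw [hV]; simp)
  have hle : μ.real (closedBall y (2 * r)) ≤ M :=
    measureReal_mono (closedBall_subset_closedBall' (by linarith))
  have hX : ∀ p : Eu 1, p ≠ y → p ∈ coneX y V α := by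
    intro p hp
    simp only [coneX, mem_ofPred_eq, hVtop]
    have : 0 < ‖p - y‖ := norm_pos_iff.2 (sub_ne_zero.2 hp)
    simp only [Submodule.top_coe, infDist_zero_of_mem (mem_univ _)]
    positivity
  have hin : ∀ p ∈ closedBall x r, p ∈ closedBall y (2 * r) := by
    intro p hp
    rw [mem_closedBall] at hp ⊢
    have := dist_triangle_right p y x
    linarith
  have hinner : ∀ p : Eu 1, ⟪p - y, θ⟫ = θ 0 * (p 0 - y 0) := by
    intro p
    simp [PiLp.inner_apply]
  have hkey : ∀ U D : Set (Eu 1), D ⊆ b → MeasurableSet D → (∃ B' ∈ ℬ, U = closedBall B'.1 B'.2 ∧ Disjoint U b) →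
      c * M / 4 ≤ μ.real D → (∀ p ∈ U ∪ D, p 0 ≠ y 0 ∧ θ 0 * (p 0 - y 0) ≤ 0) → False := by
    rintro U D hD hDm ⟨B', hB', rfl, hdis⟩ hDM hp
    have hsub : closedBall B'.1 B'.2 ∪ D ⊆ (closedBall y (2 * r) ∩ coneX y V α) \ almostHalfSpace y θ α := by
      intro p hpm
      obtain ⟨h1, h2⟩ := hp p hpm
      refine ⟨⟨hin p ?_, hX p (by rintro rfl; exact h1 rfl)⟩, ?_⟩
      · rcases hpm with h | h
        · exact (hB.sub _ hB').2 h
        · exact (hB.sub _ hBm).2 (hD h)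
      · simp only [almostHalfSpace, mem_ofPred_eq, hinner, not_lt]
        have : 0 ≤ α * ‖p - y‖ := by positivity
        linarith
    have h7 := measureReal_mono (μ := μ) hsub
    rw [measureReal_union (hdis.mono_right hD) hDm] at h7
    have := hM B' hB'
    nlinarith
  have hdisj : ∀ B' ∈ ℬ, B'.1 0 ≠ B.1 0 → Disjoint (closedBall B'.1 B'.2) b := by
    intro B' hB' hne
    rw [disjoint_left]
    intro p hp hp'
    rcases lt_or_gt_of_ne hne with h | h
    · exact lt_irrefl _ (hord _ hB' _ hBm h p hp p hp')
    · exact lt_irrefl _ (hord _ hBm _ hB' h p hp' p hp)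
  rcases le_total 0 (θ 0) with h | h
  · refine hkey _ (b ∩ {p : Eu 1 | p 0 ≤ τ₁}) inter_subset_left (hms _) ⟨L, hL, rfl, hdisj L hL hLB.ne⟩
      hτ₁.ge ?_
    intro p hp
    have : p 0 < y 0 := by
      rcases hp with hp | hp
      · exact hord _ hL _ hBm hLB p hp y hyb
      · exact lt_of_le_of_lt hp.2 hy1
    exact ⟨this.ne, by nlinarith⟩
  · refine hkey _ (b \ (b ∩ {p : Eu 1 | p 0 ≤ τ₂})) sdiff_subset (measurableSet_closedBall.diff (hms _))
      ⟨R, hR, rfl, hdisj R hR hBR.ne'⟩ ?_ ?_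
    · rw [measureReal_sdiff inter_subset_left (hms _), hτ₂]
      nlinarith
    intro p hp
    have : y 0 < p 0 := by
      rcases hp with hp | hp
      · exact hord _ hBm _ hR hBR y hyb p hp
      · refine lt_of_le_of_lt hy2 ?_
        by_contra h
        exact hp.2 ⟨hp.1, not_lt.1 h⟩
    exact ⟨this.ne', by nlinarith⟩

lemma lv_cont {n : ℕ} (μ : Measure (Eu n)) [IsFiniteMeasure μ]
    (hnull : ∀ (y : Eu n) (R : ℝ), μ (sphere y R) = 0) (E : Set (Eu n)) (hE : MeasurableSet E) (y : Eu n) :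
    Continuous (fun s => μ.real (E \ closedBall y s)) := by
  have h1 : (fun s => μ.real (E \ closedBall y s)) =
      fun s => μ.real E - μ.real (E ∩ {p | dist p y ≤ s}) := by
    funext s
    have h2 : E \ closedBall y s = E \ (E ∩ closedBall y s) := by ext p; simp
    rw [h2, measureReal_sdiff inter_subset_left (hE.inter measurableSet_closedBall)]
    rfl
  rw [h1]
  refine continuous_const.sub ?_
  rw [continuous_iff_continuousAt]
  intro s
  refine cdf_cont μ hE (by fun_prop) (measure_mono_null ?_ (hnull y s))
  rintro p ⟨-, hp⟩
  exact hp

lemma lv_level {n : ℕ} (μ : Measure (Eu n)) [IsFiniteMeasure μ]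
    (hnull : ∀ (y : Eu n) (R : ℝ), μ (sphere y R) = 0) (E : Set (Eu n)) (hE : MeasurableSet E) (y : Eu n)
    {ρ δ : ℝ} (hρ : 0 < ρ) (hM : 0 < μ.real E) (hδ1 : δ < 1) :
    ∃ s, 0 < s ∧ s ≤ ρ ∧ δ * μ.real E ≤ μ.real (E \ closedBall y s) ∧
      (s < ρ → μ.real (E \ closedBall y s) = δ * μ.real E) ∧
      ∀ s', 0 ≤ s' → s' ≤ ρ → δ * μ.real E ≤ μ.real (E \ closedBall y s') → s' ≤ s := by
  have hcont := lv_cont μ hnull E hE y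
  set G := fun s => μ.real (E \ closedBall y s) with hG
  have hG0 : G 0 = μ.real E := by
    simp only [hG]
    rw [measureReal_def, measureReal_def, measure_sdiff_null]
    have := hnull y 0
    simpa using this
  set T := Icc 0 ρ ∩ {s | δ * μ.real E ≤ G s} with hT
  have hTc : IsCompact T := isCompact_Icc.inter_right (isClosed_le continuous_const hcont)
  have hTn : T.Nonempty := ⟨0, ⟨le_rfl, hρ.le⟩, by
    change δ * μ.real E ≤ G 0
    rw [hG0]; nlinarith⟩
  obtain ⟨s, hs, hmax⟩ := hTc.exists_isGreatest hTn
  have hkey : s < ρ → G s ≤ δ * μ.real E := by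
    intro hlt
    by_contra hcon
    push Not at hcon
    have h1 : ∀ᶠ u in nhds s, δ * μ.real E < G u := hcont.continuousAt.eventually_const_lt hcon
    have h2 : ∀ᶠ u in nhdsWithin s (Ioi s), δ * μ.real E < G u ∧ u < ρ :=
      (h1.filter_mono nhdsWithin_le_nhds).and
        ((gt_mem_nhds hlt).filter_mono nhdsWithin_le_nhds)
    obtain ⟨u, ⟨hu1, hu2⟩, hu3⟩ := (h2.and self_mem_nhdsWithin).exists
    have hu3 : s < u := hu3
    have := hmax (a := u) ⟨⟨hs.1.1.trans hu3.le, hu2.le⟩, hu1.le⟩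
    linarith
  refine ⟨s, ?_, hs.1.2, hs.2, fun h => le_antisymm (hkey h) hs.2, fun s' h0 h1 h2 => hmax ⟨⟨h0, h1⟩, h2⟩⟩
  rcases hs.1.1.eq_or_lt with h | h
  · exfalso
    have := hkey (by rw [← h]; exact hρ)
    rw [← h, hG0] at this
    nlinarith
  · exact h

lemma pg_main {ι : Type*} (S : Finset ι) (Nm J : ℕ) {τ : ℝ} (hS : S.card ≤ Nm)
    (hJ : (Nm : ℝ) < J * τ) (s : ι → ℕ → ℝ) (hs0 : ∀ b ∈ S, 0 < s b 0) (hmono : ∀ b ∈ S, Monotone (s b))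
    (hτ : 0 < τ) (Q : ι → ι → ℕ → ℝ) (lo hi : ℕ → ℝ) (hwin : ∀ i k, i < k → hi k ≤ lo i) :
    ∃ p i, p < i ∧ i ≤ J * (Nm ^ 2 + 1) ∧ (∀ b ∈ S, s b i ≤ 2 * s b 0 → s b i ≤ (1 + τ) * s b p) ∧
      ∀ b ∈ S, ∀ e ∈ S, ¬ (lo i ≤ Q b e p ∧ Q b e p < hi i) := by
  set B := Nm ^ 2 + 1 with hB
  let T : ι → ℕ → ℝ := fun b j => min 2 (s b j / s b 0)
  let Ψ : ℕ → ℝ := fun j => ∑ b ∈ S, T b (j * B)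
  have hTm : ∀ b ∈ S, Monotone (T b) := by
    intro b hb j k hjk
    have := hmono b hb hjk
    have := hs0 b hb
    simp only [T]
    gcongr
  obtain ⟨j, hj, hΨ⟩ : ∃ j < J, Ψ (j + 1) - Ψ j < τ := by
    by_contra hcon
    push Not at hcon
    have h1 : ∑ j ∈ Finset.range J, τ ≤ ∑ j ∈ Finset.range J, (Ψ (j + 1) - Ψ j) :=
      Finset.sum_le_sum fun j hj => hcon j (Finset.mem_range.1 hj)
    rw [Finset.sum_range_sub, Finset.sum_const, Finset.card_range, nsmul_eq_mul] at h1
    have h2 : Ψ J ≤ ∑ b ∈ S, (2 : ℝ) := Finset.sum_le_sum fun b _ => min_le_left _ _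
    have h3 : Ψ 0 = ∑ b ∈ S, (1 : ℝ) := Finset.sum_congr rfl fun b hb => by
      simp only [T, zero_mul]
      rw [div_self (hs0 b hb).ne']; norm_num
    rw [Finset.sum_const, nsmul_eq_mul] at h2 h3
    have h4 : (S.card : ℝ) ≤ Nm := by exact_mod_cast hS
    linarith
  set p := j * B with hp
  obtain ⟨i, hi1, hi2⟩ : ∃ i ∈ Finset.Icc (p + 1) (p + B), ∀ b ∈ S, ∀ e ∈ S,
      ¬ (lo i ≤ Q b e p ∧ Q b e p < hi i) := by
    by_contra hcon
    push Not at hcon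
    have hne : S.Nonempty := by
      obtain ⟨b, hb, -⟩ := hcon (p + 1) (by simp [hB])
      exact ⟨b, hb⟩
    have : Nonempty ι := ⟨hne.choose⟩
    choose! b hb e he hlo hhi using hcon
    have h1 := Finset.card_le_card_of_injOn (s := Finset.Icc (p + 1) (p + B)) (t := S ×ˢ S)
      (fun i => (b i, e i)) (fun i hi => by
        simp only [Finset.coe_product, Set.mem_prod, Finset.mem_coe]
        exact ⟨hb i hi, he i hi⟩) (by
        have key : ∀ i ∈ Finset.Icc (p + 1) (p + B), ∀ k ∈ Finset.Icc (p + 1) (p + B), i < k →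
            b i = b k → e i = e k → False := by
          intro i hi' k hk hlt hbb hee
          have h1 := hlo i hi'
          have h2 := hhi k hk
          rw [hbb, hee] at h1
          linarith [hwin i k hlt]
        intro i hi' k hk hik
        simp only [Prod.mk.injEq] at hik
        rcases lt_trichotomy i k with h | h | h
        · exact (key i hi' k hk h hik.1 hik.2).elim
        · exact h
        · exact (key k hk i hi' h hik.1.symm hik.2.symm).elim)
    rw [Nat.card_Icc, Finset.card_product] at h1
    have h2 : S.card * S.card ≤ Nm * Nm := Nat.mul_le_mul hS hS
    have h3 : Nm ^ 2 = Nm * Nm := sq Nm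
    omega
  rw [Finset.mem_Icc] at hi1
  refine ⟨p, i, by omega, ?_, ?_, hi2⟩
  · calc i ≤ p + B := hi1.2
      _ = (j + 1) * B := by rw [hp]; ring
      _ ≤ J * B := Nat.mul_le_mul_right _ hj
  · intro b hb h2
    have hs := hs0 b hb
    have hterm : T b ((j + 1) * B) - T b p < τ := by
      refine lt_of_le_of_lt ?_ hΨ
      simp only [Ψ]
      rw [← Finset.sum_sub_distrib]
      exact Finset.single_le_sum (f := fun b => T b ((j + 1) * B) - T b (j * B))
        (fun b' hb' => by
          have := hTm b' hb' (show j * B ≤ (j + 1) * B from Nat.mul_le_mul_right _ (by omega))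
          linarith) hb
    have hi3 : T b i ≤ T b ((j + 1) * B) := hTm b hb (by rw [add_mul, one_mul, ← hp]; exact hi1.2)
    have hT1 : T b i = s b i / s b 0 := min_eq_right (by rw [div_le_iff₀ hs]; exact h2)
    have hT2 : T b p ≤ s b p / s b 0 := min_le_right _ _
    have h3 : s b i / s b 0 - s b p / s b 0 < τ := by linarith
    rw [← sub_div, div_lt_iff₀ hs] at h3
    have h4 := hmono b hb (Nat.zero_le p)
    nlinarith

lemma uw_half {n : ℕ} (μ : Measure (Eu n)) [IsFiniteMeasure μ] {M c c' δ β ζ τ sp si : ℝ}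
    (hM : 0 < M) (hδ : 0 < δ) (hc' : c' ≤ c + δ) (hτ : 0 ≤ τ) (hsp : 0 < sp)
    (hβ1 : -(Real.pi / 2) < 2 * β) (hβ2 : 2 * β < Real.pi / 2) (hζ0 : 0 ≤ ζ) (hζ1 : ζ ≤ Real.pi / 2)
    (hζβ : (1 + τ) * Real.cos ζ ≤ Real.cos (2 * β)) (hβζ : 2 * β ≤ ζ)
    {y θ : Eu n} (hθ : ‖θ‖ = 1) {D f X B3 : Set (Eu n)} (hDm : MeasurableSet D) (hfm : MeasurableSet f) (hDf : Disjoint D f)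
    (hDs : D ⊆ closedBall y si) (hD : 2 * δ * M ≤ μ.real D)
    (hf : c * M < μ.real f) (hfB : f ⊆ B3) (hB3 : μ.real (B3 \ closedBall y si) = δ * M)
    (hs : si ≤ (1 + τ) * sp) (hfθ : ∀ a ∈ f, a - y ≠ 0 ∧ InnerProductGeometry.angle (a - y) θ ≤ 2 * β)
    (hX : ∀ a, a - y ≠ 0 → InnerProductGeometry.angle (a - y) θ ≤ ζ → a ∈ X)
    (hXm : μ.real (closedBall y si ∩ X) ≤ c' * M)
    (hlow : ∀ a ∈ D, ∃ a' ∈ f, a' ∉ closedBall y sp ∧ ⟪a', θ⟫ ≤ ⟪a, θ⟫) : False := by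
  have hpi := Real.pi_pos
  have hβ0 : 2 * β ≤ Real.pi := by linarith
  have hsub : D ∪ (f ∩ closedBall y si) ⊆ closedBall y si ∩ X := by
    rintro a (ha | ha)
    · refine ⟨hDs ha, ?_⟩
      obtain ⟨a', ha', hsp', hle⟩ := hlow a ha
      obtain ⟨h1, h2⟩ := hfθ a' ha'
      have h3 := gm_inner_ge hβ0 h2
      rw [hθ, mul_one, inner_sub_left] at h3
      rw [mem_closedBall, not_le, dist_eq_norm] at hsp'
      have h4 := hDs ha
      rw [mem_closedBall, dist_eq_norm] at h4
      have hcz : 0 ≤ Real.cos ζ := Real.cos_nonneg_of_mem_Icc ⟨by linarith, hζ1⟩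
      have hcb : 0 ≤ Real.cos (2 * β) := le_trans (by positivity) hζβ
      have h5 : Real.cos ζ * ‖a - y‖ ≤ Real.cos (2 * β) * sp := by
        calc Real.cos ζ * ‖a - y‖ ≤ Real.cos ζ * ((1 + τ) * sp) := by gcongr; linarith
          _ = (1 + τ) * Real.cos ζ * sp := by ring
          _ ≤ _ := by gcongr
      have h6 : Real.cos (2 * β) * sp ≤ Real.cos (2 * β) * ‖a' - y‖ := by gcongr
      have h7 : Real.cos ζ * (‖a - y‖ * ‖θ‖) ≤ ⟪a - y, θ⟫ := by
        rw [hθ, mul_one, inner_sub_left]; linarith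
      have hne : a - y ≠ 0 := by
        rintro h0
        rw [sub_eq_zero] at h0
        subst h0
        have h8 := gm_inner_ge hβ0 h2
        rw [inner_sub_left, hθ, mul_one] at h8
        have h9 : 0 < ‖a' - a‖ := norm_pos_iff.2 h1
        have h10 : 0 < Real.cos (2 * β) := Real.cos_pos_of_mem_Ioo ⟨hβ1, hβ2⟩
        have : 0 < Real.cos (2 * β) * ‖a' - a‖ := by positivity
        linarith
      exact hX a hne (gm_angle_le hne (by rintro rfl; simp at hθ) hζ0 h7)
    · exact ⟨ha.2, hX a (hfθ a ha.1).1 ((hfθ a ha.1).2.trans hβζ)⟩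
  have h1 := measureReal_mono (μ := μ) hsub
  rw [measureReal_union (hDf.mono_right inter_subset_left) (hfm.inter measurableSet_closedBall)] at h1
  have h2 : μ.real f ≤ μ.real (f ∩ closedBall y si) + μ.real (B3 \ closedBall y si) := by
    refine (measureReal_mono (?_ : f ⊆ (f ∩ closedBall y si) ∪ (B3 \ closedBall y si))).trans
      (measureReal_union_le _ _)
    intro a ha
    by_cases h : a ∈ closedBall y si
    · exact Or.inl ⟨ha, h⟩
    · exact Or.inr ⟨hfB ha, h⟩
  nlinarith

set_option maxHeartbeats 1000000 in
lemma c2_core {n K q : ℕ} {α t c c' ζ ζ' τ : ℝ} (hα0 : 0 < α) (hα1 : α ≤ 1) (hc : 0 < c) (hc1 : c < 1)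
    (ht : 2 < t) (hβ0 : 0 < Real.arcsin (1 / (2 * t))) (hβζ : 2 * Real.arcsin (1 / (2 * t)) ≤ ζ) (hζζ : ζ < ζ')
    (hζA : ζ' ≤ Real.arcsin α) (hτ : 0 < τ)
    (hζβ : (1 + τ) * Real.cos ζ ≤ Real.cos (2 * Real.arcsin (1 / (2 * t))))
    (Nm J : ℕ) (hJ : (Nm : ℝ) < J * τ) (hc'c : c ≤ c')
    (hc' : c' ≤ c + c * (c / 2 * (c / 6) ^ (J * (Nm ^ 2 + 1))) / 2)
    (μ : Measure (Eu n)) [IsFiniteMeasure μ] (hnull : ∀ (y : Eu n) (R : ℝ), μ (sphere y R) = 0)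
    {x : Eu n} {r : ℝ} {ℬ : Finset (Eu n × ℝ)} (hN : ℬ.card ≤ Nm)
    (hr : 0 < r) (hB : BallColl n 1 K q t x r ℬ) (hM0 : 0 < μ.real (closedBall x (3 * r)))
    (hM : ∀ B ∈ ℬ, c * μ.real (closedBall x (3 * r)) < μ.real (closedBall B.1 B.2))
    (hA : ∀ B ∈ ℬ, ∃ y ∈ closedBall B.1 B.2, ∀ s, 0 < s → s ≤ 2 * r → ConeBound 1 μ α c' y s) :
    ∃ v : Eu n × ℝ → Eu n, (∀ b ∈ ℬ, ‖v b‖ = 1) ∧ ∀ θ : Eu n, ‖θ‖ = 1 → ∃ F : Finset (Eu n × ℝ), F.card ≤ 2 ∧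
      ∀ z, (ℬ.filter (fun b => b ∉ F ∧ Real.cos (Real.arcsin α - ζ') ≤ |⟪θ, v b⟫| ∧
        HitsB (Submodule.span ℝ {θ}) z b)).card < 3 := by
  have hpi := Real.pi_pos
  have hApi := Real.arcsin_le_pi_div_two α
  set β := Real.arcsin (1 / (2 * t)) with hβ
  set AA := Real.arcsin α with hAA
  set E := closedBall x (3 * r) with hE
  have hEm : MeasurableSet E := measurableSet_closedBall
  set M := μ.real E with hMM
  let δ : ℕ → ℝ := fun i => c / 2 * (c / 6) ^ i
  have hδ0 : ∀ i, 0 < δ i := fun i => by simp only [δ]; positivity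
  have hδm : ∀ i k, i ≤ k → δ k ≤ δ i := by
    intro i k hik
    simp only [δ]
    have := pow_le_pow_of_le_one (by positivity : 0 ≤ c / 6) (by linarith) hik
    gcongr
  have hδc : ∀ i, δ i ≤ c / 2 := fun i => by simpa [δ] using hδm 0 i (Nat.zero_le _)
  have hδs : ∀ i, δ (i + 1) = c / 6 * δ i := fun i => by simp only [δ]; ring
  set I := J * (Nm ^ 2 + 1) with hI
  have hc'' : c' ≤ c + c * δ I / 2 := hc'
  choose! y hy hcb using hA
  have hsep : ∀ B ∈ ℬ, ∀ B' ∈ ℬ, B ≠ B' → 2 * t * (B.2 + B'.2) < ‖B'.1 - B.1‖ := by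
    intro B hb B' hb' hne
    exact gm_sep (by linarith) (hB.sub B hb).1 (hB.sub B' hb').1 (hB.disj B hb B' hb' hne)
  have hbE : ∀ B ∈ ℬ, closedBall B.1 B.2 ⊆ E := fun B hb =>
    (hB.sub B hb).2.trans (closedBall_subset_closedBall (by linarith))
  have hyx : ∀ b ∈ ℬ, dist (y b) x ≤ r := fun b hb => (hB.sub b hb).2 (hy b hb)
  have hlev : ∀ b ∈ ℬ, ∀ i, ∃ s, 0 < s ∧ s ≤ 2 * r ∧ δ i * M ≤ μ.real (E \ closedBall (y b) s) ∧
      (s < 2 * r → μ.real (E \ closedBall (y b) s) = δ i * M) ∧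
      ∀ s', 0 ≤ s' → s' ≤ 2 * r → δ i * M ≤ μ.real (E \ closedBall (y b) s') → s' ≤ s := by
    intro b hb i
    exact lv_level μ hnull E hEm (y b) (by linarith) hM0 (by linarith [hδc i])
  choose! s hs0 hs1 hs2 hs3 hs4 using hlev
  have hmono : ∀ b ∈ ℬ, Monotone (s b) := by
    intro b hb i k hik
    refine hs4 b hb k _ (hs0 b hb i).le (hs1 b hb i) (le_trans ?_ (hs2 b hb i))
    have := hδm i k hik
    gcongr
  obtain ⟨p, i, hpi', hiI, hclose, hgap⟩ := pg_main ℬ Nm J hN hJ s (fun b hb => hs0 b hb 0) hmono hτ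
    (fun b e p => μ.real (closedBall e.1 e.2 \ closedBall (y b) (s b p)))
    (fun i => c * δ i / 2 * M) (fun i => 3 * δ i * M) (by
      intro i k hik
      have h1 := hδm (i + 1) k hik
      rw [hδs] at h1
      have h2 : 3 * δ k ≤ c * δ i / 2 := by linarith
      gcongr)
  have hδI : δ I ≤ δ i := hδm i I hiI
  have hcone : ∀ b ∈ ℬ, ConeBound 1 μ α c' (y b) (s b i) := fun b hb =>
    hcb b hb _ (hs0 b hb i) (hs1 b hb i)
  choose! θ V hθ hV hconeb using hcone
  have hball : ∀ b ∈ ℬ, μ.real (closedBall (y b) (s b i)) ≤ (1 - δ i) * M := by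
    intro b hb
    have hsub : closedBall (y b) (s b i) ⊆ E := by
      refine closedBall_subset_closedBall' ?_
      linarith [hs1 b hb i, hyx b hb]
    have h1 := measureReal_sdiff (μ := μ) hsub measurableSet_closedBall
    have h2 := hs2 b hb i
    rw [h1] at h2
    linarith
  let X : Eu n × ℝ → Set (Eu n) := fun b => coneX (y b) (V b) α \ almostHalfSpace (y b) (θ b) α
  have hX : ∀ b ∈ ℬ, μ.real (closedBall (y b) (s b i) ∩ X b) ≤ c' * ((1 - δ i) * M) := by
    intro b hb
    have h1 := hconeb b hb
    have h2 : closedBall (y b) (s b i) ∩ X b =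
      (closedBall (y b) (s b i) ∩ coneX (y b) (V b) α) \ almostHalfSpace (y b) (θ b) α := by
      simp only [X]; exact (inter_sdiff_assoc _ _ _).symm
    rw [h2]
    refine h1.trans ?_
    have := hball b hb
    have : 0 < c' := by linarith
    gcongr
  have hv : ∀ b ∈ ℬ, ∃ v : Eu n, ‖v‖ = 1 ∧ v ∈ V b := by
    intro b hb
    have hfr := hV b hb
    have : Nontrivial (V b) := Module.finrank_pos_iff.1 (by rw [hfr]; exact one_pos)
    obtain ⟨w, hw⟩ := exists_ne (0 : V b)
    have hw0 : (w : Eu n) ≠ 0 := by simpa using hw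
    exact ⟨(‖(w : Eu n)‖⁻¹ : ℝ) • (w : Eu n), by rw [norm_smul]; simp [hw0], (V b).smul_mem _ w.2⟩
  choose! v hv1 hv2 using hv
  let UW : Eu n → Eu n × ℝ → Eu n × ℝ → Prop := fun ϑ b f => b ∈ ℬ ∧ f ∈ ℬ ∧
    (∀ a ∈ closedBall f.1 f.2, a - y b ≠ 0 ∧ InnerProductGeometry.angle (a - y b) ϑ ≤ 2 * β) ∧
    ∀ a, a - y b ≠ 0 → InnerProductGeometry.angle (a - y b) ϑ ≤ ζ → a ∈ X b
  have hweak : ∀ ϑ b f, UW ϑ b f → μ.real (E \ closedBall (y b) (s b i)) = δ i * M ∧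
      s b i ≤ (1 + τ) * s b p ∧ 3 * δ i * M ≤ μ.real (closedBall f.1 f.2 \ closedBall (y b) (s b p)) := by
    rintro ϑ b f ⟨hb, hf, h1, h2⟩
    have hbf : b ≠ f := by
      rintro rfl
      exact (h1 (y b) (hy b hb)).1 (sub_self _)
    have htail : c * δ i / 2 * M < μ.real (closedBall f.1 f.2 \ closedBall (y b) (s b i)) := by
      have h3 : μ.real (closedBall f.1 f.2) ≤ μ.real (closedBall (y b) (s b i) ∩ X b) +
          μ.real (closedBall f.1 f.2 \ closedBall (y b) (s b i)) := by
        refine (measureReal_mono ?_).trans (measureReal_union_le _ _)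
        intro a ha
        by_cases h : a ∈ closedBall (y b) (s b i)
        · exact Or.inl ⟨h, h2 a (h1 a ha).1 ((h1 a ha).2.trans hβζ)⟩
        · exact Or.inr ⟨ha, h⟩
      have h4 := hM f hf
      have h5 := hX b hb
      have h6 : c' * (1 - δ i) ≤ c - c * δ i / 2 := by
        have h7 := hδc i
        have h8 := hδ0 i
        have h9 : c * δ I ≤ c * δ i := by gcongr
        nlinarith
      have h7 : c' * ((1 - δ i) * M) ≤ (c - c * δ i / 2) * M := by
        rw [← mul_assoc]; gcongr
      linarith
    have hfar : ∃ a ∈ closedBall f.1 f.2, s b i < dist a (y b) := by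
      by_contra hcon
      push Not at hcon
      have : closedBall f.1 f.2 \ closedBall (y b) (s b i) = ∅ := by
        rw [sdiff_eq_empty]; exact hcon
      rw [this, measureReal_empty] at htail
      have := hδ0 i
      have : 0 < c * δ i / 2 * M := by positivity
      linarith
    obtain ⟨a, ha, hafar⟩ := hfar
    have hlt : s b i < 2 * r := by
      refine lt_of_lt_of_le hafar ?_
      have h3 := (hB.sub f hf).2 ha
      rw [mem_closedBall] at h3
      have := dist_triangle_right a (y b) x
      linarith [hyx b hb]
    have hG := hs3 b hb i hlt
    refine ⟨hG, hclose b hb ?_, ?_⟩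
    · by_cases h0 : s b 0 < 2 * r
      · have hG0 := hs3 b hb 0 h0
        obtain ⟨a', ha', hnear⟩ : ∃ a' ∈ closedBall f.1 f.2, dist a' (y b) ≤ s b 0 := by
          by_contra hcon
          push Not at hcon
          have : closedBall f.1 f.2 ⊆ E \ closedBall (y b) (s b 0) := fun a' ha' =>
            ⟨hbE f hf ha', by rw [mem_closedBall, not_le]; exact hcon a' ha'⟩
          have h3 := measureReal_mono (μ := μ) this
          have h4 := hM f hf
          rw [hG0] at h3
          have h5 : δ 0 * M ≤ c / 2 * M := by have := hδc 0; gcongr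
          nlinarith
        have h3 := hsep b hb f hf hbf
        have hbr := (hB.sub b hb).1
        have hfr := (hB.sub f hf).1
        have hyb := hy b hb
        rw [mem_closedBall] at ha ha' hyb
        rw [← dist_eq_norm] at h3
        have h4 := dist_triangle a f.1 a'
        have h5 := dist_triangle a a' (y b)
        have h6 := dist_triangle f.1 a' b.1
        have h7 := dist_triangle a' (y b) b.1
        rw [dist_comm f.1 a'] at h4 h6
        have h8 : 4 * (b.2 + f.2) ≤ 2 * t * (b.2 + f.2) := by nlinarith
        linarith
      · have := hs1 b hb 0
        have := hs1 b hb i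
        linarith
    · by_contra hcon
      refine hgap b hb f hf ⟨?_, not_le.1 hcon⟩
      refine htail.le.trans (measureReal_mono ?_)
      exact sdiff_subset_sdiff_right (closedBall_subset_closedBall (hmono b hb hpi'.le))
  have huniq : ∀ ϑ, ‖ϑ‖ = 1 → ∀ b f b' f', UW ϑ b f → UW ϑ b' f' → f = f' := by
    intro ϑ hϑ b f b' f' h h'
    by_contra hne
    have hdis : Disjoint (closedBall f.1 f.2) (closedBall f'.1 f'.2) := by
      have h4 := hB.disj _ h.2.1 _ h'.2.1 hne
      have h5 := (hB.sub _ h.2.1).1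
      have h6 := (hB.sub _ h'.2.1).1
      exact h4.mono (closedBall_subset_closedBall (by nlinarith)) (closedBall_subset_closedBall (by nlinarith))
    obtain ⟨g1, g2, g3⟩ := hweak ϑ b f h
    obtain ⟨g1', g2', g3'⟩ := hweak ϑ b' f' h'
    set D := (closedBall f.1 f.2 \ closedBall (y b) (s b p)) ∩ closedBall (y b') (s b' i) with hD
    set D' := (closedBall f'.1 f'.2 \ closedBall (y b') (s b' p)) ∩ closedBall (y b) (s b i) with hD'
    have hmass : ∀ (f : Eu n × ℝ) (U : Set (Eu n)) (b' : Eu n × ℝ), f ∈ ℬ →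
        μ.real (E \ closedBall (y b') (s b' i)) = δ i * M →
        3 * δ i * M ≤ μ.real (closedBall f.1 f.2 \ U) →
        2 * δ i * M ≤ μ.real ((closedBall f.1 f.2 \ U) ∩ closedBall (y b') (s b' i)) := by
      intro f U b' hf h1 h2
      have h3 : μ.real (closedBall f.1 f.2 \ U) ≤ μ.real ((closedBall f.1 f.2 \ U) ∩ closedBall (y b') (s b' i)) +
          μ.real (E \ closedBall (y b') (s b' i)) := by
        refine (measureReal_mono ?_).trans (measureReal_union_le _ _)
        intro a ha
        by_cases h : a ∈ closedBall (y b') (s b' i)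
        · exact Or.inl ⟨ha, h⟩
        · exact Or.inr ⟨hbE f hf ha.1, h⟩
      linarith
    have hDm := hmass f _ b' h.2.1 g1' g3
    have hDm' := hmass f' _ b h'.2.1 g1 g3'
    have hc3 : c' ≤ c + δ i := by
      have : c * δ I / 2 ≤ δ i := by nlinarith [hδ0 I, hδ0 i]
      linarith
    have hXX : ∀ b ∈ ℬ, μ.real (closedBall (y b) (s b i) ∩ X b) ≤ c' * M := by
      intro b hb
      refine (hX b hb).trans ?_
      have := hδ0 i
      have : 0 < c' := by linarith
      have : (1 - δ i) * M ≤ M := by nlinarith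
      gcongr
    have key := fun (b f : Eu n × ℝ) (D : Set (Eu n)) hDm hDf hDs hDD hG hs (h : UW ϑ b f) hlow =>
      uw_half (D := D) (y := y b) (X := X b) (si := s b i) (sp := s b p) μ hM0 (hδ0 i) hc3 hτ.le
        (hs0 b h.1 p) (by linarith) (by linarith)
        (by linarith) (by linarith) hζβ hβζ hϑ hDm (f := closedBall f.1 f.2) measurableSet_closedBall hDf
        hDs hDD (hM f h.2.1) (hbE f h.2.1) hG hs h.2.2.1 h.2.2.2 (hXX b h.1) hlow
    by_cases hlow : ∀ a ∈ D, ∃ a' ∈ D', ⟪a', ϑ⟫ ≤ ⟪a, ϑ⟫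
    · refine key b' f' D ((measurableSet_closedBall.diff measurableSet_closedBall).inter measurableSet_closedBall)
        (hdis.mono_left (inter_subset_left.trans sdiff_subset)) inter_subset_right hDm g1' g2' h' ?_
      intro a ha
      obtain ⟨a', ha', hle⟩ := hlow a ha
      exact ⟨a', ha'.1.1, ha'.1.2, hle⟩
    · push Not at hlow
      obtain ⟨a, ha, hlow⟩ := hlow
      refine key b f D' ((measurableSet_closedBall.diff measurableSet_closedBall).inter measurableSet_closedBall)
        (hdis.symm.mono_left (inter_subset_left.trans sdiff_subset)) inter_subset_right hDm' g1 g2 h ?_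
      intro a' ha'
      exact ⟨a, ha.1.1, ha.1.2, (hlow a' ha').le⟩
  have hF : ∀ ϑ, ‖ϑ‖ = 1 → ∃ F : Finset (Eu n × ℝ), F.card ≤ 1 ∧ ∀ b f, UW ϑ b f → f ∈ F := by
    intro ϑ hϑ
    by_cases h : ∃ b f, UW ϑ b f
    · obtain ⟨b, f, hbf⟩ := h
      exact ⟨{f}, by simp, fun b' f' h' => by
        rw [huniq ϑ hϑ b' f' b f h' hbf]; simp⟩
    · push Not at h
      exact ⟨∅, by simp, fun b' f' h' => (h _ _ h').elim⟩
  refine ⟨v, hv1, ?_⟩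
  intro ϑ hϑ
  have hϑ0 : ϑ ≠ 0 := by rintro rfl; simp at hϑ
  obtain ⟨F1, hF1, hF1'⟩ := hF ϑ hϑ
  obtain ⟨F2, hF2, hF2'⟩ := hF (-ϑ) (by rw [norm_neg]; exact hϑ)
  refine ⟨F1 ∪ F2, (Finset.card_union_le _ _).trans (by omega), ?_⟩
  intro z
  by_contra hcon
  push Not at hcon
  set S := ℬ.filter (fun b => b ∉ F1 ∪ F2 ∧ Real.cos (AA - ζ') ≤ |⟪ϑ, v b⟫| ∧
        HitsB (Submodule.span ℝ {ϑ}) z b) with hS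
  have hSm : ∀ b ∈ S, b ∈ ℬ ∧ b ∉ F1 ∧ b ∉ F2 ∧ Real.cos (AA - ζ') ≤ |⟪ϑ, v b⟫| ∧
      ∃ k : ℝ, k • ϑ + z ∈ closedBall b.1 b.2 := by
    intro b hb
    rw [hS, Finset.mem_filter, Finset.mem_union, not_or] at hb
    exact ⟨hb.1, hb.2.1.1, hb.2.1.2, hb.2.2.1, hits_line hb.2.2.2⟩
  have hk : ∀ b ∈ S, ∃ k : ℝ, k • ϑ + z ∈ closedBall b.1 b.2 := fun b hb => (hSm b hb).2.2.2.2
  choose! k hk using hk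
  have hcone : ∀ b ∈ S, ∀ f ∈ S, b ≠ f → ∀ a ∈ closedBall f.1 f.2, a - y b ≠ 0 ∧
      InnerProductGeometry.angle (a - y b) ((k f - k b) • ϑ) ≤ 2 * β := by
    intro b hb f hf hne a ha
    have h1 := hsep b (hSm b hb).1 f (hSm f hf).1 hne
    have h2 := gm_hit2 (by linarith) (hB.sub b (hSm b hb).1).1 (hB.sub f (hSm f hf).1).1 h1
      (hk b hb) (hk f hf) (hy b (hSm b hb).1) ha
    refine ⟨(gm_hit1 (by linarith) (hB.sub b (hSm b hb).1).1 (hB.sub f (hSm f hf).1).1 h1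
      (hy b (hSm b hb).1) ha).1, ?_⟩
    rw [add_sub_add_right_eq_sub, ← sub_smul] at h2
    exact h2
  obtain ⟨L, hL, b, hb, R, hR, hLb, hbR⟩ := tri_sort S hcon k (by
    intro b hb f hf hne heq
    have h1 := hsep b (hSm b hb).1 f (hSm f hf).1 hne
    have h2 := (gm_hit1 (by linarith) (hB.sub b (hSm b hb).1).1 (hB.sub f (hSm f hf).1).1 h1
      (hk b hb) (hk f hf)).1
    rw [heq, sub_self] at h2
    exact h2 rfl)
  have hbB := (hSm b hb).1
  have hXc : ∀ ϑ' : Eu n, (ϑ' = ϑ ∨ ϑ' = -ϑ) → ∀ a, a - y b ≠ 0 → InnerProductGeometry.angle (a - y b) ϑ' ≤ ζ →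
      a ∈ coneX (y b) (V b) α := by
    intro ϑ' hϑ' a ha hang
    have hϑ'1 : ‖ϑ'‖ = 1 := by rcases hϑ' with rfl | rfl <;> simp [hϑ]
    have hϑ'0 : ϑ' ≠ 0 := by rintro rfl; simp at hϑ'1
    have hin : Real.cos (AA - ζ') ≤ |⟪ϑ', v b⟫| := by
      rcases hϑ' with rfl | rfl
      · exact (hSm b hb).2.2.2.1
      · rw [inner_neg_left, abs_neg]; exact (hSm b hb).2.2.2.1
    have hv0 : v b ≠ 0 := by have := hv1 b hbB; intro h; rw [h] at this; simp at this
    obtain ⟨w, hw, hw0, hwa⟩ : ∃ w ∈ V b, w ≠ 0 ∧ InnerProductGeometry.angle ϑ' w ≤ AA - ζ' := by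
      rcases le_total 0 ⟪ϑ', v b⟫ with h | h
      · refine ⟨v b, hv2 b hbB, hv0, gm_angle_le hϑ'0 hv0 (by linarith) ?_⟩
        rw [hϑ'1, hv1 b hbB]
        rw [abs_of_nonneg h] at hin
        linarith
      · refine ⟨-v b, (V b).neg_mem (hv2 b hbB), neg_ne_zero.2 hv0, gm_angle_le hϑ'0 (neg_ne_zero.2 hv0) (by linarith) ?_⟩
        rw [hϑ'1, norm_neg, hv1 b hbB, inner_neg_right]
        rw [abs_of_nonpos h] at hin
        linarith
    refine gm_mem_X hw hw0 ha hα0 hα1 ?_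
    have := InnerProductGeometry.angle_le_angle_add_angle (a - y b) ϑ' w
    linarith
  by_cases hup : ∀ a, a - y b ≠ 0 → InnerProductGeometry.angle (a - y b) ϑ ≤ ζ → a ∉ almostHalfSpace (y b) (θ b) α
  · refine (hSm R hR).2.1 (hF1' b R ⟨hbB, (hSm R hR).1, ?_, ?_⟩)
    · intro a ha
      have := hcone b hb R hR (by rintro rfl; exact lt_irrefl _ hbR) a ha
      rwa [InnerProductGeometry.angle_smul_right_of_pos _ _ (by linarith)] at this
    · exact fun a ha1 ha2 => ⟨hXc ϑ (Or.inl rfl) a ha1 ha2, hup a ha1 ha2⟩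
  · push Not at hup
    obtain ⟨a, ha1, ha2, ha3⟩ := hup
    refine (hSm L hL).2.2.1 (hF2' b L ⟨hbB, (hSm L hL).1, ?_, ?_⟩)
    · intro a ha
      have := hcone b hb L hL (by rintro rfl; exact lt_irrefl _ hLb) a ha
      rwa [InnerProductGeometry.angle_smul_right_of_neg _ _ (by linarith)] at this
    · refine fun a' ha1' ha2' => ⟨hXc (-ϑ) (Or.inr rfl) a' ha1' ha2', fun ha3' => ?_⟩
      have e1 := gm_mem_H (hθ b hbB) hα0 hα1 ha3
      have e2 := gm_mem_H (hθ b hbB) hα0 hα1 ha3'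
      have e3 := InnerProductGeometry.angle_self_neg_of_nonzero hϑ0
      have e4 := InnerProductGeometry.angle_le_angle_add_angle ϑ (a - y b) (-ϑ)
      have e5 := InnerProductGeometry.angle_le_angle_add_angle (a - y b) (θ b) (-ϑ)
      have e6 := InnerProductGeometry.angle_le_angle_add_angle (θ b) (a' - y b) (-ϑ)
      rw [InnerProductGeometry.angle_comm ϑ (a - y b)] at e4
      rw [InnerProductGeometry.angle_comm (θ b) (a' - y b)] at e6
      linarith

lemma cap_split {k : ℕ} (v : Eu (k + 1)) (hv : ‖v‖ = 1) :
    ∃ e : Eu (k + 1) → ℝ × Eu k, MeasurePreserving e ∧ ∀ x, (e x).1 = ⟪v, x⟫ ∧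
      ‖x‖ ^ 2 = (e x).1 ^ 2 + ‖(e x).2‖ ^ 2 := by
  obtain ⟨b, hb⟩ := Orthonormal.exists_orthonormalBasis_extension_of_card_eq (𝕜 := ℝ) (E := Eu (k + 1))
    (ι := Fin (k + 1)) (by simp) (v := fun _ => v) (s := {0}) (by
      rw [orthonormal_iff_ite]
      rintro ⟨i, rfl⟩ ⟨j, rfl⟩
      simp [hv])
  have hb0 : b 0 = v := hb 0 rfl
  have h1 := b.measurePreserving_repr
  have h2 := PiLp.volume_preserving_ofLp (Fin (k + 1))
  have h3 := volume_preserving_piFinSuccAbove (fun _ : Fin (k + 1) => ℝ) 0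
  have h4 : MeasurePreserving (Prod.map id (WithLp.toLp 2) : ℝ × (Fin k → ℝ) → ℝ × Eu k) :=
    (MeasurePreserving.id volume).prod (PiLp.volume_preserving_toLp (Fin k))
  refine ⟨_, ((h4.comp h3).comp h2).comp h1, ?_⟩
  intro x
  have hx1 : ((Prod.map id (WithLp.toLp 2) ∘ (MeasurableEquiv.piFinSuccAbove (fun _ : Fin (k + 1) => ℝ) 0)) ∘ WithLp.ofLp ∘ b.repr) x
    = (b.repr x 0, WithLp.toLp 2 (fun i => b.repr x (Fin.succ i))) := by
    rfl
  have e1 : ((((Prod.map id (WithLp.toLp 2) : ℝ × (Fin k → ℝ) → ℝ × Eu k) ∘ (MeasurableEquiv.piFinSuccAbove (fun _ : Fin (k + 1) => ℝ) 0)) ∘ WithLp.ofLp) ∘ b.repr) x = (b.repr x 0, WithLp.toLp 2 (fun i => b.repr x (Fin.succ i))) := hx1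
  rw [e1]
  refine ⟨by simp [b.repr_apply_apply, hb0], ?_⟩
  rw [← b.repr.norm_map x, EuclideanSpace.norm_sq_eq, EuclideanSpace.norm_sq_eq, Fin.sum_univ_succ]
  simp

lemma cap_int {k : ℕ} (hk : 1 ≤ k) : ∃ C : ℝ, ∀ v : Eu (k + 1), ‖v‖ = 1 → ∀ κ : ℝ, 0 ≤ κ →
    volume.real {x : Eu (k + 1) | ‖x‖ ≤ 1 ∧ κ * ‖x‖ ≤ |⟪v, x⟫|} =
      C * ∫ ϑ in Ioo (-Real.pi) Real.pi, if 0 < Real.sin ϑ ∧ κ ≤ |Real.cos ϑ| then Real.sin ϑ ^ (k - 1) else 0 := by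
  have : Nonempty (Fin k) := ⟨⟨0, hk⟩⟩
  have : Nontrivial (Eu k) := inferInstance
  refine ⟨(k * (volume : Measure (Eu k)).real (ball 0 1)) * ∫ r in Ioi (0:ℝ), r * (if r ≤ 1 then r ^ (k - 1) else 0), ?_⟩
  intro v hv κ hκ
  obtain ⟨e, he, hex⟩ := cap_split v hv
  let T : Set (ℝ × ℝ) := {p | p.1 ^ 2 + p.2 ^ 2 ≤ 1 ∧ κ ^ 2 * (p.1 ^ 2 + p.2 ^ 2) ≤ p.1 ^ 2}
  have hT : MeasurableSet T := by
    apply MeasurableSet.inter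
    · exact measurableSet_le (f := fun p : ℝ × ℝ => p.1 ^ 2 + p.2 ^ 2) (g := fun _ => 1) (by fun_prop) (by fun_prop)
    · exact measurableSet_le (f := fun p : ℝ × ℝ => κ ^ 2 * (p.1 ^ 2 + p.2 ^ 2)) (g := fun p => p.1 ^ 2)
        (by fun_prop) (by fun_prop)
  let S : Set (ℝ × Eu k) := (fun p => (p.1, ‖p.2‖)) ⁻¹' T
  have hS : MeasurableSet S := hT.preimage (by fun_prop)
  have hpre : {x : Eu (k + 1) | ‖x‖ ≤ 1 ∧ κ * ‖x‖ ≤ |⟪v, x⟫|} = e ⁻¹' S := by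
    ext x
    simp only [mem_ofPred_eq, S, T, mem_preimage]
    rw [← (hex x).2, (hex x).1]
    apply and_congr
    · rw [sq_le_one_iff₀ (norm_nonneg _)]
    · rw [← sq_abs (⟪v, x⟫), ← mul_pow]
      exact (pow_le_pow_iff_left₀ (by positivity) (abs_nonneg _) two_ne_zero).symm
  have hfin : volume S ≠ ⊤ := by
    rw [← he.measure_preimage hS.nullMeasurableSet, ← hpre]
    refine ((measure_mono ?_).trans_lt (measure_closedBall_lt_top (x := (0 : Eu (k+1))) (r := 1))).ne
    intro x hx
    simpa using hx.1
  rw [hpre, measureReal_def, he.measure_preimage hS.nullMeasurableSet, ← measureReal_def]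
  have i1 : volume.real S = ∫ p : ℝ × Eu k, S.indicator (fun _ => (1:ℝ)) p := by
    rw [integral_indicator_const _ hS]; simp
  have h_intg : Integrable (S.indicator (fun _ => (1:ℝ))) ((volume : Measure ℝ).prod (volume : Measure (Eu k))) := by
    rw [integrable_indicator_iff hS]
    exact integrableOn_const hfin
  have i2 : ∫ p : ℝ × Eu k, S.indicator (fun _ => (1:ℝ)) p = ∫ s : ℝ, ∫ y : Eu k, S.indicator (fun _ => (1:ℝ)) (s, y) :=
    integral_prod _ h_intg
  have i3 : ∀ s : ℝ, ∫ y : Eu k, S.indicator (fun _ => (1:ℝ)) (s, y) = (k * (volume : Measure (Eu k)).real (ball 0 1)) *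
      ∫ ρ : ℝ, (Ioi 0).indicator (fun ρ => ρ ^ (k - 1) * T.indicator (fun _ => (1:ℝ)) (s, ρ)) ρ := by
    intro s
    have := integral_fun_norm_addHaar (volume : Measure (Eu k)) (fun ρ => T.indicator (fun _ => (1:ℝ)) (s, ρ))
    simp only [finrank_euclideanSpace, Fintype.card_fin, smul_eq_mul, nsmul_eq_mul] at this
    rw [integral_indicator measurableSet_Ioi, mul_assoc, ← this]
    rfl
  let F : ℝ × ℝ → ℝ := fun p => (Ioi 0).indicator (fun ρ => ρ ^ (k - 1) * T.indicator (fun _ => (1:ℝ)) (p.1, ρ)) p.2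
  have hF : F = (T ∩ {p | 0 < p.2}).indicator (fun p => p.2 ^ (k - 1)) := by
    ext p
    simp only [F, indicator_apply, mem_Ioi, mem_inter_iff, mem_ofPred_eq]
    by_cases h1 : 0 < p.2 <;> by_cases h2 : (p.1, p.2) ∈ T <;> simp [h1, h2]
  have hT2 : MeasurableSet (T ∩ {p : ℝ × ℝ | 0 < p.2}) := hT.inter (measurableSet_lt (by fun_prop) (by fun_prop))
  have hTsub : T ∩ {p : ℝ × ℝ | 0 < p.2} ⊆ Icc (-1) 1 ×ˢ Icc (-1) 1 := by
    rintro ⟨s, ρ⟩ ⟨⟨h1, _⟩, h2⟩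
    simp only [mem_ofPred_eq] at h1 h2
    rw [mem_prod]
    refine ⟨⟨?_, ?_⟩, ⟨?_, ?_⟩⟩ <;> simp only <;> nlinarith
  have hFint : Integrable F ((volume : Measure ℝ).prod (volume : Measure ℝ)) := by
    rw [hF, integrable_indicator_iff hT2]
    refine IntegrableOn.mono_set ?_ hTsub
    refine ContinuousOn.integrableOn_compact (isCompact_Icc.prod isCompact_Icc) (by fun_prop)
  have i4 : ∫ s : ℝ, ∫ ρ : ℝ, F (s, ρ) = ∫ p : ℝ × ℝ, F p := (integral_prod _ hFint).symm
  have i5 := integral_comp_polarCoord_symm F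
  have i6 : ∫ p in polarCoord.target, p.1 • F (polarCoord.symm p) = ∫ p in Ioi (0:ℝ) ×ˢ Ioo (-Real.pi) Real.pi,
      (p.1 * (if p.1 ≤ 1 then p.1 ^ (k - 1) else 0)) * (if 0 < Real.sin p.2 ∧ κ ≤ |Real.cos p.2| then Real.sin p.2 ^ (k - 1) else 0) := by
    rw [polarCoord_target]
    refine setIntegral_congr_fun (measurableSet_Ioi.prod measurableSet_Ioo) ?_
    rintro ⟨r, ϑ⟩ ⟨hr, hϑ⟩
    simp only [mem_Ioi] at hr
    simp only [polarCoord_symm_apply, smul_eq_mul]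
    rw [mul_assoc]
    congr 1
    rw [hF, indicator_apply]
    have hm : ((r * Real.cos ϑ, r * Real.sin ϑ) ∈ T ∩ {p : ℝ × ℝ | 0 < p.2}) ↔ r ≤ 1 ∧ (0 < Real.sin ϑ ∧ κ ≤ |Real.cos ϑ|) := by
      simp only [T, mem_inter_iff, mem_ofPred_eq]
      have hs : (r * Real.cos ϑ) ^ 2 + (r * Real.sin ϑ) ^ 2 = r ^ 2 := by
        have := Real.sin_sq_add_cos_sq ϑ
        nlinarith
      have hq1 : r ^ 2 ≤ 1 ↔ r ≤ 1 := sq_le_one_iff₀ hr.le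
      have hq2 : κ ^ 2 * r ^ 2 ≤ (r * Real.cos ϑ) ^ 2 ↔ κ ≤ |Real.cos ϑ| := by
        rw [mul_pow, mul_comm, mul_le_mul_iff_right₀ (by positivity), ← sq_abs (Real.cos ϑ)]
        exact (pow_le_pow_iff_left₀ (by positivity) (abs_nonneg _) two_ne_zero)
      rw [hs, hq1, hq2, mul_pos_iff_of_pos_left hr]
      tauto
    by_cases h1 : r ≤ 1 <;> by_cases h2 : (0 < Real.sin ϑ ∧ κ ≤ |Real.cos ϑ|)
    · rw [if_pos (hm.2 ⟨h1, h2⟩), if_pos h1, if_pos h2, mul_pow]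
    · rw [if_neg (fun h => h2 (hm.1 h).2), if_neg h2, mul_zero]
    · rw [if_neg (fun h => h1 (hm.1 h).1), if_neg h1, zero_mul]
    · rw [if_neg (fun h => h1 (hm.1 h).1), if_neg h1, zero_mul]
  have i7 := setIntegral_prod_mul (μ := (volume : Measure ℝ)) (ν := (volume : Measure ℝ)) (fun r : ℝ => r * (if r ≤ 1 then r ^ (k - 1) else 0))
    (fun ϑ : ℝ => if 0 < Real.sin ϑ ∧ κ ≤ |Real.cos ϑ| then Real.sin ϑ ^ (k - 1) else 0) (Ioi (0:ℝ)) (Ioo (-Real.pi) Real.pi)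
  rw [i1, i2, integral_congr_ae (Eventually.of_forall i3), integral_const_mul]
  refine Eq.trans ?_ (mul_assoc _ _ _).symm
  congr 1
  rw [← i7]
  exact i4.trans (i5.symm.trans i6)

lemma cap_eval (k : ℕ) {φ : ℝ} (h0 : 0 ≤ φ) (h1 : φ ≤ Real.pi / 2) :
    (∫ ϑ in Ioo (-Real.pi) Real.pi, if 0 < Real.sin ϑ ∧ Real.cos φ ≤ |Real.cos ϑ| then Real.sin ϑ ^ k else 0) =
      2 * ∫ ϑ in (0:ℝ)..φ, Real.sin ϑ ^ k := by
  have hpi := Real.pi_pos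
  let f : ℝ → ℝ := fun ϑ => if Real.cos φ ≤ |Real.cos ϑ| then Real.sin ϑ ^ k else 0
  have hfm : ∀ a b : ℝ, IntervalIntegrable f volume a b := by
    intro a b
    have : f = {ϑ | Real.cos φ ≤ |Real.cos ϑ|}.indicator (fun ϑ => Real.sin ϑ ^ k) := by
      ext ϑ; simp [f, indicator_apply]
    rw [this, intervalIntegrable_iff]
    refine IntegrableOn.indicator ?_ (measurableSet_le measurable_const (by fun_prop))
    rw [← intervalIntegrable_iff]
    exact Continuous.intervalIntegrable (by fun_prop) _ _
  have e1 : (∫ ϑ in Ioo (-Real.pi) Real.pi, if 0 < Real.sin ϑ ∧ Real.cos φ ≤ |Real.cos ϑ| then Real.sin ϑ ^ k else 0)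
      = ∫ ϑ in (0:ℝ)..Real.pi, f ϑ := by
    rw [intervalIntegral.integral_of_le hpi.le, ← integral_Ioc_eq_integral_Ioo,
      setIntegral_eq_of_subset_of_ae_sdiff_eq_zero (s := Ioc 0 Real.pi) (t := Ioc (-Real.pi) Real.pi)
        measurableSet_Ioc.nullMeasurableSet (Ioc_subset_Ioc (by linarith) le_rfl)]
    · rw [integral_Ioc_eq_integral_Ioo, integral_Ioc_eq_integral_Ioo]
      refine setIntegral_congr_fun measurableSet_Ioo ?_
      intro ϑ hϑ
      have := Real.sin_pos_of_pos_of_lt_pi hϑ.1 hϑ.2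
      simp [f, this]
    · refine Eventually.of_forall ?_
      intro ϑ hϑ
      rw [if_neg]
      rintro ⟨hs, _⟩
      have h2 : ϑ ≤ 0 := by
        by_contra h
        exact hϑ.2 ⟨lt_of_not_ge h, hϑ.1.2⟩
      exact absurd (Real.sin_nonpos_of_nonpos_of_neg_pi_le h2 hϑ.1.1.le) (not_le.2 hs)
  have e2 : ∫ ϑ in (Real.pi / 2)..Real.pi, f ϑ = ∫ ϑ in (0:ℝ)..(Real.pi / 2), f ϑ := by
    have := intervalIntegral.integral_comp_sub_left (a := 0) (b := Real.pi / 2) f Real.pi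
    rw [sub_zero, show Real.pi - Real.pi / 2 = Real.pi / 2 by ring] at this
    rw [← this]
    refine intervalIntegral.integral_congr ?_
    intro ϑ _
    simp [f]
  have e3 : ∫ ϑ in (0:ℝ)..φ, f ϑ = ∫ ϑ in (0:ℝ)..φ, Real.sin ϑ ^ k := by
    refine intervalIntegral.integral_congr ?_
    intro ϑ hϑ
    rw [uIcc_of_le h0] at hϑ
    have h2 : Real.cos φ ≤ Real.cos ϑ := Real.cos_le_cos_of_nonneg_of_le_pi hϑ.1 (by linarith) hϑ.2
    simp [f, h2.trans (le_abs_self _)]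
  have e4 : ∫ ϑ in φ..(Real.pi / 2), f ϑ = 0 := by
    rw [intervalIntegral.integral_of_le h1]
    refine setIntegral_eq_zero_of_forall_eq_zero ?_
    intro ϑ hϑ
    have h2 : Real.cos ϑ < Real.cos φ := Real.cos_lt_cos_of_nonneg_of_le_pi h0 (by linarith [hϑ.2]) hϑ.1
    have h3 : 0 ≤ Real.cos ϑ := Real.cos_nonneg_of_neg_pi_div_two_le_of_le (by linarith [hϑ.1]) hϑ.2
    simp only [f]
    rw [if_neg]
    rw [abs_of_nonneg h3]; exact not_le.2 h2
  rw [e1, ← intervalIntegral.integral_add_adjacent_intervals (hfm 0 (Real.pi / 2)) (hfm _ _), e2,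
    ← intervalIntegral.integral_add_adjacent_intervals (hfm 0 φ) (hfm _ _), e3, e4]
  ring

lemma cap_prob {n : ℕ} (hn : 2 ≤ n) : ∃ (P : Measure (Eu n)) (g : ℝ → ℝ), IsProbabilityMeasure P ∧
    ConvexOn ℝ (Icc 0 (Real.pi / 2)) g ∧ g 0 = 0 ∧ g (Real.pi / 2) = 1 ∧ P {0} = 0 ∧
    ∀ v : Eu n, ‖v‖ = 1 → ∀ φ, 0 ≤ φ → φ ≤ Real.pi / 2 →
      P.real {x | Real.cos φ * ‖x‖ ≤ |⟪v, x⟫|} = g φ := by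
  obtain ⟨k, rfl⟩ : ∃ k, n = k + 1 := ⟨n - 1, by omega⟩
  have hk : 1 ≤ k := by omega
  have hpi := Real.pi_pos
  obtain ⟨C, hC⟩ := cap_int hk
  have hC' : ∀ v : Eu (k + 1), ‖v‖ = 1 → ∀ φ, 0 ≤ φ → φ ≤ Real.pi / 2 →
      volume.real {x : Eu (k + 1) | ‖x‖ ≤ 1 ∧ Real.cos φ * ‖x‖ ≤ |⟪v, x⟫|} =
        C * (2 * ∫ ϑ in (0:ℝ)..φ, Real.sin ϑ ^ (k - 1)) := by
    intro v hv φ h0 h1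
    rw [hC v hv _ (Real.cos_nonneg_of_neg_pi_div_two_le_of_le (by linarith) h1), cap_eval _ h0 h1]
  set D : Set (Eu (k + 1)) := closedBall 0 1 with hD
  have hDpos : 0 < volume.real D := by
    rw [measureReal_def]
    exact ENNReal.toReal_pos (measure_closedBall_pos _ _ one_pos).ne' measure_closedBall_lt_top.ne
  have hDn : volume D ≠ 0 := (measure_closedBall_pos _ _ one_pos).ne'
  have hDf : volume D ≠ ⊤ := measure_closedBall_lt_top.ne
  have hDm : MeasurableSet D := measurableSet_closedBall
  refine ⟨ProbabilityTheory.cond volume D, fun φ => (volume.real D)⁻¹ * (C * (2 * ∫ ϑ in (0:ℝ)..φ, Real.sin ϑ ^ (k - 1))),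
    ProbabilityTheory.cond_isProbabilityMeasure_of_finite hDn hDf, ?_, by simp, ?_, ?_, ?_⟩
  · have hC0 : 0 ≤ C := by
      let v : Eu (k + 1) := EuclideanSpace.single 0 1
      have := hC' v (by simp [v]) (Real.pi / 2) (by positivity) le_rfl
      by_contra hneg
      push Not at hneg
      have hi : 0 < ∫ ϑ in (0:ℝ)..(Real.pi / 2), Real.sin ϑ ^ (k - 1) := by
        refine intervalIntegral.intervalIntegral_pos_of_pos_on (Continuous.intervalIntegrable (by fun_prop) _ _) ?_ (by positivity)
        intro x hx
        exact pow_pos (Real.sin_pos_of_pos_of_lt_pi hx.1 (by linarith [hx.2])) _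
      have h2 : 0 ≤ C * (2 * ∫ ϑ in (0:ℝ)..(Real.pi / 2), Real.sin ϑ ^ (k - 1)) := by
        rw [← this]; positivity
      nlinarith
    have hder : ∀ φ, HasDerivAt (fun φ => ∫ ϑ in (0:ℝ)..φ, Real.sin ϑ ^ (k - 1)) (Real.sin φ ^ (k - 1)) φ := fun φ =>
      intervalIntegral.integral_hasDerivAt_right (Continuous.intervalIntegrable (by fun_prop) _ _)
        (Continuous.stronglyMeasurableAtFilter (by fun_prop) _ _) (by fun_prop)
    have hconv : ConvexOn ℝ (Icc 0 (Real.pi / 2)) (fun φ => ∫ ϑ in (0:ℝ)..φ, Real.sin ϑ ^ (k - 1)) := by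
      refine MonotoneOn.convexOn_of_deriv (convex_Icc _ _) (fun x _ => (hder x).continuousAt.continuousWithinAt)
        (fun x _ => (hder x).differentiableAt.differentiableWithinAt) ?_
      intro x hx y hy hxy
      rw [interior_Icc] at hx hy
      rw [(hder x).deriv, (hder y).deriv]
      refine pow_le_pow_left₀ (Real.sin_nonneg_of_nonneg_of_le_pi hx.1.le (by linarith [hx.2])) ?_ _
      exact Real.sin_le_sin_of_le_of_le_pi_div_two (by linarith [hx.1]) hy.2.le hxy
    have h2 := hconv.smul (c := (volume.real D)⁻¹ * (C * 2)) (by positivity)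
    refine h2.congr ?_
    intro x _
    simp only [smul_eq_mul]; ring
  · let v : Eu (k + 1) := EuclideanSpace.single 0 1
    have := hC' v (by simp [v]) (Real.pi / 2) (by positivity) le_rfl
    simp only
    rw [← this]
    have : {x : Eu (k + 1) | ‖x‖ ≤ 1 ∧ Real.cos (Real.pi / 2) * ‖x‖ ≤ |⟪v, x⟫|} = D := by
      ext x; simp [hD]
    rw [this]
    exact inv_mul_cancel₀ hDpos.ne'
  · rw [ProbabilityTheory.cond_apply hDm]
    rw [measure_mono_null inter_subset_right (by simp), mul_zero]
  · intro v hv φ h0 h1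
    simp only
    rw [← hC' v hv φ h0 h1, measureReal_def, ProbabilityTheory.cond_apply hDm, ENNReal.toReal_mul, ENNReal.toReal_inv]
    congr 3
    ext x
    simp [hD]

lemma avg_int {X ι : Type*} [MeasurableSpace X] (P : Measure X) [IsProbabilityMeasure P] (S : Finset ι)
    (E : ι → Set X) (hE : ∀ b, MeasurableSet (E b)) :
    Integrable (fun x => (((S.filter (fun b => x ∈ E b)).card : ℕ) : ℝ)) P ∧
    ∫ x, (((S.filter (fun b => x ∈ E b)).card : ℕ) : ℝ) ∂P = ∑ b ∈ S, P.real (E b) := by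
  have h1 : (fun x => (((S.filter (fun b => x ∈ E b)).card : ℕ) : ℝ)) =
      fun x => ∑ b ∈ S, (E b).indicator (fun _ => (1:ℝ)) x := by
    ext x
    rw [Finset.card_filter]
    push_cast
    refine Finset.sum_congr rfl ?_
    intro b _
    simp [indicator_apply]
  have h2 : ∀ b ∈ S, Integrable ((E b).indicator (fun _ => (1:ℝ))) P := fun b _ =>
    (integrable_const _).indicator (hE b)
  rw [h1]
  refine ⟨integrable_finsetSum _ h2, ?_⟩
  rw [integral_finsetSum _ h2]
  refine Finset.sum_congr rfl ?_
  intro b _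
  rw [integral_indicator_const _ (hE b)]; simp

lemma avg_ge {X ι : Type*} [MeasurableSpace X] (P : Measure X) [IsProbabilityMeasure P] (S : Finset ι)
    (E : ι → Set X) (hE : ∀ b, MeasurableSet (E b)) {N : Set X} (hN : P N = 0) {p : ℝ}
    (h : ∀ b ∈ S, P.real (E b) = p) :
    ∃ x, x ∉ N ∧ S.card * p ≤ (((S.filter (fun b => x ∈ E b)).card : ℕ) : ℝ) := by
  obtain ⟨hi, he⟩ := avg_int P S E hE
  obtain ⟨x, hx, hx2⟩ := exists_notMem_null_integral_le hi hN
  refine ⟨x, hx, ?_⟩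
  rw [he, Finset.sum_congr rfl h] at hx2
  simpa using hx2

lemma avg_le {X ι : Type*} [MeasurableSpace X] (P : Measure X) [IsProbabilityMeasure P] (S : Finset ι)
    (E : ι → Set X) (hE : ∀ b, MeasurableSet (E b)) {N : Set X} (hN : P N = 0) {p : ℝ}
    (h : ∀ b ∈ S, P.real (E b) = p) :
    ∃ x, x ∉ N ∧ (((S.filter (fun b => x ∈ E b)).card : ℕ) : ℝ) ≤ S.card * p := by
  obtain ⟨hi, he⟩ := avg_int P S E hE
  obtain ⟨x, hx, hx2⟩ := exists_notMem_null_le_integral hi hN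
  refine ⟨x, hx, ?_⟩
  rw [he, Finset.sum_congr rfl h] at hx2
  simpa using hx2

lemma cwDeg_sum {ι : Type*} [DecidableEq ι] (R : ι → ι → Prop) (S : Finset ι) :
    ∑ v ∈ S, (cwDeg R S v : ℝ) = (((S.offDiag.filter (fun p => R p.1 p.2)).card : ℕ) : ℝ) := by
  rw [← Nat.cast_sum]
  congr 1
  simp only [cwDeg]
  rw [← Finset.card_sigma]
  refine Finset.card_bij (fun p _ => (p.1, p.2)) ?_ ?_ ?_
  · rintro ⟨a, b⟩ h
    simp only [Finset.mem_sigma, Finset.mem_filter] at h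
    simp only [Finset.mem_filter, Finset.mem_offDiag]
    exact ⟨⟨h.1, h.2.1, fun e => h.2.2.1 e.symm⟩, h.2.2.2⟩
  · rintro ⟨a, b⟩ _ ⟨a', b'⟩ _ h
    simp only [Prod.mk.injEq] at h
    obtain ⟨rfl, rfl⟩ := h
    rfl
  · rintro ⟨a, b⟩ h
    simp only [Finset.mem_filter, Finset.mem_offDiag] at h
    refine ⟨⟨a, b⟩, ?_, rfl⟩
    simp only [Finset.mem_sigma, Finset.mem_filter]
    exact ⟨h.1.1, h.1.2.1, fun e => h.1.2.2 e.symm, h.2⟩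

set_option maxHeartbeats 1000000 in
lemma net_wit {n : ℕ} {a A α : ℝ} (ha0 : 0 < a) (haA : a ≤ A) (hA : A ≤ Real.pi / 2) (haα : Real.sin a = α / 2)
    (hAα : Real.sin A = α) (w v : Eu n) (hw : ‖w‖ = 1) (hv : ‖v‖ = 1)
    (h : ∀ x, coneX x (Submodule.span ℝ {w}) (α / 2) ⊆ coneX x (Submodule.span ℝ {v}) α) :
    Real.cos (A - a) ≤ |⟪w, v⟫| := by
  by_contra hlt
  push Not at hlt
  have hpi := Real.pi_pos
  obtain ⟨w', hw', hws, hpos⟩ : ∃ w' : Eu n, ‖w'‖ = 1 ∧ w' ∈ Submodule.span ℝ {w} ∧ ⟪v, w'⟫ = |⟪w, v⟫| := by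
    rcases le_total 0 ⟪w, v⟫ with h0 | h0
    · exact ⟨w, hw, Submodule.mem_span_singleton_self _, by rw [abs_of_nonneg h0, real_inner_comm]⟩
    · refine ⟨-w, by simpa using hw, Submodule.neg_mem _ (Submodule.mem_span_singleton_self _), ?_⟩
      rw [abs_of_nonpos h0, inner_neg_right, real_inner_comm]
  set s := |⟪w, v⟫| with hs
  have hs0 : 0 ≤ s := abs_nonneg _
  have hs1 : s < 1 := hlt.trans_le (Real.cos_le_one _)
  set ψ := Real.arccos s with hψ
  have hcψ : Real.cos ψ = s := Real.cos_arccos (by linarith) hs1.le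
  have hψ0 : 0 < ψ := by rw [hψ]; exact Real.arccos_pos.2 hs1
  have hψ2 : ψ ≤ Real.pi / 2 := Real.arccos_le_pi_div_two.2 hs0
  have hψδ : A - a < ψ := by
    by_contra hle
    push Not at hle
    have := Real.cos_le_cos_of_nonneg_of_le_pi hψ0.le (by linarith) hle
    linarith
  have hsψ : 0 < Real.sin ψ := Real.sin_pos_of_pos_of_lt_pi hψ0 (by linarith)
  set u : Eu n := (Real.sin ψ)⁻¹ • (w' - Real.cos ψ • v) with hu
  have hvv : ⟪v, v⟫ = 1 := by rw [real_inner_self_eq_norm_sq, hv]; norm_num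
  have hww : ⟪w', w'⟫ = 1 := by rw [real_inner_self_eq_norm_sq, hw']; norm_num
  have hvu : ⟪v, u⟫ = 0 := by
    rw [hu, inner_smul_right, inner_sub_right, inner_smul_right, hvv, hpos, hcψ]; simp
  have hwu : w' = Real.cos ψ • v + Real.sin ψ • u := by
    rw [hu, smul_smul, mul_inv_cancel₀ hsψ.ne']; simp
  have huu : ⟪u, u⟫ = 1 := by
    have h1 := hww
    rw [hwu] at h1
    simp only [inner_add_left, inner_add_right, inner_smul_left, inner_smul_right, hvv, hvu, real_inner_comm v u] at h1
    simp at h1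
    have h2 := Real.sin_sq_add_cos_sq ψ
    have h3 : Real.sin ψ ^ 2 * (⟪u, u⟫ - 1) = 0 := by
      rw [real_inner_self_eq_norm_sq] at *
      nlinarith
    rcases mul_eq_zero.1 h3 with h4 | h4
    · exact absurd h4 (by positivity)
    · linarith
  set χ := max A ψ with hχ
  have hχ2 : χ ≤ Real.pi / 2 := max_le hA hψ2
  have hχ0 : 0 < χ := hψ0.trans_le (le_max_right _ _)
  set y : Eu n := Real.cos χ • v + Real.sin χ • u with hy
  have hyv : ⟪y, v⟫ = Real.cos χ := by
    rw [hy, inner_add_left, inner_smul_left, inner_smul_left, hvv, real_inner_comm, hvu]; simp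
  have hyy : ⟪y, y⟫ = 1 := by
    rw [hy]
    simp only [inner_add_left, inner_add_right, inner_smul_left, inner_smul_right, hvv, hvu, huu, real_inner_comm v u]
    simp
    nlinarith [Real.sin_sq_add_cos_sq χ]
  have hyw : ⟪y, w'⟫ = Real.cos (χ - ψ) := by
    rw [hy, hwu]
    simp only [inner_add_left, inner_add_right, inner_smul_left, inner_smul_right, hvv, hvu, huu, real_inner_comm v u]
    simp
    rw [Real.cos_sub]
    ring
  have hny : ‖y‖ = 1 := by
    have := hyy
    rw [real_inner_self_eq_norm_sq] at this
    nlinarith [norm_nonneg y]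
  have hα0 : Real.sin (χ - ψ) < α / 2 := by
    rw [← haα]
    refine Real.sin_lt_sin_of_lt_of_le_pi_div_two ?_ (by linarith) ?_
    · have := le_max_right A ψ
      linarith
    · rcases max_cases A ψ with ⟨h1, _⟩ | ⟨h1, _⟩
      · rw [hχ, h1]; linarith
      · rw [hχ, h1, sub_self]
        exact ha0
  have m1 : y ∈ coneX (0 : Eu n) (Submodule.span ℝ {w}) (α / 2) := by
    simp only [coneX, mem_ofPred_eq, sub_zero, hny, mul_one]
    refine lt_of_le_of_lt (infDist_le_dist_of_mem (Submodule.smul_mem _ (Real.cos (χ - ψ)) hws)) ?_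
    refine lt_of_le_of_lt (le_of_eq ?_) hα0
    have h0 : 0 ≤ Real.sin (χ - ψ) := Real.sin_nonneg_of_nonneg_of_le_pi (by have := le_max_right A ψ; linarith) (by linarith)
    rw [← Real.sqrt_sq h0, ← Real.sqrt_sq (dist_nonneg), dist_eq_norm, ← real_inner_self_eq_norm_sq]
    congr 1
    simp only [inner_sub_left, inner_sub_right, inner_smul_left, inner_smul_right, hyy, hyw, hww]
    rw [show ⟪w', y⟫ = Real.cos (χ - ψ) by rw [real_inner_comm]; exact hyw]
    simp only [RCLike.conj_to_real]
    linear_combination (-1) * Real.sin_sq_add_cos_sq (χ - ψ)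
  have m2 := h 0 m1
  simp only [coneX, mem_ofPred_eq, sub_zero, hny, mul_one] at m2
  refine absurd m2 (not_lt.2 ?_)
  refine (le_infDist ⟨0, Submodule.zero_mem _⟩).2 ?_
  intro p hp
  obtain ⟨k, rfl⟩ := Submodule.mem_span_singleton.1 hp
  have hsχ : α ≤ Real.sin χ := by
    rw [← hAα]
    exact Real.sin_le_sin_of_le_of_le_pi_div_two (by linarith) hχ2 (le_max_left _ _)
  have hsχ0 : 0 ≤ Real.sin χ := Real.sin_nonneg_of_nonneg_of_le_pi hχ0.le (by linarith)
  refine hsχ.trans ?_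
  refine (sq_le_sq₀ hsχ0 dist_nonneg).1 ?_
  rw [dist_eq_norm, ← real_inner_self_eq_norm_sq]
  simp only [inner_sub_left, inner_sub_right, inner_smul_left, inner_smul_right, hyy, hyv, hvv, real_inner_comm y v]
  simp
  nlinarith [Real.sin_sq_add_cos_sq χ, sq_nonneg (Real.cos χ - k)]

lemma line_gen {n : ℕ} {W : Submodule ℝ (Eu n)} (h : Module.finrank ℝ W = 1) :
    ∃ w : Eu n, ‖w‖ = 1 ∧ W = Submodule.span ℝ {w} := by
  obtain ⟨⟨v, hv⟩, hv0, hspan⟩ := finrank_eq_one_iff'.1 h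
  have hv0' : v ≠ 0 := fun e => hv0 (by simpa using e)
  have hn : ‖v‖ ≠ 0 := norm_ne_zero_iff.2 hv0'
  refine ⟨‖v‖⁻¹ • v, by rw [norm_smul, norm_inv, norm_norm, inv_mul_cancel₀ hn], ?_⟩
  rw [Submodule.span_singleton_smul_eq (IsUnit.mk0 _ (inv_ne_zero hn))]
  apply le_antisymm
  · intro w hw
    obtain ⟨k, hk⟩ := hspan ⟨w, hw⟩
    rw [Submodule.mem_span_singleton]
    exact ⟨k, congrArg Subtype.val hk⟩
  · rw [Submodule.span_singleton_le_iff_mem]; exact hv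

lemma cap_meas {n : ℕ} (v : Eu n) (s : ℝ) : MeasurableSet {x : Eu n | s * ‖x‖ ≤ |⟪v, x⟫|} :=
  measurableSet_le (by fun_prop) (by fun_prop)

lemma net_K {n K : ℕ} (hKpos : 1 ≤ K) {α : ℝ} (hα0 : 0 < α) (hα1 : α ≤ 1)
    (hK : ∃ W : Fin K → Submodule ℝ (EuclideanSpace ℝ (Fin n)),
      (∀ j, Module.finrank ℝ (W j) = 1) ∧
      ∀ V : Submodule ℝ (EuclideanSpace ℝ (Fin n)), Module.finrank ℝ V = 1 →
        ∃ j : Fin K, ∀ x, coneX x (W j) (α / 2) ⊆ coneX x V α)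
    (P : Measure (Eu n)) [IsProbabilityMeasure P] {g : ℝ → ℝ} 
    (hg : ∀ v : Eu n, ‖v‖ = 1 → ∀ φ, 0 ≤ φ → φ ≤ Real.pi / 2 →
      P.real {x | Real.cos φ * ‖x‖ ≤ |⟪v, x⟫|} = g φ)
    (haA : Real.arcsin (α / 2) ≤ Real.arcsin α) :
    1 ≤ K * g (Real.arcsin α - Real.arcsin (α / 2)) := by
  have ha0 : 0 < Real.arcsin (α / 2) := Real.arcsin_pos.2 (by positivity)
  have hA := Real.arcsin_le_pi_div_two α
  obtain ⟨W, hW, hnet⟩ := hK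
  choose w hw1 hw2 using fun j => line_gen (hW j)
  set δ := Real.arcsin α - Real.arcsin (α / 2) with hδ
  have hcov : (⋃ j, {x : Eu n | Real.cos δ * ‖x‖ ≤ |⟪w j, x⟫|}) = univ := by
    rw [eq_univ_iff_forall]
    intro x
    by_cases hx : x = 0
    · have j : Fin K := ⟨0, hKpos⟩
      rw [mem_iUnion]
      exact ⟨j, by simp [hx]⟩
    · have hn : 0 < ‖x‖ := norm_pos_iff.2 hx
      obtain ⟨j, hj⟩ := hnet (Submodule.span ℝ {‖x‖⁻¹ • x}) (finrank_span_singleton (smul_ne_zero (inv_ne_zero hn.ne') hx))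
      rw [hw2 j] at hj
      have h1 := net_wit ha0 haA hA (Real.sin_arcsin (by linarith) (by linarith)) (Real.sin_arcsin (by linarith) hα1)
        (w j) (‖x‖⁻¹ • x) (hw1 j) (by rw [norm_smul, norm_inv, norm_norm, inv_mul_cancel₀ hn.ne']) hj
      rw [mem_iUnion]
      refine ⟨j, ?_⟩
      rw [inner_smul_right, abs_mul, abs_of_pos (inv_pos.2 hn)] at h1
      rw [mem_ofPred_eq, ← le_div_iff₀ hn]
      rwa [div_eq_inv_mul]
  have h1 := measureReal_iUnion_fintype_le (μ := P) (fun j => {x : Eu n | Real.cos δ * ‖x‖ ≤ |⟪w j, x⟫|})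
  rw [hcov] at h1
  simp only [hg _ (hw1 _) δ (by linarith) (by linarith)] at h1
  simpa using h1

/-- hit pairs lie in a narrow double cone -/
lemma hit_pair {n K q : ℕ} {t : ℝ} (ht : 2 < t) {x : Eu n} {r : ℝ} {ℬ : Finset (Eu n × ℝ)}
    (hB : BallColl n 1 K q t x r ℬ) {θ z : Eu n} {b b' : Eu n × ℝ} (hb : b ∈ ℬ) (hb' : b' ∈ ℬ) (hne : b ≠ b')
    (h1 : HitsB (Submodule.span ℝ {θ}) z b) (h2 : HitsB (Submodule.span ℝ {θ}) z b') :
    Real.cos (Real.arcsin (1 / (2 * t))) * (‖θ‖ * ‖b'.1 - b.1‖) ≤ |⟪b'.1 - b.1, θ⟫| := by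
  obtain ⟨a, ha⟩ := hits_line h1
  obtain ⟨a', ha'⟩ := hits_line h2
  have hsep := gm_sep (by linarith : (1:ℝ) ≤ t) (hB.sub b hb).1 (hB.sub b' hb').1 (hB.disj b hb b' hb' hne)
  obtain ⟨hn, hang⟩ := gm_hit1 (by linarith : (1:ℝ) ≤ t) (hB.sub b hb).1 (hB.sub b' hb').1 hsep ha ha'
  have e : a' • θ + z - (a • θ + z) = (a' - a) • θ := by rw [sub_smul]; abel
  rw [e] at hn hang
  have hne' : a' - a ≠ 0 := fun h0 => hn (by rw [h0, zero_smul])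
  have hβ : Real.arcsin (1 / (2 * t)) ≤ Real.pi := by
    have := Real.arcsin_le_pi_div_two (1 / (2 * t)); linarith [Real.pi_pos]
  have h3 := gm_inner_ge hβ hang
  rw [inner_smul_left, norm_smul, Real.norm_eq_abs] at h3
  have h4 : (starRingEnd ℝ) (a' - a) * ⟪θ, b'.1 - b.1⟫ ≤ |a' - a| * |⟪b'.1 - b.1, θ⟫| := by
    rw [← abs_mul, real_inner_comm]
    exact le_abs_self _
  have h5 : 0 < |a' - a| := abs_pos.2 hne'
  refine le_of_mul_le_mul_left ?_ h5
  refine le_trans (le_of_eq ?_) (h3.trans h4)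
  ring

lemma finrank_line {n : ℕ} {θ : Eu n} (h : θ ≠ 0) : Module.finrank ℝ (Submodule.span ℝ {θ}) = 1 :=
  finrank_span_singleton h

lemma c3_edges {n K q : ℕ} {t : ℝ} (ht : 2 < t) (hK : 2 ≤ K) (hq : 3 ≤ q)
    {x : Eu n} {r : ℝ} {ℬ : Finset (Eu n × ℝ)} (hB : BallColl n 1 K q t x r ℬ)
    (P : Measure (Eu n)) [IsProbabilityMeasure P] (hP0 : P {0} = 0) {g : ℝ → ℝ} 
    (hg : ∀ v : Eu n, ‖v‖ = 1 → ∀ φ, 0 ≤ φ → φ ≤ Real.pi / 2 →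
      P.real {x | Real.cos φ * ‖x‖ ≤ |⟪v, x⟫|} = g φ) :
    2 * (K : ℝ) - 1 < ℬ.card * g (Real.arcsin (1 / (2 * t))) := by
  set β := Real.arcsin (1 / (2 * t)) with hβ
  have hβ0 : 0 ≤ β := Real.arcsin_nonneg.2 (by positivity)
  have hβ2 : β ≤ Real.pi / 2 := Real.arcsin_le_pi_div_two _
  by_contra hcon
  push Not at hcon
  let E : (Eu n × ℝ) × (Eu n × ℝ) → Set (Eu n) := fun p =>
    {x | Real.cos β * ‖x‖ ≤ |⟪‖p.2.1 - p.1.1‖⁻¹ • (p.2.1 - p.1.1), x⟫|}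
  have hgβ : ∀ p ∈ ℬ.offDiag, P.real (E p) = g β := by
    intro p hp
    rw [Finset.mem_offDiag] at hp
    refine hg _ ?_ β hβ0 hβ2
    have hsep := gm_sep (by linarith : (1:ℝ) ≤ t) (hB.sub _ hp.1).1 (hB.sub _ hp.2.1).1 (hB.disj _ hp.1 _ hp.2.1 hp.2.2)
    have h1 := (hB.sub _ hp.1).1
    have h2 := (hB.sub _ hp.2.1).1
    have h3 : 0 < ‖p.2.1 - p.1.1‖ := lt_trans (by positivity) hsep
    rw [norm_smul, norm_inv, norm_norm, inv_mul_cancel₀ h3.ne']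
  obtain ⟨θ, hθ0, hθ⟩ := avg_le P ℬ.offDiag E (fun b => cap_meas _ _) hP0 hgβ
  have hθ0 : θ ≠ 0 := by simpa using hθ0
  obtain ⟨R, hR⟩ : ∃ R : (Eu n × ℝ) → (Eu n × ℝ) → Prop, R = fun b b' =>
    Real.cos β * ‖θ‖ ≤ |⟪‖b'.1 - b.1‖⁻¹ • (b'.1 - b.1), θ⟫| := ⟨_, rfl⟩
  have hRE : ∀ p, R p.1 p.2 ↔ θ ∈ E p := by intro p; rw [hR]; rfl
  have hsym : ∀ u v, R u v → R v u := by
    intro u v h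
    rw [hR] at h ⊢
    simp only at h ⊢
    rw [← neg_sub v.1 u.1, norm_neg, smul_neg, inner_neg_left, abs_neg]
    exact h
  have hdeg : (∑ v ∈ ℬ, (cwDeg R ℬ v : ℝ)) ≤ ℬ.card * (2 * K - 1) := by
    rw [cwDeg_sum, Finset.filter_congr (fun p _ => hRE p)]
    refine hθ.trans ?_
    rw [Finset.offDiag_card]
    have h0 : 0 ≤ g β := by
      by_cases hne : ℬ.offDiag.Nonempty
      · obtain ⟨p, hp⟩ := hne
        rw [← hgβ p hp]; positivity
      · have := hg (‖θ‖⁻¹ • θ) (by rw [norm_smul, norm_inv, norm_norm, inv_mul_cancel₀ (norm_ne_zero_iff.2 hθ0)]) β hβ0 hβ2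
        rw [← this]; positivity
    have h1 : ((ℬ.card * ℬ.card - ℬ.card : ℕ) : ℝ) ≤ (ℬ.card : ℝ) * ℬ.card := by
      have : (ℬ.card * ℬ.card - ℬ.card : ℕ) ≤ ℬ.card * ℬ.card := Nat.sub_le _ _
      exact_mod_cast this
    calc ((ℬ.card * ℬ.card - ℬ.card : ℕ) : ℝ) * g β ≤ (ℬ.card : ℝ) * ℬ.card * g β := by gcongr
      _ = ℬ.card * (ℬ.card * g β) := by ring
      _ ≤ _ := by gcongr
  obtain ⟨I, hI, hIc, htri⟩ := cw_trifree ℬ R hsym K hK hdeg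
  obtain ⟨z, hz⟩ := hB.hits I hI hIc _ (finrank_line hθ0)
  obtain ⟨a, ha, b, hb, c, hc, hab, hac, hbc⟩ := Finset.two_lt_card.1 (lt_of_lt_of_le (by omega : 2 < q) hz)
  rw [Finset.mem_filter] at ha hb hc
  have key : ∀ u v : Eu n × ℝ, u ∈ ℬ → v ∈ ℬ → u ≠ v → HitsB (Submodule.span ℝ {θ}) z u →
      HitsB (Submodule.span ℝ {θ}) z v → R u v := by
    intro u v hu hv huv h1 h2
    have h3 := hit_pair ht hB hu hv huv h1 h2
    have hsep := gm_sep (by linarith : (1:ℝ) ≤ t) (hB.sub _ hu).1 (hB.sub _ hv).1 (hB.disj _ hu _ hv huv)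
    have p1 := (hB.sub _ hu).1
    have p2 := (hB.sub _ hv).1
    have h4 : 0 < ‖v.1 - u.1‖ := lt_trans (by positivity) hsep
    rw [hR]
    simp only
    rw [inner_smul_left, abs_mul, RCLike.conj_to_real, abs_of_pos (inv_pos.2 h4), ← div_eq_inv_mul, le_div_iff₀ h4]
    rwa [mul_assoc]
  exact htri a ha.1 b hb.1 c hc.1 hab hac hbc (key a b (hI ha.1) (hI hb.1) hab ha.2 hb.2)
    (key a c (hI ha.1) (hI hc.1) hac ha.2 hc.2) (key b c (hI hb.1) (hI hc.1) hbc hb.2 hc.2)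

lemma c3_core {n K q : ℕ} {t δ δ'' : ℝ} (ht : 2 < t) (hK : 2 ≤ K) (hq : 3 ≤ q)
    {x : Eu n} {r : ℝ} {ℬ : Finset (Eu n × ℝ)} (hB : BallColl n 1 K q t x r ℬ)
    (P : Measure (Eu n)) [IsProbabilityMeasure P] (hP0 : P {0} = 0) {g : ℝ → ℝ} 
    (hconv : ConvexOn ℝ (Icc 0 (Real.pi / 2)) g) (hg0 : g 0 = 0)
    (hg : ∀ v : Eu n, ‖v‖ = 1 → ∀ φ, 0 ≤ φ → φ ≤ Real.pi / 2 →
      P.real {x | Real.cos φ * ‖x‖ ≤ |⟪v, x⟫|} = g φ)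
    (hδ : 1 ≤ K * g δ) (hβδ : Real.arcsin (1 / (2 * t)) < δ) (hδδ : δ < δ'') (hδ2 : δ'' ≤ Real.pi / 2)
    (hw : 2 * Real.arcsin (1 / (2 * t)) ≤ (2 * (K : ℝ) - 1) * (δ'' - δ))
    (v : Eu n × ℝ → Eu n) (hv : ∀ b ∈ ℬ, ‖v b‖ = 1)
    (hF : ∀ θ : Eu n, ‖θ‖ = 1 → ∃ F : Finset (Eu n × ℝ), F.card ≤ 2 ∧
      ∀ z, (ℬ.filter (fun b => b ∉ F ∧ Real.cos δ'' ≤ |⟪θ, v b⟫| ∧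
        HitsB (Submodule.span ℝ {θ}) z b)).card < 3) : False := by
  have hedge := c3_edges ht hK hq hB P hP0 hg
  set β := Real.arcsin (1 / (2 * t)) with hβ
  have hβ0 : 0 < β := Real.arcsin_pos.2 (by positivity)
  have hK' : (2 : ℝ) ≤ K := by exact_mod_cast hK
  set N : ℝ := ((ℬ.card : ℕ) : ℝ) with hN
  have hN0 : 0 ≤ N := by positivity
  have hpi := Real.pi_pos
  have hslope : g β / β ≤ (g δ'' - g δ) / (δ'' - δ) := by
    have s1 := hconv.slope_mono_adjacent (x := 0) (y := β) (z := δ) ⟨le_rfl, by linarith⟩ ⟨by linarith, by linarith⟩ hβ0 hβδ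
    have s2 := hconv.slope_mono_adjacent (x := β) (y := δ) (z := δ'') ⟨by linarith, by linarith⟩ ⟨by linarith, by linarith⟩ hβδ hδδ
    rw [hg0, sub_zero, sub_zero] at s1
    exact s1.trans s2
  rw [div_le_div_iff₀ hβ0 (by linarith)] at hslope
  have hgain : 2 ≤ N * (g δ'' - g δ) := by
    have h1 : (2 * (K : ℝ) - 1) * (δ'' - δ) ≤ N * g β * (δ'' - δ) := by
      have : 0 ≤ δ'' - δ := by linarith
      gcongr
    have h2 : N * g β * (δ'' - δ) ≤ N * (g δ'' - g δ) * β := by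
      have := mul_le_mul_of_nonneg_left hslope hN0
      linarith
    have h3 : 2 * β ≤ N * (g δ'' - g δ) * β := by linarith
    exact le_of_mul_le_mul_right h3 hβ0
  obtain ⟨x', hx0, hx'⟩ := avg_ge P ℬ (fun b => {x | Real.cos δ'' * ‖x‖ ≤ |⟪v b, x⟫|}) (fun b => cap_meas _ _) hP0
    (fun b hb => hg (v b) (hv b hb) δ'' (by linarith) hδ2)
  have hx0 : x' ≠ 0 := by simpa using hx0
  have hn : 0 < ‖x'‖ := norm_pos_iff.2 hx0
  set θ := ‖x'‖⁻¹ • x' with hθ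
  have hθ1 : ‖θ‖ = 1 := by rw [hθ, norm_smul, norm_inv, norm_norm, inv_mul_cancel₀ hn.ne']
  obtain ⟨F, hFc, hF⟩ := hF θ hθ1
  set D := ℬ.filter (fun b => x' ∈ {x | Real.cos δ'' * ‖x‖ ≤ |⟪v b, x⟫|}) with hD
  have hcard : D.card ≤ (D \ F).card + 2 := by
    have := Finset.card_le_card_sdiff_add_card (s := D) (t := F)
    omega
  have hcardR : (D.card : ℝ) ≤ ((D \ F).card : ℝ) + 2 := by exact_mod_cast hcard
  have hbig : ℬ.card ≤ K * (D \ F).card := by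
    have : N ≤ K * ((D \ F).card : ℝ) := by
      have h1 : N * g δ'' - 2 ≤ ((D \ F).card : ℝ) := by linarith
      have h2 : N * g δ ≤ ((D \ F).card : ℝ) := by linarith
      calc N = N * 1 := by ring
        _ ≤ N * (K * g δ) := by gcongr
        _ = K * (N * g δ) := by ring
        _ ≤ _ := by gcongr
    rw [hN] at this
    exact_mod_cast this
  obtain ⟨z, hz⟩ := hB.hits (D \ F) (Finset.sdiff_subset.trans (Finset.filter_subset _ _)) hbig (Submodule.span ℝ {θ})
    (finrank_line (by rw [← norm_pos_iff, hθ1]; norm_num))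
  have hlt := hF z
  have hle : ((D \ F).filter (fun B => HitsB (Submodule.span ℝ {θ}) z B)).card ≤ (ℬ.filter (fun b => b ∉ F ∧ Real.cos δ'' ≤ |⟪θ, v b⟫| ∧
        HitsB (Submodule.span ℝ {θ}) z b)).card := by
    refine Finset.card_le_card ?_
    intro b hb
    rw [Finset.mem_filter, Finset.mem_sdiff, hD, Finset.mem_filter] at hb
    rw [Finset.mem_filter]
    refine ⟨hb.1.1.1, hb.1.2, ?_, hb.2⟩
    have h1 := hb.1.1.2
    rw [mem_ofPred_eq, ← le_div_iff₀ hn] at h1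
    rw [hθ, inner_smul_left, abs_mul, RCLike.conj_to_real, abs_of_pos (inv_pos.2 hn), ← div_eq_inv_mul, real_inner_comm]
    exact h1
  omega

/-- the number of balls is bounded -/
lemma card_bound {n d K q : ℕ} {t c : ℝ} (ht : 2 < t) (μ : Measure (Eu n)) [IsFiniteMeasure μ]
    {x : Eu n} {r : ℝ} {ℬ : Finset (Eu n × ℝ)} (hr : 0 < r) (hB : BallColl n d K q t x r ℬ)
    (hM0 : 0 < μ.real (closedBall x (3 * r)))
    (hM : ∀ B ∈ ℬ, c * μ.real (closedBall x (3 * r)) < μ.real (closedBall B.1 B.2)) :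
    (ℬ.card : ℝ) * c ≤ 1 := by
  have hdis : (ℬ : Set (Eu n × ℝ)).PairwiseDisjoint (fun B => closedBall B.1 B.2) := by
    intro B hb B' hb' hne
    have h1 := (hB.sub B hb).1
    have h2 := (hB.sub B' hb').1
    refine (hB.disj B hb B' hb' hne).mono (closedBall_subset_closedBall ?_) (closedBall_subset_closedBall ?_) <;> nlinarith
  have h1 : μ.real (⋃ B ∈ ℬ, closedBall B.1 B.2) = ∑ B ∈ ℬ, μ.real (closedBall B.1 B.2) :=
    measureReal_biUnion_finset hdis (fun B _ => measurableSet_closedBall)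
  have h2 : μ.real (⋃ B ∈ ℬ, closedBall B.1 B.2) ≤ μ.real (closedBall x (3 * r)) := by
    refine measureReal_mono ?_ (measure_ne_top _ _)
    refine iUnion₂_subset ?_
    intro B hb
    exact (hB.sub B hb).2.trans (closedBall_subset_closedBall (by linarith))
  have h3 : (ℬ.card : ℝ) * (c * μ.real (closedBall x (3 * r))) ≤ ∑ B ∈ ℬ, μ.real (closedBall B.1 B.2) := by
    rw [← nsmul_eq_mul]
    exact Finset.card_nsmul_le_sum _ _ _ (fun B hb => (hM B hb).le)
  have h4 : ((ℬ.card : ℝ) * c) * μ.real (closedBall x (3 * r)) ≤ 1 * μ.real (closedBall x (3 * r)) := by linarith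
  exact le_of_mul_le_mul_right h4 hM0

lemma K_num {K : ℕ} {α g δ : ℝ} (hα1 : α ≤ 1) (hKg : 1 ≤ K * g)
    (hg : g ≤ 2 / Real.pi * δ) (hδ : δ ≤ Real.pi / 3 * α) : 2 ≤ K ∧ 2.25 ≤ (2 * (K : ℝ) - 1) * α := by
  have hpi := Real.pi_pos
  have h1 : g ≤ 2 / 3 * α := by
    refine hg.trans ?_
    calc 2 / Real.pi * δ ≤ 2 / Real.pi * (Real.pi / 3 * α) := by gcongr
      _ = 2 / 3 * α := by field_simp
  have h2 : 1 ≤ (K : ℝ) * (2 / 3 * α) := hKg.trans (by gcongr)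
  have h3 : 2 ≤ K := by
    by_contra h
    have : (K : ℝ) ≤ 1 := by exact_mod_cast (by omega : K ≤ 1)
    have h0 : (0 : ℝ) ≤ K := by positivity
    nlinarith
  refine ⟨h3, ?_⟩
  have h3' : (2 : ℝ) ≤ K := by exact_mod_cast h3
  rcases le_total α 0.75 with h | h
  · nlinarith
  · nlinarith

set_option maxHeartbeats 1000000 in
lemma final_line {n K q : ℕ} (hn : 2 ≤ n) {α t c : ℝ} (hα0 : 0 < α) (hα1 : α ≤ 1) (hc : 0 < c)
    (ht1 : 1 ≤ t) (hT : Real.arcsin (α / (2 * t)) + Real.arcsin (1 / t) ≤ Real.arcsin (α / 2))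
    (hq : 3 ≤ q) (hK1 : 1 ≤ K)
    (hK : ∃ W : Fin K → Submodule ℝ (EuclideanSpace ℝ (Fin n)),
      (∀ j, Module.finrank ℝ (W j) = 1) ∧
      ∀ V : Submodule ℝ (EuclideanSpace ℝ (Fin n)), Module.finrank ℝ V = 1 →
        ∃ j : Fin K, ∀ x, coneX x (W j) (α / 2) ⊆ coneX x V α)
    (μ : Measure (Eu n)) [IsFiniteMeasure μ] (hnull : ∀ (y : Eu n) (R : ℝ), μ (sphere y R) = 0) :
    ∃ c', c < c' ∧ ∀ {x : Eu n} {r : ℝ} {ℬ : Finset (Eu n × ℝ)}, 0 < r → BallColl n 1 K q t x r ℬ → 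
      0 < μ.real (closedBall x (3 * r)) →
      (∀ B ∈ ℬ, c * μ.real (closedBall x (3 * r)) < μ.real (closedBall B.1 B.2)) →
      (∀ B ∈ ℬ, ∃ y ∈ closedBall B.1 B.2, ∀ s, 0 < s → s ≤ 2 * r → ConeBound 1 μ α c' y s) → False := by
  obtain ⟨ht2, hσ0, hσβ, hσβa, haA, hA3, haα, hασ, hβt⟩ := tl_facts hα0 hα1 ht1 hT
  have hApi := Real.arcsin_le_pi_div_two α
  have hpi := Real.pi_pos
  obtain ⟨P, g, hP, hconv, hg0, hg1, hP0, hg⟩ := cap_prob hn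
  have ha0 : 0 < Real.arcsin (α / 2) := Real.arcsin_pos.2 (by positivity)
  have hKg := net_K hK1 hα0 hα1 hK P hg (by linarith)
  have hβ0 : 0 < Real.arcsin (1 / (2 * t)) := Real.arcsin_pos.2 (by positivity)
  set σ := Real.arcsin (α / (2 * t)) with hσ
  set β := Real.arcsin (1 / (2 * t)) with hβ
  set a := Real.arcsin (α / 2) with ha
  set A := Real.arcsin α with hAA
  have hglin : g (A - a) ≤ 2 / Real.pi * (A - a) := by
    have hb0 : 0 ≤ 2 / Real.pi * (A - a) := mul_nonneg (by positivity) (by linarith)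
    have hb1 : 0 ≤ 1 - 2 / Real.pi * (A - a) := by
      have h3 : 2 / Real.pi * (A - a) ≤ 2 / Real.pi * (Real.pi / 2) := by gcongr; linarith
      have h2 : 2 / Real.pi * (Real.pi / 2) = 1 := by field_simp
      linarith
    have m0 : (0 : ℝ) ∈ Icc 0 (Real.pi / 2) := ⟨le_rfl, by positivity⟩
    have m1 : Real.pi / 2 ∈ Icc 0 (Real.pi / 2) := ⟨by positivity, le_rfl⟩
    have h1 := hconv.2 m0 m1 hb1 hb0 (by ring)
    simp only [smul_eq_mul, hg0, hg1, mul_zero, zero_add, mul_one] at h1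
    rwa [show 2 / Real.pi * (A - a) * (Real.pi / 2) = A - a by field_simp] at h1
  obtain ⟨hK2, hKα⟩ := K_num hα1 hKg hglin (by linarith)
  have hK2' : (2 : ℝ) ≤ K := by exact_mod_cast hK2
  set w := 2 * β / (2 * (K : ℝ) - 1) with hw
  have hk0 : 0 < 2 * (K : ℝ) - 1 := by linarith
  have hw0 : 0 < w := by positivity
  have hwσ : w < σ := by
    rw [hw, div_lt_iff₀ hk0]
    have h1 : α / (2 * t) * (2 * (K : ℝ) - 1) ≤ σ * (2 * (K : ℝ) - 1) := by gcongr
    have h2 : α / (2 * t) * (2 * (K : ℝ) - 1) = ((2 * (K : ℝ) - 1) * α) / (2 * t) := by ring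
    have h3 : 2.25 / (2 * t) ≤ ((2 * (K : ℝ) - 1) * α) / (2 * t) := by gcongr
    have h4 : 2 * (1.1 / (2 * t)) < 2.25 / (2 * t) := by
      rw [← mul_div_assoc]
      gcongr; norm_num
    linarith
  set ζ' := a - w with hζ'
  have hζ'1 : 2 * β < ζ' := by linarith
  set ζ := (2 * β + ζ') / 2 with hζ
  have hζ1 : 2 * β < ζ := by linarith
  have hζ2 : ζ < ζ' := by linarith
  have hcζ : 0 < Real.cos ζ := Real.cos_pos_of_mem_Ioo ⟨by linarith, by linarith⟩
  have hcc : Real.cos ζ < Real.cos (2 * β) := Real.cos_lt_cos_of_nonneg_of_le_pi (by linarith) (by linarith) hζ1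
  set τ := Real.cos (2 * β) / Real.cos ζ - 1 with hτ
  have hτ0 : 0 < τ := by
    rw [hτ, sub_pos, one_lt_div hcζ]; exact hcc
  obtain ⟨Nm, hNm⟩ := exists_nat_ge (1 / c)
  obtain ⟨J, hJ⟩ := exists_nat_gt ((Nm : ℝ) / τ)
  rw [div_lt_iff₀ hτ0] at hJ
  set ε := c * (c / 2 * (c / 6) ^ (J * (Nm ^ 2 + 1))) / 2 with hε
  have hε0 : 0 < ε := by positivity
  refine ⟨c + ε, by linarith, ?_⟩
  intro x r ℬ hr hB hM0 hM hA
  have hcard := card_bound ht2 μ hr hB hM0 hM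
  have hne : 1 < ℬ.card := by
    let v : Eu n := EuclideanSpace.single ⟨0, by omega⟩ 1
    have hv : v ≠ 0 := by
      rw [← norm_pos_iff]; simp [v]
    obtain ⟨z, hz⟩ := hB.hits ℬ subset_rfl (Nat.le_mul_of_pos_left _ hK1) _ (finrank_line hv)
    have := hz.trans (Finset.card_le_card (Finset.filter_subset _ _))
    omega
  have hc1 : c < 1 := by
    have : (2 : ℝ) ≤ ℬ.card := by exact_mod_cast hne
    have h2 : 2 * c ≤ ℬ.card * c := mul_le_mul_of_nonneg_right this hc.le
    linarith
  have hN : ℬ.card ≤ Nm := by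
    have : (ℬ.card : ℝ) ≤ Nm := le_trans (by rw [le_div_iff₀ hc]; exact hcard) hNm
    exact_mod_cast this
  obtain ⟨v, hv, hF⟩ := c2_core (ζ := ζ) (ζ' := ζ') (τ := τ) hα0 hα1 hc hc1 ht2 hβ0 hζ1.le hζ2 (by linarith) hτ0
    (by rw [hτ]; exact le_of_eq (by field_simp; ring)) Nm J hJ (c' := c + ε) (by linarith) le_rfl μ hnull hN hr hB hM0 hM hA
  refine c3_core (δ := A - a) (δ'' := A - ζ') ht2 hK2 hq hB P hP0 hconv hg0 hg hKg ?_ ?_ ?_ ?_ v hv hF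
  · change β < _
    linarith
  · linarith
  · linarith
  · change 2 * β ≤ _
    rw [show A - ζ' - (A - a) = w by rw [hζ']; ring, hw]
    exact le_of_eq (by field_simp)

lemma pt_mem {n d K q : ℕ} {t c κ : ℝ} (μ : Measure (Eu n)) [IsFiniteMeasure μ]
    {x : Eu n} {r : ℝ} {ℬ : Finset (Eu n × ℝ)} {A : Set (Eu n)} (hr : 0 < r) (hB : BallColl n d K q t x r ℬ) (hκ : κ < c)
    (hM0 : 0 < μ.real (closedBall x (3 * r)))
    (hM : ∀ B ∈ ℬ, c * μ.real (closedBall x (3 * r)) < μ.real (closedBall B.1 B.2))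
    (hE : ∀ E, MeasurableSet E → E ⊆ closedBall x (3 * r) →
        κ * μ.real (closedBall x (3 * r)) < μ.real E → (E ∩ A).Nonempty) :
    ∀ B ∈ ℬ, ∃ y ∈ closedBall B.1 B.2, y ∈ A := by
  intro B hb
  obtain ⟨y, hy1, hy2⟩ := hE (closedBall B.1 B.2) measurableSet_closedBall
    ((hB.sub B hb).2.trans (closedBall_subset_closedBall (by linarith)))
    (lt_trans (by gcongr) (hM B hb))
  exact ⟨y, hy1, hy2⟩

lemma final_main {n d K q : ℕ} (hd : 1 ≤ d) (hdn : d ≤ n) {α t c : ℝ} (hα0 : 0 < α) (hα1 : α ≤ 1) (hc : 0 < c)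
    (ht1 : 1 ≤ t) (hT : Real.arcsin (α / (2 * t)) + Real.arcsin (1 / t) ≤ Real.arcsin (α / 2))
    (hq : ∀ S : Finset (EuclideanSpace ℝ (Fin d)), S.card = q →
      ∃ x₀ ∈ S, ∃ x₁ ∈ S, ∃ x₂ ∈ S, ∃ θ : EuclideanSpace ℝ (Fin d), ‖θ‖ = 1 ∧
        x₁ ∈ oneSidedCone x₀ θ (α / (2 * t)) ∧ x₂ ∈ oneSidedCone x₀ (-θ) (α / (2 * t)))
    (hK : ∃ W : Fin K → Submodule ℝ (EuclideanSpace ℝ (Fin n)),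
      (∀ j, Module.finrank ℝ (W j) = d) ∧
      ∀ V : Submodule ℝ (EuclideanSpace ℝ (Fin n)), Module.finrank ℝ V = d →
        ∃ j : Fin K, ∀ x, coneX x (W j) (α / 2) ⊆ coneX x V α)
    (μ : Measure (Eu n)) [IsFiniteMeasure μ]
    (hμ : ∀ᵐ x ∂μ, ∀ R > (0 : ℝ), ∃ r : ℝ, 0 < r ∧ r < R ∧
      ∃ ℬ : Finset (Eu n × ℝ), BallColl n d K q t x r ℬ ∧
        (∀ B ∈ ℬ, ENNReal.ofReal c * μ (closedBall x (3 * r)) < μ (closedBall B.1 B.2))) :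
    ∃ c', c < c' ∧ ∀ᵐ x ∂μ, ENNReal.ofReal c' ≤
      limsup (fun r : ℝ =>
        ⨅ (θ : sphere (0 : EuclideanSpace ℝ (Fin n)) 1)
          (V : Submodule ℝ (EuclideanSpace ℝ (Fin n)))
          (_ : Module.finrank ℝ V = d),
          μ ((closedBall x r ∩ coneX x V α) \ almostHalfSpace x θ α) / μ (closedBall x r))
        (nhdsWithin 0 (Set.Ioi 0)) := by
  have ht2 := (tl_facts hα0 hα1 ht1 hT).1
  have hq3 : 3 ≤ q := qf_three (by omega) (by positivity) hq
  have hK1 : 1 ≤ K := by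
    obtain ⟨V, hV⟩ : ∃ V : Submodule ℝ (Eu n), Module.finrank ℝ V = d := by
      obtain ⟨f, hf⟩ := (finrank_le_iff_exists_linearMap (R := ℝ) (M := Eu d) (M' := Eu n)).1 (by simpa using hdn)
      exact ⟨LinearMap.range f, by rw [LinearMap.finrank_range_of_inj hf]; simp⟩
    obtain ⟨W, _, h⟩ := hK
    obtain ⟨j, _⟩ := h V hV
    exact j.pos
  obtain ⟨κ, hκ0, hκ1, hκc⟩ : ∃ κ : ℝ, 0 < κ ∧ κ < 1 ∧ κ < c / 4 := by
    refine ⟨min 1 (c / 4) / 2, by positivity, ?_, ?_⟩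
    · have := min_le_left 1 (c / 4); linarith
    · have := min_le_right 1 (c / 4); linarith
  rcases (by omega : 2 ≤ d ∨ d = 1) with hd2 | rfl
  · refine ⟨2 * c, by linarith, ?_⟩
    by_contra hcon
    obtain ⟨x, r, ℬ, A, hr, hB, hM0, hM, hE, hA⟩ := red_main hc (by linarith) hκ0 hκ1 μ hμ hcon
    refine d2_core hd2 hdn hα0 hα1 hc ht1 hT hq hK μ hr hB hM ?_
    intro B hb
    obtain ⟨y, hy, hyA⟩ := pt_mem μ hr hB (by linarith) hM0 hM hE B hb
    exact ⟨y, hy, hA y hyA _ (by linarith) le_rfl⟩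
  · have hnull : ∀ (y : Eu n) (R : ℝ), 0 < R → μ (sphere y R) = 0 := fun y R hR =>
      sph_null hc ht2 hK1 hq3 μ hμ y hR
    rcases (by omega : n = 1 ∨ 2 ≤ n) with rfl | hn
    · refine ⟨c + c / 8, by linarith, ?_⟩
      by_contra hcon
      obtain ⟨x, r, ℬ, A, hr, hB, hM0, hM, hE, hA⟩ := red_main hc (by linarith) hκ0 hκ1 μ hμ hcon
      exact n1_core hα0 hc ht2 hK1 hq3 hκc μ hnull hr hB hM0 hM hE hA
    · have hnull' : ∀ (y : Eu n) (R : ℝ), μ (sphere y R) = 0 := by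
        intro y R
        rcases lt_trichotomy R 0 with h | h | h
        · rw [sphere_eq_empty_of_neg h]; simp
        · let e : Eu n := EuclideanSpace.single ⟨0, by omega⟩ 1
          have he : ‖e‖ = 1 := by simp [e]
          refine measure_mono_null ?_ (hnull (y - e) 1 one_pos)
          intro z hz
          rw [h, mem_sphere, dist_eq_zero] at hz
          rw [hz, mem_sphere, dist_eq_norm, sub_sub_cancel, he]
        · exact hnull y R h
      obtain ⟨c', hc', hF⟩ := final_line hn hα0 hα1 hc ht1 hT hq3 hK1 hK μ hnull'
      refine ⟨c', hc', ?_⟩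
      by_contra hcon
      obtain ⟨x, r, ℬ, A, hr, hB, hM0, hM, hE, hA⟩ := red_main hc (by linarith) hκ0 hκ1 μ hμ hcon
      refine hF hr hB hM0 hM ?_
      intro B hb
      obtain ⟨y, hy, hyA⟩ := pt_mem μ hr hB (by linarith) hM0 hM hE B hb
      exact ⟨y, hy, hA y hyA⟩

theorem stmt12 (n m : ℕ) (hm : m < n) (α : ℝ) (hα0 : 0 < α) (hα1 : α ≤ 1)
    (t : ℝ) (q K : ℕ) (c : ℝ) (hc : 0 < c)
    -- `t = t(α/2)` is as in the cone-separation lemma: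
    (ht1 : 1 ≤ t)
    (ht : ∀ (N : ℕ) (x₀ y₀ : EuclideanSpace ℝ (Fin N)) (r_x r_y : ℝ), 0 < r_x → 0 < r_y →
      Disjoint (closedBall x₀ (t * r_x)) (closedBall y₀ (t * r_y)) →
      ∀ θ : EuclideanSpace ℝ (Fin N), ‖θ‖ = 1 →
        y₀ ∈ oneSidedCone x₀ θ ((α / 2) / t) →
        ∀ x ∈ closedBall x₀ r_x, closedBall y₀ r_y ⊆ oneSidedCone x θ (α / 2))
    -- `q = q(n-m, α/(2t))` is as in the Erdős–Füredi lemma: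
    (hq : ∀ S : Finset (EuclideanSpace ℝ (Fin (n - m))), S.card = q →
      ∃ x₀ ∈ S, ∃ x₁ ∈ S, ∃ x₂ ∈ S, ∃ θ : EuclideanSpace ℝ (Fin (n - m)), ‖θ‖ = 1 ∧
        x₁ ∈ oneSidedCone x₀ θ (α / (2 * t)) ∧ x₂ ∈ oneSidedCone x₀ (-θ) (α / (2 * t)))
    -- `K = K(n,m,α)` is as in the Grassmannian discretization:
    (hK : ∃ W : Fin K → Submodule ℝ (EuclideanSpace ℝ (Fin n)),
      (∀ j, Module.finrank ℝ (W j) = n - m) ∧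
      ∀ V : Submodule ℝ (EuclideanSpace ℝ (Fin n)), Module.finrank ℝ V = n - m →
        ∃ j : Fin K, ∀ x, coneX x (W j) (α / 2) ⊆ coneX x V α)
    (μ : Measure (EuclideanSpace ℝ (Fin n))) [IsFiniteMeasure μ]
    -- the hypothesis on the existence of collections of balls at arbitrarily small scales:
    (hμ : ∀ᵐ x ∂μ, ∀ R > (0 : ℝ), ∃ r : ℝ, 0 < r ∧ r < R ∧
      ∃ ℬ : Finset (EuclideanSpace ℝ (Fin n) × ℝ),
        (∀ B ∈ ℬ, 0 < B.2 ∧ closedBall B.1 B.2 ⊆ closedBall x r) ∧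
        -- (1) the enlarged balls `2tB` are pairwise disjoint:
        (∀ B ∈ ℬ, ∀ B' ∈ ℬ, B ≠ B' →
          Disjoint (closedBall B.1 (2 * t * B.2)) (closedBall B'.1 (2 * t * B'.2))) ∧
        -- (2) each ball carries a lot of measure:
        (∀ B ∈ ℬ, ENNReal.ofReal c * μ (closedBall x (3 * r)) < μ (closedBall B.1 B.2)) ∧
        -- (3) large subcollections are hit `q` times by translates of any `(n-m)`-plane:
        (∀ ℬ' ⊆ ℬ, ℬ.card ≤ K * ℬ'.card →
          ∀ V : Submodule ℝ (EuclideanSpace ℝ (Fin n)), Module.finrank ℝ V = n - m →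
            ∃ z : EuclideanSpace ℝ (Fin n),
              q ≤ (ℬ'.filter (fun B =>
                (((fun w => w + z) '' (V : Set (EuclideanSpace ℝ (Fin n)))) ∩
                  closedBall B.1 B.2).Nonempty)).card)) :
    ∀ᵐ x ∂μ, ENNReal.ofReal c <
      limsup (fun r : ℝ =>
        ⨅ (θ : sphere (0 : EuclideanSpace ℝ (Fin n)) 1)
          (V : Submodule ℝ (EuclideanSpace ℝ (Fin n)))
          (_ : Module.finrank ℝ V = n - m),
          μ ((closedBall x r ∩ coneX x V α) \ almostHalfSpace x θ α) / μ (closedBall x r))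
        (nhdsWithin 0 (Set.Ioi 0)) := by
  have hT := tl_main hα0 ht1 ht
  obtain ⟨c', hc', h⟩ := final_main (n := n) (d := n - m) (by omega) (Nat.sub_le n m)
    hα0 hα1 hc ht1 hT hq hK μ (by
      filter_upwards [hμ] with x hx
      intro R hR
      obtain ⟨r, h0, hrR, ℬ, h1, h2, h3, h4⟩ := hx R hR
      exact ⟨r, h0, hrR, ℬ, ⟨h1, h2, h4⟩, h3⟩)
  filter_upwards [h] with x hx
  exact lt_of_lt_of_le ((ENNReal.ofReal_lt_ofReal_iff (by linarith)).2 hc') hx
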